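/- arXiv:2211.07033 — 3 statements merged into one kernel-verified Lean document; each statement's English description precedes it below -/
import Mathlib

section
/- There exists an absolute constant b > 0 such that for every constant δ with 0 < δ ≤ 1/6 the following holds with p = p(n) = n^{δ−2/3}: a.a.s. the random graph G(n,p) satisfies G(n,p) → F⃗∘TT⃗₃′ simultaneously for every oriented forest F⃗ with v(F⃗) ≤ b·n^{7δ−2/3}/(log n)², where TT⃗₃′ is the transitive tournament on 3 vertices with an arbitrary choice of root. -/
open Classical in
/-- The probability that the binomial random graph `G(n,p)` satisfies the property `Q`. -/
noncomputable def probGnp (n : ℕ) (p : ℝ) (Q : SimpleGraph (Fin n) → Prop) : ℝ :=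
  ∑ G : SimpleGraph (Fin n),
    if Q G then p ^ G.edgeSet.ncard * (1 - p) ^ (n.choose 2 - G.edgeSet.ncard) else 0
/-- `o` is an orientation of the simple graph `G`: every edge of `G` is assigned
exactly one direction, and there are no other arcs. -/
def IsOrientation {α : Type*} (G : SimpleGraph α) (o : α → α → Prop) : Prop :=
  (∀ u v, o u v → G.Adj u v) ∧ ∀ u v, G.Adj u v → (o u v ↔ ¬ o v u)

/-- The digraph `o` contains a (not necessarily induced) copy of the oriented graph `H`
as a subdigraph. -/
def HasCopy {α β : Type*} (o : α → α → Prop) (H : β → β → Prop) : Prop :=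
  ∃ f : β → α, Function.Injective f ∧ ∀ a b, H a b → o (f a) (f b)

/-- `G → H⃗`: every orientation of `G` contains a copy of `H`. -/
def Arrows {α β : Type*} (G : SimpleGraph α) (H : β → β → Prop) : Prop :=
  ∀ o : α → α → Prop, IsOrientation G o → HasCopy o H
/-- The rooted product `F⃗ ∘ H⃗` of an oriented graph `F` with an oriented graph `H`
rooted at `r`. -/
def rootedProd {β γ : Type*} (F : β → β → Prop) (H : γ → γ → Prop) (r : γ) :
    β × γ → β × γ → Prop :=
  fun x y => (x.2 = r ∧ y.2 = r ∧ F x.1 y.1) ∨ (x.1 = y.1 ∧ H x.2 y.2)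

/-- The transitive tournament on 3 vertices. -/
def TT3 : Fin 3 → Fin 3 → Prop := fun a b => a < b

/-! The number of vertex-disjoint copies of `K₄` in `G(n,p)` has mean at least of order
`n⁴p⁶ = n^{6δ}`: delete the cliques that meet another one, which are few because `δ ≤ 1/6`. It
changes by at most one with each edge, and only if the edge completes a `K₄`, so by the
Efron–Stein inequality its variance is at most of order `n⁴p⁶`, too. The independence number is
`O(log n / p)` by a union bound.

Fix a graph with both properties and an orientation of it. Every `K₄` contains a transitive
triangle. Repeatedly picking a vertex whose indegree is at least its outdegree and removing
its neighbourhood yields an independent set that absorbs at least half of the vertices, so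
with independence number `α` some `α (log₂ n + 1)` vertices absorb everything. Hence a forest
can be embedded leaf by leaf on the roots of disjoint transitive triangles, at the cost of
`O((log n)² / p)` roots per vertex, which is affordable up to order
`n^{6δ} p / (log n)² = n^{7δ-2/3} / (log n)²`. -/

section RandomSubset

open MeasureTheory ProbabilityTheory unitInterval
open scoped Finset

variable {ι : Type*} {p : I}

lemma setBernoulli_real_subset {u : Set ι} {A : Finset ι} (hA : ↑A ⊆ u) :
    setBer(u, p).real {t | ↑A ⊆ t} = (p : ℝ) ^ #A := by
  have hbox : (fun q : ι → Prop ↦ {i | q i}) ⁻¹' {t | ↑A ⊆ t} = Set.pi A fun _ ↦ {True} := by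
    ext q; simp [Set.subset_def, Set.mem_pi]
  rw [measureReal_def, setBernoulli_apply', hbox,
    Measure.infinitePi_pi _ fun _ _ ↦ MeasurableSet.singleton _,
    Finset.prod_congr rfl (g := fun _ ↦ (toNNReal p : ENNReal))]
  · simp
  · intro i hi
    simp [hA hi]

lemma setBernoulli_real_disjoint {u : Set ι} {A : Finset ι} (hA : ↑A ⊆ u) :
    setBer(u, p).real {t | Disjoint ↑A t} = (1 - p : ℝ) ^ #A := by
  have hbox : (fun q : ι → Prop ↦ {i | q i}) ⁻¹' {t | Disjoint ↑A t} =
      Set.pi A fun _ ↦ {False} := by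
    ext q; simp [Set.disjoint_left, Set.mem_pi]
  rw [measureReal_def, setBernoulli_apply', hbox,
    Measure.infinitePi_pi _ fun _ _ ↦ MeasurableSet.singleton _,
    Finset.prod_congr rfl (g := fun _ ↦ (toNNReal (σ p) : ENNReal))]
  · simp
  · intro i hi
    simp [hA hi]

variable [Finite ι]

lemma integral_setBernoulli (u : Finset ι) (f : Set ι → ℝ) :
    ∫ t, f t ∂setBer(↑u, p) =
      ∑ t ∈ u.powerset, (p : ℝ) ^ #t * (1 - p : ℝ) ^ (#u - #t) * f t := by
  classical
  have := Fintype.ofFinite ι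
  rw [integral_fintype .of_finite, ← Fintype.finsetEquivSet.sum_comp]
  refine (Finset.sum_subset (Finset.subset_univ _) fun t _ ht ↦ ?_).symm.trans
    (Finset.sum_congr rfl fun t ht ↦ ?_)
  · rw [Fintype.coe_finsetEquivSet, measureReal_def, setBernoulli_singleton_of_not_subset p
      (by simpa using ht), ENNReal.toReal_zero, zero_smul]
  · have htu := Finset.mem_powerset.1 ht
    rw [Fintype.coe_finsetEquivSet, setBernoulli_real_singleton p (Finset.coe_subset.2 htu)
      u.finite_toSet, ← Finset.coe_sdiff, Set.ncard_coe_finset, Set.ncard_coe_finset,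
      Finset.card_sdiff_of_subset htu, smul_eq_mul]

lemma integral_setBernoulli_insert [DecidableEq ι] {a : ι} {u : Finset ι} (ha : a ∉ u)
    (f : Set ι → ℝ) :
    ∫ t, f t ∂setBer(↑(insert a u), p) =
      (1 - p) * ∫ t, f t ∂setBer(↑u, p) + p * ∫ t, f (insert a t) ∂setBer(↑u, p) := by
  simp only [integral_setBernoulli]
  rw [Finset.sum_powerset_insert ha, Finset.mul_sum, Finset.mul_sum]
  congr 1
  all_goals
    refine Finset.sum_congr rfl fun t ht ↦ ?_
    have htu := Finset.mem_powerset.1 ht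
    have := Finset.card_le_card htu
  · rw [Finset.card_insert_of_notMem ha, Nat.succ_sub this, pow_succ]
    ring
  · rw [Finset.card_insert_of_notMem ha, Finset.card_insert_of_notMem fun h ↦ ha (htu h),
      Nat.add_sub_add_right, pow_succ, Finset.coe_insert]
    ring

lemma variance_setBernoulli (u : Set ι) (f : Set ι → ℝ) :
    Var[f; setBer(u, p)] = ∫ t, f t ^ 2 ∂setBer(u, p) - (∫ t, f t ∂setBer(u, p)) ^ 2 :=
  variance_eq_sub .of_discrete

lemma variance_setBernoulli_insert [DecidableEq ι] {a : ι} {u : Finset ι} (ha : a ∉ u)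
    (f : Set ι → ℝ) :
    Var[f; setBer(↑(insert a u), p)] =
      (1 - p) * Var[f; setBer(↑u, p)] + p * Var[fun t ↦ f (insert a t); setBer(↑u, p)] +
        p * (1 - p) * (∫ t, f (insert a t) - f t ∂setBer(↑u, p)) ^ 2 := by
  rw [integral_sub .of_finite .of_finite]
  simp only [variance_setBernoulli, integral_setBernoulli_insert ha]
  ring

/-- The Efron–Stein inequality. -/
theorem variance_setBernoulli_le (u : Finset ι) (f : Set ι → ℝ) :
    Var[f; setBer(↑u, p)] ≤
      p * (1 - p) * ∑ a ∈ u, ∫ t, (f (insert a t) - f (t \ {a})) ^ 2 ∂setBer(↑u, p) := by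
  classical
  have hp : 0 ≤ (p : ℝ) := p.2.1
  have hq : 0 ≤ 1 - (p : ℝ) := sub_nonneg.2 p.2.2
  induction u using Finset.induction_on generalizing f with
  | empty => simp [setBernoulli_empty]
  | insert a u ha ih =>
    have jensen : (∫ t, f (insert a t) - f t ∂setBer(↑u, p)) ^ 2 ≤
        ∫ t, (f (insert a t) - f t) ^ 2 ∂setBer(↑u, p) :=
      sub_nonneg.1 <| (variance_nonneg _ _).trans_eq (variance_setBernoulli _ _)
    have term_self : ∫ t, (f (insert a t) - f (t \ {a})) ^ 2 ∂setBer(↑(insert a u), p) =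
        ∫ t, (f (insert a t) - f t) ^ 2 ∂setBer(↑u, p) := by
      have : ∀ᵐ t ∂setBer((u : Set ι), p), (f (insert a t) - f (t \ {a})) ^ 2 =
          (f (insert a t) - f t) ^ 2 := by
        filter_upwards [setBernoulli_ae_subset] with t ht
        rw [Set.sdiff_singleton_eq_self fun h ↦ ha (ht h)]
      simp only [integral_setBernoulli_insert ha, Set.insert_idem,
        Set.insert_sdiff_of_mem _ (Set.mem_singleton a),
        integral_congr_ae this]
      ring
    have term_ne {b : ι} (hb : b ∈ u) :
        ∫ t, (f (insert b t) - f (t \ {b})) ^ 2 ∂setBer(↑(insert a u), p) =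
          (1 - p) * ∫ t, (f (insert b t) - f (t \ {b})) ^ 2 ∂setBer(↑u, p) +
          p * ∫ t, (f (insert a (insert b t)) - f (insert a (t \ {b}))) ^ 2 ∂setBer(↑u, p) := by
      simp only [integral_setBernoulli_insert ha, Set.insert_comm b a,
        Set.insert_sdiff_singleton_comm (ne_of_mem_of_not_mem hb ha).symm]
    have := mul_le_mul_of_nonneg_left (ih f) hq
    have := mul_le_mul_of_nonneg_left (ih fun t ↦ f (insert a t)) hp
    have := mul_le_mul_of_nonneg_left jensen (mul_nonneg hp hq)
    rw [variance_setBernoulli_insert ha, Finset.sum_insert ha, term_self,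
      Finset.sum_congr rfl fun b hb ↦ term_ne hb, Finset.sum_add_distrib, ← Finset.mul_sum,
      ← Finset.mul_sum]
    linarith

end RandomSubset

section RandomGraph

open MeasureTheory ProbabilityTheory SimpleGraph unitInterval
open scoped Finset

variable {V : Type*} {p : I}

instance simpleGraph_measurableSingletonClass [Countable V] :
    MeasurableSingletonClass (SimpleGraph V) where
  measurableSet_singleton G := by
    rw [show {G} = edgeSet ⁻¹' {G.edgeSet} by ext; simp]
    exact measurableEmbedding_edgeSet.measurable (.singleton _)

lemma probGnp_eq_binomialRandom_real (n : ℕ) (p : I) (Q : SimpleGraph (Fin n) → Prop) :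
    probGnp n p Q = G(Fin n, p).real {G | Q G} := by
  classical
  rw [← integral_indicator_one .of_discrete, integral_fintype .of_finite]
  refine Finset.sum_congr rfl fun G _ ↦ ?_
  by_cases hG : Q G <;> simp [hG, measureReal_def]

lemma probGnp_le_one (n : ℕ) (p : I) (Q : SimpleGraph (Fin n) → Prop) : probGnp n p Q ≤ 1 := by
  rw [probGnp_eq_binomialRandom_real]
  exact measureReal_le_one

lemma binomialRandom_real_eq_setBernoulli [Finite V] (S : Set (SimpleGraph V)) :
    G(V, p).real S = setBer(Sym2.diagSetᶜ, p).real (fromEdgeSet ⁻¹' S) := by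
  rw [binomialRandom_eq_map, map_measureReal_apply measurable_fromEdgeSet .of_discrete]

lemma binomialRandom_real_le [Finite V] (H : SimpleGraph V) :
    G(V, p).real {G | H ≤ G} = (p : ℝ) ^ H.edgeSet.ncard := by
  lift H.edgeSet to Finset (Sym2 V) using H.edgeSet.toFinite with s hs
  have hsub : (s : Set (Sym2 V)) ⊆ Sym2.diagSetᶜ := by simp [hs]
  rw [binomialRandom_real_eq_setBernoulli, Set.ncard_coe_finset, ← setBernoulli_real_subset hsub]
  simp only [Set.preimage_ofPred_eq, le_fromEdgeSet_iff, hs]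

lemma binomialRandom_real_disjoint [Finite V] (H : SimpleGraph V) :
    G(V, p).real {G | Disjoint H G} = (1 - p : ℝ) ^ H.edgeSet.ncard := by
  lift H.edgeSet to Finset (Sym2 V) using H.edgeSet.toFinite with s hs
  have hsub : (s : Set (Sym2 V)) ⊆ Sym2.diagSetᶜ := by simp [hs]
  rw [binomialRandom_real_eq_setBernoulli, Set.ncard_coe_finset, ← setBernoulli_real_disjoint hsub]
  simp only [Set.preimage_ofPred_eq, disjoint_fromEdgeSet, hs]

theorem variance_binomialRandom_le [Fintype V] [DecidableEq V] (f : SimpleGraph V → ℝ) :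
    Var[f; G(V, p)] ≤ p * (1 - p) * ∑ e ∈ (⊤ : SimpleGraph V).edgeFinset,
      ∫ G, (f (G ⊔ fromEdgeSet {e}) - f (G.deleteEdges {e})) ^ 2 ∂G(V, p) := by
  have hdiag : Sym2.diagSetᶜ = ((⊤ : SimpleGraph V).edgeFinset : Set (Sym2 V)) := by simp
  rw [binomialRandom_eq_map, variance_map .of_discrete measurable_fromEdgeSet.aemeasurable, hdiag]
  refine (variance_setBernoulli_le _ _).trans_eq ?_
  simp only [integral_map measurable_fromEdgeSet.aemeasurable
    AEStronglyMeasurable.of_discrete, fromEdgeSet_union, Function.comp_def, Set.insert_eq,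
    Set.union_comm {_}, deleteEdges_fromEdgeSet]

end RandomGraph

section CompleteOn

open ProbabilityTheory SimpleGraph unitInterval
open scoped Finset

variable {V : Type*} {G : SimpleGraph V} {K L : Finset V} {p : I}

/-- The graph on all of `V` whose edges are the pairs of distinct vertices of `K`. Being a clique
or an independent set is thereby expressed in the lattice of graphs on `V`. -/
def completeOn (K : Finset V) : SimpleGraph V where
  Adj v w := v ∈ K ∧ w ∈ K ∧ v ≠ w
  symm := ⟨fun _ _ h ↦ ⟨h.2.1, h.1, h.2.2.symm⟩⟩
  loopless := ⟨fun _ h ↦ h.2.2 rfl⟩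

lemma completeOn_le_iff_isClique : completeOn K ≤ G ↔ G.IsClique K :=
  ⟨fun h _ hv _ hw hne ↦ h ⟨hv, hw, hne⟩, fun h _ _ hvw ↦ h hvw.1 hvw.2.1 hvw.2.2⟩

lemma disjoint_completeOn_iff_isIndepSet : Disjoint (completeOn K) G ↔ G.IsIndepSet K := by
  rw [disjoint_iff_inf_le]
  exact ⟨fun h _ hv _ hw hne hvw ↦ h ⟨⟨hv, hw, hne⟩, hvw⟩,
    fun h _ _ hvw ↦ h hvw.1.1 hvw.1.2.1 hvw.1.2.2 hvw.2⟩

lemma completeOn_inf_completeOn [DecidableEq V] :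
    completeOn K ⊓ completeOn L = completeOn (K ∩ L) := by
  ext; simp only [completeOn, inf_adj, Finset.mem_inter]; tauto

lemma edgeSet_completeOn [DecidableEq V] :
    (completeOn K).edgeSet = K.offDiag.image Sym2.mk.uncurry := by
  ext ⟨v, w⟩
  simp only [mem_edgeSet, completeOn, Finset.coe_image, Set.mem_image, Finset.mem_coe,
    Finset.mem_offDiag, Prod.exists, Function.uncurry_apply_pair]
  refine ⟨fun h ↦ ⟨v, w, h, rfl⟩, ?_⟩
  rintro ⟨x, y, hxy, h⟩
  obtain ⟨rfl, rfl⟩ | ⟨rfl, rfl⟩ := Sym2.eq_iff.1 h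
  · exact hxy
  · exact ⟨hxy.2.1, hxy.1, hxy.2.2.symm⟩

lemma ncard_edgeSet_completeOn : (completeOn K).edgeSet.ncard = (#K).choose 2 := by
  classical
  rw [edgeSet_completeOn, Set.ncard_coe_finset, Sym2.card_image_offDiag]

lemma ncard_edgeSet_sup_completeOn [DecidableEq V] :
    (completeOn K ⊔ completeOn L).edgeSet.ncard =
      (#K).choose 2 + ((#L).choose 2 - (#(K ∩ L)).choose 2) := by
  have hfin (M : Finset V) : (completeOn M).edgeSet.Finite := by
    rw [edgeSet_completeOn]; exact Finset.finite_toSet _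
  have hcard := Set.ncard_union_add_ncard_inter _ _ (hfin K) (hfin L)
  rw [← edgeSet_inf, completeOn_inf_completeOn] at hcard
  simp only [ncard_edgeSet_completeOn] at hcard
  rw [edgeSet_sup, ← Nat.add_sub_assoc (Nat.choose_le_choose 2 (Finset.card_le_card
    Finset.inter_subset_right)), ← hcard, Nat.add_sub_cancel]

lemma binomialRandom_real_isClique [Finite V] (K : Finset V) :
    G(V, p).real {G | G.IsClique K} = (p : ℝ) ^ (#K).choose 2 := by
  simp only [← completeOn_le_iff_isClique, binomialRandom_real_le, ncard_edgeSet_completeOn]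

lemma binomialRandom_real_isIndepSet [Finite V] (K : Finset V) :
    G(V, p).real {G | G.IsIndepSet K} = (1 - p : ℝ) ^ (#K).choose 2 := by
  simp only [← disjoint_completeOn_iff_isIndepSet, binomialRandom_real_disjoint,
    ncard_edgeSet_completeOn]

lemma binomialRandom_real_isClique_and [Finite V] [DecidableEq V] (K L : Finset V) :
    G(V, p).real {G | G.IsClique K ∧ G.IsClique L} =
      (p : ℝ) ^ (#K).choose 2 * (p : ℝ) ^ ((#L).choose 2 - (#(K ∩ L)).choose 2) := by
  simp only [← completeOn_le_iff_isClique, ← sup_le_iff, binomialRandom_real_le,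
    ncard_edgeSet_sup_completeOn, pow_add]

end CompleteOn

section CliquePacking

open MeasureTheory ProbabilityTheory SimpleGraph unitInterval
open scoped Finset

variable {V : Type*} {G H : SimpleGraph V} {k : ℕ} {P Q : Finset (Finset V)}

/-- A family of pairwise vertex-disjoint `k`-cliques of `G`. -/
structure IsCliquePacking (G : SimpleGraph V) (k : ℕ) (P : Finset (Finset V)) : Prop where
  isNClique : ∀ K ∈ P, G.IsNClique k K
  pairwiseDisjoint : (P : Set (Finset V)).PairwiseDisjoint id

namespace IsCliquePacking

lemma empty (G : SimpleGraph V) (k : ℕ) : IsCliquePacking G k ∅ :=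
  ⟨by simp, by simp⟩

lemma mono (h : G ≤ H) (hP : IsCliquePacking G k P) : IsCliquePacking H k P :=
  ⟨fun K hK ↦ (hP.isNClique K hK).mono h, hP.pairwiseDisjoint⟩

lemma subset (hQ : Q ⊆ P) (hP : IsCliquePacking G k P) : IsCliquePacking G k Q :=
  ⟨fun K hK ↦ hP.isNClique K (hQ hK), hP.pairwiseDisjoint.subset hQ⟩

lemma eq_of_mem_edgeSet (hP : IsCliquePacking G k P) {e : Sym2 V} {K L : Finset V}
    (hK : K ∈ P) (hL : L ∈ P) (heK : e ∈ (completeOn K).edgeSet)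
    (heL : e ∈ (completeOn L).edgeSet) : K = L := by
  induction e with | _ v w
  exact hP.pairwiseDisjoint.elim_finset hK hL v heK.1 heL.1

lemma deleteEdges {e : Sym2 V} (hP : IsCliquePacking (G ⊔ fromEdgeSet {e}) k P)
    (he : ∀ K ∈ P, e ∉ (completeOn K).edgeSet) : IsCliquePacking (G.deleteEdges {e}) k P := by
  refine ⟨fun K hK ↦ ⟨fun v hv w hw hne ↦ ?_, (hP.isNClique K hK).2⟩, hP.pairwiseDisjoint⟩
  have hvw : s(v, w) ≠ e := fun h ↦ he K hK (h ▸ ⟨hv, hw, hne⟩)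
  simpa [hvw] using (hP.isNClique K hK).1 hv hw hne

end IsCliquePacking

variable [Fintype V]

open Classical in
/-- The maximum number of pairwise vertex-disjoint `k`-cliques of `G`. -/
noncomputable def cliquePackingNum (G : SimpleGraph V) (k : ℕ) : ℕ :=
  ({P | IsCliquePacking G k P} : Finset (Finset (Finset V))).sup Finset.card

lemma IsCliquePacking.card_le_cliquePackingNum (hP : IsCliquePacking G k P) :
    #P ≤ cliquePackingNum G k := by
  classical
  exact Finset.le_sup (f := Finset.card) (by simpa using hP)

lemma exists_isCliquePacking_card_eq (G : SimpleGraph V) (k : ℕ) :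
    ∃ P, IsCliquePacking G k P ∧ #P = cliquePackingNum G k := by
  classical
  obtain ⟨P, hP, hcard⟩ := Finset.exists_mem_eq_sup
    ({P | IsCliquePacking G k P} : Finset (Finset (Finset V)))
    ⟨∅, by simpa using .empty G k⟩ Finset.card
  exact ⟨P, by simpa using hP, hcard.symm⟩

lemma cliquePackingNum_mono (h : G ≤ H) : cliquePackingNum G k ≤ cliquePackingNum H k := by
  obtain ⟨P, hP, hcard⟩ := exists_isCliquePacking_card_eq G k
  exact hcard ▸ (hP.mono h).card_le_cliquePackingNum

lemma cliquePackingNum_sup_fromEdgeSet_le (G : SimpleGraph V) (k : ℕ) (e : Sym2 V) :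
    cliquePackingNum (G ⊔ fromEdgeSet {e}) k ≤ cliquePackingNum (G.deleteEdges {e}) k + 1 := by
  classical
  obtain ⟨P, hP, hcard⟩ := exists_isCliquePacking_card_eq (G ⊔ fromEdgeSet {e}) k
  have hone : #{K ∈ P | e ∈ (completeOn K).edgeSet} ≤ 1 := by
    refine Finset.card_le_one.2 fun K hK L hL ↦ ?_
    rw [Finset.mem_filter] at hK hL
    exact hP.eq_of_mem_edgeSet hK.1 hL.1 hK.2 hL.2
  have hrest := ((hP.subset (Finset.filter_subset _ P)).deleteEdges
    fun K hK ↦ (Finset.mem_filter.1 hK).2).card_le_cliquePackingNum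
  rw [← hcard, ← Finset.card_filter_add_card_filter_not fun K ↦ e ∈ (completeOn K).edgeSet,
    add_comm]
  exact add_le_add hrest hone

variable {p : I}

open Classical in
lemma sq_cliquePackingNum_sub_le (G : SimpleGraph V) (k : ℕ) (e : Sym2 V) :
    ((cliquePackingNum (G ⊔ fromEdgeSet {e}) k : ℝ) - cliquePackingNum (G.deleteEdges {e}) k) ^ 2 ≤
      ∑ K ∈ Finset.univ.powersetCard k with e ∈ (completeOn K).edgeSet,
        {G | (completeOn K).deleteEdges {e} ≤ G}.indicator 1 G := by
  have hnonneg (K : Finset V) :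
      (0 : ℝ) ≤ {G | (completeOn K).deleteEdges {e} ≤ G}.indicator 1 G :=
    Set.indicator_nonneg (fun _ _ ↦ zero_le_one) _
  have hle : cliquePackingNum (G.deleteEdges {e}) k ≤ cliquePackingNum (G ⊔ fromEdgeSet {e}) k :=
    cliquePackingNum_mono ((deleteEdges_le _).trans le_sup_left)
  obtain heq | hlt := hle.eq_or_lt
  · rw [heq, sub_self, sq, zero_mul]
    exact Finset.sum_nonneg fun K _ ↦ hnonneg K
  have hdiff : cliquePackingNum (G ⊔ fromEdgeSet {e}) k =
      cliquePackingNum (G.deleteEdges {e}) k + 1 :=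
    (cliquePackingNum_sup_fromEdgeSet_le G k e).antisymm hlt
  obtain ⟨P, hP, hcard⟩ := exists_isCliquePacking_card_eq (G ⊔ fromEdgeSet {e}) k
  obtain ⟨K, hKP, heK⟩ : ∃ K ∈ P, e ∈ (completeOn K).edgeSet := by
    by_contra! h
    exact hlt.not_ge (hcard ▸ (hP.deleteEdges h).card_le_cliquePackingNum)
  have hKG : (completeOn K).deleteEdges {e} ≤ G := by
    rw [deleteEdges_le_iff, sup_comm]
    exact completeOn_le_iff_isClique.2 (hP.isNClique K hKP).1
  refine le_trans ?_ (Finset.single_le_sum (fun K _ ↦ hnonneg K) (a := K) ?_)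
  · rw [Set.indicator_of_mem (by exact hKG), hdiff]
    simp
  · simpa using ⟨(hP.isNClique K hKP).2, heK⟩

open Classical in
lemma integral_sq_cliquePackingNum_sub_le (k : ℕ) (e : Sym2 V) :
    p * (1 - p) * ∫ G, ((cliquePackingNum (G ⊔ fromEdgeSet {e}) k : ℝ) -
        cliquePackingNum (G.deleteEdges {e}) k) ^ 2 ∂G(V, p) ≤
      #{K ∈ Finset.univ.powersetCard k | e ∈ (completeOn K).edgeSet} * p ^ k.choose 2 := by
  have hp : 0 ≤ (p : ℝ) := p.2.1
  have hpq : 0 ≤ p * (1 - p : ℝ) := mul_nonneg hp (sub_nonneg.2 p.2.2)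
  refine (mul_le_mul_of_nonneg_left (integral_mono .of_finite .of_finite fun G ↦
    sq_cliquePackingNum_sub_le G k e) hpq).trans ?_
  rw [integral_finsetSum _ fun _ _ ↦ .of_finite, Finset.mul_sum, ← nsmul_eq_mul]
  refine Finset.sum_le_card_nsmul _ _ _ fun K hK ↦ ?_
  obtain ⟨hKk, heK⟩ : #K = k ∧ e ∈ (completeOn K).edgeSet := by simpa using hK
  have hcard : ((completeOn K).deleteEdges {e}).edgeSet.ncard = k.choose 2 - 1 := by
    rw [edgeSet_deleteEdges, Set.ncard_sdiff_singleton_of_mem heK, ncard_edgeSet_completeOn, hKk]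
  have hpos : k.choose 2 ≠ 0 := by
    rw [← hKk, ← ncard_edgeSet_completeOn]
    exact Set.ncard_ne_zero_of_mem heK
  rw [integral_indicator_one .of_discrete, binomialRandom_real_le, hcard, mul_right_comm,
    mul_pow_sub_one hpos]
  exact mul_le_of_le_one_right (pow_nonneg hp _) (sub_le_self _ hp)

open Classical in
lemma sum_card_powersetCard_mem_edgeSet_completeOn (k : ℕ) :
    ∑ e ∈ (⊤ : SimpleGraph V).edgeFinset,
        #{K ∈ Finset.univ.powersetCard k | e ∈ (completeOn (V := V) K).edgeSet} =
      k.choose 2 * (Fintype.card V).choose k := by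
  have hedges {K : Finset V} (hK : K ∈ Finset.univ.powersetCard k) :
      #{e ∈ (⊤ : SimpleGraph V).edgeFinset | e ∈ (completeOn K).edgeSet} = k.choose 2 := by
    rw [← (Finset.mem_powersetCard.1 hK).2, ← ncard_edgeSet_completeOn, ← Set.ncard_coe_finset]
    congr 1
    ext e
    simpa using fun h ↦ not_isDiag_of_mem_edgeSet _ h
  rw [← Finset.card_univ, ← Finset.card_powersetCard, mul_comm, ← smul_eq_mul]
  exact (Finset.sum_card_bipartiteAbove_eq_sum_card_bipartiteBelow _).trans <|
    Finset.sum_eq_card_nsmul fun K hK ↦ hedges hK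

theorem variance_cliquePackingNum_le (k : ℕ) :
    Var[fun G ↦ (cliquePackingNum G k : ℝ); G(V, p)] ≤
      k.choose 2 * (Fintype.card V).choose k * p ^ k.choose 2 := by
  classical
  refine (variance_binomialRandom_le _).trans ?_
  rw [Finset.mul_sum, ← Nat.cast_mul, ← sum_card_powersetCard_mem_edgeSet_completeOn,
    Nat.cast_sum, Finset.sum_mul]
  exact Finset.sum_le_sum fun e _ ↦ integral_sq_cliquePackingNum_sub_le k e

open Classical in
lemma card_cliqueFinset_le_cliquePackingNum_add (G : SimpleGraph V) (k : ℕ) :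
    #(G.cliqueFinset k) ≤ cliquePackingNum G k +
      ∑ K ∈ G.cliqueFinset k, #{L ∈ G.cliqueFinset k | L ≠ K ∧ ¬Disjoint K L} := by
  set isolated := {K ∈ G.cliqueFinset k | ∀ L ∈ G.cliqueFinset k, L ≠ K → Disjoint K L}
  have hpacking : IsCliquePacking G k isolated := by
    refine ⟨fun K hK ↦ ?_, fun K hK L hL hne ↦ ?_⟩
    · exact (mem_cliqueFinset_iff).1 (Finset.mem_filter.1 hK).1
    · exact (Finset.mem_filter.1 hK).2 L (Finset.mem_filter.1 hL).1 hne.symm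
  have hcrowded : #{K ∈ G.cliqueFinset k | ¬∀ L ∈ G.cliqueFinset k, L ≠ K → Disjoint K L} ≤
      ∑ K ∈ G.cliqueFinset k, #{L ∈ G.cliqueFinset k | L ≠ K ∧ ¬Disjoint K L} := by
    rw [Finset.card_filter]
    refine Finset.sum_le_sum fun K _ ↦ ?_
    split_ifs with h
    · exact Nat.zero_le _
    · push Not at h
      obtain ⟨L, hL, hne, hmeet⟩ := h
      exact Finset.card_pos.2 ⟨L, Finset.mem_filter.2 ⟨hL, hne, hmeet⟩⟩
  rw [← Finset.card_filter_add_card_filter_not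
    fun K ↦ ∀ L ∈ G.cliqueFinset k, L ≠ K → Disjoint K L]
  exact add_le_add hpacking.card_le_cliquePackingNum hcrowded

lemma card_powersetCard_inter_eq_le [DecidableEq V] {K : Finset V} (hK : #K = k) (j : ℕ) :
    #{L ∈ Finset.univ.powersetCard k | #(K ∩ L) = j} ≤
      k.choose j * (Fintype.card V).choose (k - j) := by
  have hinj : Function.Injective fun L ↦ (K ∩ L, L \ K) := by
    intro L L' h
    rw [Prod.mk.injEq] at h
    rw [← Finset.sdiff_union_inter L K, ← Finset.sdiff_union_inter L' K, h.2,
      Finset.inter_comm, h.1, Finset.inter_comm]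
  calc #{L ∈ Finset.univ.powersetCard k | #(K ∩ L) = j}
    _ ≤ #(K.powersetCard j ×ˢ (Finset.univ : Finset V).powersetCard (k - j)) := by
      refine Finset.card_le_card_of_injOn (fun L ↦ (K ∩ L, L \ K)) (fun L hL ↦ ?_) hinj.injOn
      simp only [Finset.coe_filter, Finset.mem_powersetCard, Finset.subset_univ, true_and,
        Set.mem_ofPred_eq] at hL
      simp [hL.1, hL.2, Finset.card_sdiff]
    _ = k.choose j * (Fintype.card V).choose (k - j) := by
      rw [Finset.card_product, Finset.card_powersetCard, Finset.card_powersetCard, hK,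
        Finset.card_univ]

lemma sum_powersetCard_meeting_le [DecidableEq V] {K : Finset V} (hK : #K = k) {f : ℕ → ℝ}
    (hf : ∀ j, 0 ≤ f j) :
    ∑ L ∈ Finset.univ.powersetCard k with L ≠ K ∧ ¬Disjoint K L, f #(K ∩ L) ≤
      ∑ j ∈ Finset.Ico 1 k, k.choose j * (Fintype.card V).choose (k - j) * f j := by
  have hmaps : ∀ L ∈ ({L ∈ Finset.univ.powersetCard k | L ≠ K ∧ ¬Disjoint K L} : Finset _),
      #(K ∩ L) ∈ Finset.Ico 1 k := by
    intro L hL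
    obtain ⟨hLk, hne, hmeet⟩ : #L = k ∧ L ≠ K ∧ ¬Disjoint K L := by simpa using hL
    rw [Finset.mem_Ico, Nat.one_le_iff_ne_zero, Finset.card_ne_zero,
      ← Finset.not_disjoint_iff_nonempty_inter]
    refine ⟨hmeet, lt_of_le_of_ne (hK ▸ Finset.card_le_card Finset.inter_subset_left) fun h ↦ ?_⟩
    have hKL : K ⊆ L := Finset.inter_eq_left.1 <|
      Finset.eq_of_subset_of_card_le Finset.inter_subset_left (hK.trans h.symm).le
    exact hne (Finset.eq_of_subset_of_card_le hKL (hLk.trans hK.symm).le).symm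
  rw [← Finset.sum_fiberwise_of_maps_to hmaps]
  refine Finset.sum_le_sum fun j _ ↦ ?_
  rw [Finset.sum_congr rfl fun L hL ↦ congrArg f (Finset.mem_filter.1 hL).2, Finset.sum_const,
    nsmul_eq_mul]
  refine mul_le_mul_of_nonneg_right ?_ (hf j)
  refine le_trans (Nat.cast_le.2 (Finset.card_le_card ?_))
    (by exact_mod_cast card_powersetCard_inter_eq_le hK j)
  exact Finset.filter_subset_filter _ (Finset.filter_subset _ _)

open Classical in
lemma sum_indicator_isClique_sub_le (G : SimpleGraph V) (k : ℕ) :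
    ∑ K ∈ (Finset.univ : Finset V).powersetCard k, ({G | G.IsClique K}.indicator 1 G -
        ∑ L ∈ (Finset.univ : Finset V).powersetCard k with L ≠ K ∧ ¬Disjoint K L,
          {G | G.IsClique K ∧ G.IsClique L}.indicator 1 G) ≤ (cliquePackingNum G k : ℝ) := by
  have hcliques : G.cliqueFinset k =
      (Finset.univ.powersetCard k).filter fun K : Finset V ↦ G.IsClique K := by
    ext K; simp [isNClique_iff, and_comm]
  have h := card_cliqueFinset_le_cliquePackingNum_add G k
  rw [hcliques, Finset.card_filter, Finset.sum_filter] at h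
  rw [Finset.sum_sub_distrib, sub_le_iff_le_add]
  refine le_of_eq_of_le ?_ ((Nat.cast_le (α := ℝ)).2 h |>.trans_eq ?_)
  · simp [Set.indicator]
  · push_cast
    congr 1
    refine Finset.sum_congr rfl fun K _ ↦ ?_
    by_cases hK : G.IsClique K
    · simp [hK, Set.indicator, Finset.filter_filter, and_comm]
    · simp [hK, Set.indicator]

theorem le_integral_cliquePackingNum (k : ℕ) :
    (Fintype.card V).choose k * (p : ℝ) ^ k.choose 2 *
        (1 - ∑ j ∈ Finset.Ico 1 k, k.choose j * (Fintype.card V).choose (k - j) *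
          (p : ℝ) ^ (k.choose 2 - j.choose 2)) ≤
      ∫ G, (cliquePackingNum G k : ℝ) ∂G(V, p) := by
  classical
  refine le_trans ?_ (integral_mono .of_finite .of_finite fun G ↦ sum_indicator_isClique_sub_le G k)
  rw [integral_finsetSum _ fun _ _ ↦ .of_finite, mul_assoc, ← nsmul_eq_mul,
    show (Fintype.card V).choose k = #((Finset.univ : Finset V).powersetCard k) by
      rw [Finset.card_powersetCard, Finset.card_univ]]
  refine Finset.card_nsmul_le_sum _ _ _ fun K hK ↦ ?_
  have hKk : #K = k := (Finset.mem_powersetCard.1 hK).2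
  have hpairs : ∑ L ∈ Finset.univ.powersetCard k with L ≠ K ∧ ¬Disjoint K L,
      G(V, p).real {G | G.IsClique K ∧ G.IsClique L} ≤
        ∑ j ∈ Finset.Ico 1 k, k.choose j * (Fintype.card V).choose (k - j) *
          ((p : ℝ) ^ k.choose 2 * (p : ℝ) ^ (k.choose 2 - j.choose 2)) := by
    refine le_of_eq_of_le (Finset.sum_congr rfl fun L hL ↦ ?_) (sum_powersetCard_meeting_le hKk
      fun j ↦ mul_nonneg (pow_nonneg p.2.1 _) (pow_nonneg p.2.1 _))
    have hLk : #L = k := (Finset.mem_powersetCard.1 (Finset.mem_filter.1 hL).1).2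
    rw [binomialRandom_real_isClique_and, hKk, hLk]
  rw [integral_sub .of_finite .of_finite, integral_finsetSum _ fun _ _ ↦ .of_finite]
  simp only [integral_indicator_one MeasurableSet.of_discrete]
  rw [binomialRandom_real_isClique, hKk, mul_sub, mul_one, Finset.mul_sum]
  refine sub_le_sub_left (hpairs.trans_eq (Finset.sum_congr rfl fun j _ ↦ ?_)) _
  ring

end CliquePacking

section IndependenceNumber

open MeasureTheory ProbabilityTheory SimpleGraph unitInterval
open scoped Finset

variable {V : Type*} [Fintype V] {p : I}

lemma binomialRandom_real_le_indepNum_le (s : ℕ) :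
    G(V, p).real {G | s ≤ G.indepNum} ≤
      (Fintype.card V).choose s * (1 - p : ℝ) ^ s.choose 2 := by
  classical
  have hsub : {G : SimpleGraph V | s ≤ G.indepNum} ⊆
      ⋃ K ∈ (Finset.univ : Finset V).powersetCard s, {G | G.IsIndepSet K} := by
    intro G hG
    obtain ⟨S, hS⟩ := G.exists_isNIndepSet_indepNum
    obtain ⟨K, hKS, hK⟩ := Finset.exists_subset_card_eq
      (show s ≤ S.card from hS.card_eq.symm ▸ hG)
    simp only [Set.mem_iUnion]
    exact ⟨K, Finset.mem_powersetCard.2 ⟨K.subset_univ, hK⟩,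
      hS.isIndepSet.mono (Finset.coe_subset.2 hKS)⟩
  refine (measureReal_mono hsub (measure_ne_top _ _)).trans <|
    (measureReal_biUnion_finset_le _ _).trans_eq ?_
  rw [Finset.sum_congr rfl fun K hK ↦ (binomialRandom_real_isIndepSet K).trans
    (by rw [(Finset.mem_powersetCard.1 hK).2]), Finset.sum_const, Finset.card_powersetCard,
    nsmul_eq_mul, Finset.card_univ]

lemma binomialRandom_real_lt_indepNum_le_inv [Nonempty V] {K : ℕ}
    (hK : 4 * Real.log (Fintype.card V) ≤ p * K) :
    G(V, p).real {G | K < G.indepNum} ≤ (Fintype.card V : ℝ)⁻¹ := by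
  have hn : (0 : ℝ) < Fintype.card V := Nat.cast_pos.2 Fintype.card_pos
  have hlog : 0 ≤ Real.log (Fintype.card V) := Real.log_natCast_nonneg _
  have hq : 0 ≤ 1 - (p : ℝ) := sub_nonneg.2 p.2.2
  calc G(V, p).real {G | K + 1 ≤ G.indepNum}
    _ ≤ (Fintype.card V).choose (K + 1) * (1 - p : ℝ) ^ (K + 1).choose 2 :=
      binomialRandom_real_le_indepNum_le _
    _ ≤ (Fintype.card V : ℝ) ^ (K + 1) * Real.exp (-p) ^ (K + 1).choose 2 := by
      gcongr
      · exact_mod_cast Nat.choose_le_pow _ _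
      · exact Real.one_sub_le_exp_neg p
    _ = Real.exp ((K + 1) * (Real.log (Fintype.card V) - p * K / 2)) := by
      rw [← Real.exp_nat_mul, Nat.cast_choose_two, ← Real.exp_log (pow_pos hn _), Real.log_pow,
        ← Real.exp_add]
      push_cast
      ring_nf
    _ ≤ Real.exp (-Real.log (Fintype.card V)) := by
      rw [Real.exp_le_exp]
      nlinarith [(K.cast_nonneg : (0 : ℝ) ≤ K)]
    _ = (Fintype.card V : ℝ)⁻¹ := by rw [Real.exp_neg, Real.exp_log hn]

end IndependenceNumber

section ForestEmbedding

open SimpleGraph Relation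
open scoped Finset

variable {V β : Type*} {o : V → V → Prop}

lemma exists_outdegree_le_indegree [DecidableRel o] {U : Finset V} (hU : U.Nonempty) :
    ∃ v ∈ U, #{w ∈ U | o v w} ≤ #{w ∈ U | o w v} := by
  refine Finset.exists_le_of_sum_le hU ?_
  exact (Finset.sum_card_bipartiteAbove_eq_sum_card_bipartiteBelow o).le

/-- In the digraph `o`, the set `S` absorbs `U` if every vertex of `U` lies in `S` or has an
out-neighbour in `S`. -/
def IsAbsorbing (o : V → V → Prop) (S U : Finset V) : Prop :=
  ∀ u ∈ U, ∃ s ∈ S, ReflGen o u s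

open Classical in
lemma exists_isIndepSet_isAbsorbing_half (o : V → V → Prop) (U : Finset V) :
    ∃ S ⊆ U, ∃ A ⊆ U, (fromRel o).IsIndepSet S ∧ IsAbsorbing o S A ∧ #U ≤ 2 * #A := by
  induction U using Finset.strongInduction with
  | H U ih =>
    rcases U.eq_empty_or_nonempty with rfl | hU
    · exact ⟨∅, subset_rfl, ∅, subset_rfl, by simp [IsIndepSet], by simp [IsAbsorbing], by simp⟩
    obtain ⟨v, hv, hdeg⟩ := exists_outdegree_le_indegree (o := ReflGen o) hU
    set B := {w ∈ U | ReflGen o w v}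
    set C := {w ∈ U | ReflGen o v w}
    have hvBC : v ∈ B ∪ C := Finset.mem_union_left _ (Finset.mem_filter.2 ⟨hv, .refl⟩)
    obtain ⟨S, hSU, A, hAU, hS, hA, hcard⟩ := ih (U \ (B ∪ C)) <|
      Finset.sdiff_subset.ssubset_of_mem_notMem hv fun h ↦ (Finset.mem_sdiff.1 h).2 hvBC
    have hnadj : ∀ s ∈ S, ¬ (fromRel o).Adj v s := by
      intro s hs hvs
      obtain ⟨hsU, hsBC⟩ := Finset.mem_sdiff.1 (hSU hs)
      refine hsBC (Finset.mem_union.2 ?_)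
      exact hvs.2.symm.imp (fun h ↦ Finset.mem_filter.2 ⟨hsU, .single h⟩)
        (fun h ↦ Finset.mem_filter.2 ⟨hsU, .single h⟩)
    refine ⟨insert v S, Finset.insert_subset hv (hSU.trans Finset.sdiff_subset),
      B ∪ A, Finset.union_subset (Finset.filter_subset _ _) (hAU.trans Finset.sdiff_subset),
      ?_, ?_, ?_⟩
    · rw [Finset.coe_insert]
      exact hS.insert fun s hs _ ↦ ⟨hnadj s hs, fun h ↦ hnadj s hs h.symm⟩
    · intro u hu
      rcases Finset.mem_union.1 hu with hu | hu
      · exact ⟨v, Finset.mem_insert_self _ _, (Finset.mem_filter.1 hu).2⟩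
      · exact (hA u hu).imp fun s hs ↦ hs.imp_left Finset.mem_insert_of_mem
    · have hdisj : Disjoint B A :=
        (Finset.disjoint_sdiff.mono_left Finset.subset_union_left).mono_right hAU
      have hsdiff := Finset.le_card_sdiff (B ∪ C) U
      have hunion := Finset.card_union_le B C
      rw [Finset.card_union_of_disjoint hdisj]
      omega

lemma exists_isAbsorbing_card_le [Finite V] (o : V → V → Prop) {L : ℕ} {U : Finset V}
    (hU : #U < 2 ^ L) :
    ∃ S ⊆ U, #S ≤ (fromRel o).indepNum * L ∧ IsAbsorbing o S U := by
  classical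
  induction L generalizing U with
  | zero =>
    obtain rfl : U = ∅ := by simpa using hU
    exact ⟨∅, subset_rfl, by simp, by simp [IsAbsorbing]⟩
  | succ L ih =>
    obtain ⟨S, hSU, A, hAU, hS, hA, hcard⟩ := exists_isIndepSet_isAbsorbing_half o U
    have hsdiff := Finset.card_sdiff_add_card_eq_card hAU
    obtain ⟨T, hTU, hT, hTA⟩ := ih (U := U \ A) (by rw [pow_succ] at hU; omega)
    refine ⟨S ∪ T, Finset.union_subset hSU (hTU.trans Finset.sdiff_subset), ?_, fun u hu ↦ ?_⟩
    · rw [mul_add, mul_one, add_comm]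
      exact (Finset.card_union_le S T).trans (add_le_add hS.card_le_indepNum hT)
    · by_cases huA : u ∈ A
      · exact (hA u huA).imp fun s hs ↦ hs.imp_left (Finset.mem_union_left T)
      · exact (hTA u (Finset.mem_sdiff.2 ⟨hu, huA⟩)).imp
          fun s hs ↦ hs.imp_left (Finset.mem_union_right S)

lemma exists_forall_adj_eq_of_isAcyclic {G : SimpleGraph β} (hG : G.IsAcyclic) {T : Finset β}
    (hT : T.Nonempty) : ∃ l ∈ T, ∃ c, ∀ a ∈ T, G.Adj l a → a = c := by
  have := hT.to_subtype
  obtain ⟨l, v, w, hw, hmax⟩ :=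
    Walk.exists_isPath_forall_isPath_length_le_length (G.induce (T : Set β))
  refine ⟨l, l.2, w.snd, fun a ha hla ↦ ?_⟩
  have hla' : (G.induce (T : Set β)).Adj l ⟨a, ha⟩ := hla
  refine congrArg Subtype.val ((hG.induce _).eq_snd_of_adj_start hw hla' ?_)
  by_contra haw
  have := hmax _ _ (w.cons hla'.symm) ((Walk.cons_isPath_iff _ _).2 ⟨hw, haw⟩)
  simp at this

lemma indepNum_anti [Finite V] {G H : SimpleGraph V} (h : G ≤ H) : H.indepNum ≤ G.indepNum := by
  obtain ⟨S, hS⟩ := H.exists_isNIndepSet_indepNum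
  rw [← hS.card_eq]
  exact IsIndepSet.card_le_indepNum (hS.isIndepSet.mono' fun _ _ hn hadj ↦ hn (h hadj))

lemma indepNum_pos [Finite V] [Nonempty V] (G : SimpleGraph V) : 0 < G.indepNum := by
  obtain ⟨v⟩ := ‹Nonempty V›
  exact IsIndepSet.card_le_indepNum (t := {v}) (by simp [IsIndepSet])

/-- Phrasing the direction of the edge `l c` through `F` lets one absorbing set argument serve both
orientations, and the case of no edge. -/
lemma exists_attaching_set [Finite V] (o : V → V → Prop) {F : β → β → Prop}
    (hF : ∀ a b, F a b → ¬ F b a) (l c : β) {L : ℕ} {U : Finset V} (hU : #U < 2 ^ L) :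
    ∃ S ⊆ U, #S ≤ (fromRel o).indepNum * L ∧
      IsAbsorbing (fun u s ↦ (F c l → o u s) ∧ (F l c → o s u)) S U := by
  obtain ⟨S, hSU, hS, hSabs⟩ :=
    exists_isAbsorbing_card_le (fun u s ↦ (F c l → o u s) ∧ (F l c → o s u)) hU
  refine ⟨S, hSU, hS.trans (Nat.mul_le_mul_right L (indepNum_anti fun u s hus ↦ ?_)), hSabs⟩
  have := hF c l
  rw [fromRel_adj] at hus ⊢
  tauto

lemma exists_attaching_vertex [DecidableEq V] {F : β → β → Prop} {l c : β} {T : Finset β}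
    {S U : Finset V} {f : β → V} (hlc : ∀ a ∈ T, (fromRel F).Adj l a → a = c) (hl : l ∉ T)
    (hS : S.Nonempty) (hSU : IsAbsorbing (fun u s ↦ (F c l → o u s) ∧ (F l c → o s u)) S U)
    (hf : Set.MapsTo f T (U \ S : Finset V)) :
    ∃ s ∈ S, ∀ a ∈ T, (F a l → o (f a) s) ∧ (F l a → o s (f a)) := by
  have hnbr : ∀ a ∈ T, F a l ∨ F l a → a = c := fun a ha haF ↦
    hlc a ha ⟨(ne_of_mem_of_not_mem ha hl).symm, haF.symm⟩
  by_cases hc : c ∈ T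
  · obtain ⟨hcU, hcS⟩ := Finset.mem_sdiff.1 (hf hc)
    obtain ⟨s, hs, hcs⟩ := hSU (f c) hcU
    refine ⟨s, hs, fun a ha ↦ ?_⟩
    cases hcs with
    | refl => exact absurd hs hcS
    | single hcs =>
      exact ⟨fun h ↦ by obtain rfl := hnbr a ha (.inl h); exact hcs.1 h,
        fun h ↦ by obtain rfl := hnbr a ha (.inr h); exact hcs.2 h⟩
  · obtain ⟨s, hs⟩ := hS
    exact ⟨s, hs, fun a ha ↦ ⟨fun h ↦ absurd (hnbr a ha (.inl h) ▸ ha) hc,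
      fun h ↦ absurd (hnbr a ha (.inr h) ▸ ha) hc⟩⟩

/-- `EmbedsOn F o f T U` says that `f`, restricted to `T`, embeds the subdigraph of `F` induced on
`T` into the digraph `o` with all images in `U`; a total `f` keeps the forest induction free of
subtypes. -/
structure EmbedsOn (F : β → β → Prop) (o : V → V → Prop) (f : β → V) (T : Finset β)
    (U : Finset V) : Prop where
  injOn : Set.InjOn f T
  mapsTo : Set.MapsTo f T U
  map_rel : ∀ a ∈ T, ∀ b ∈ T, F a b → o (f a) (f b)

lemma EmbedsOn.update [DecidableEq V] [DecidableEq β] {F : β → β → Prop} {f : β → V}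
    {T : Finset β} {S U : Finset V} {l : β} {s : V} (hf : EmbedsOn F o f T (U \ S)) (hl : l ∉ T)
    (hll : ¬ F l l) (hSU : S ⊆ U) (hs : s ∈ S)
    (harc : ∀ a ∈ T, (F a l → o (f a) s) ∧ (F l a → o s (f a))) :
    EmbedsOn F o (Function.update f l s) (insert l T) U := by
  have hfU : ∀ a ∈ T, f a ∈ U ∧ f a ∉ S := fun a ha ↦ Finset.mem_sdiff.1 (hf.mapsTo ha)
  have hgl : Function.update f l s l = s := Function.update_self ..
  have hgT : ∀ a ∈ T, Function.update f l s a = f a := fun a ha ↦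
    Function.update_of_ne (ne_of_mem_of_not_mem ha hl) _ _
  refine ⟨?_, fun a ha ↦ ?_, ?_⟩
  · rw [Finset.coe_insert, Set.injOn_insert (by exact_mod_cast hl), hgl]
    refine ⟨hf.injOn.congr fun a ha ↦ (hgT a ha).symm, ?_⟩
    rintro ⟨a, ha, has⟩
    exact (hfU a ha).2 ((hgT a ha).symm.trans has ▸ hs)
  · rcases Finset.mem_insert.1 ha with rfl | ha
    · rw [hgl]; exact hSU hs
    · rw [hgT a ha]; exact (hfU a ha).1
  · simp only [Finset.forall_mem_insert, hgl]
    refine ⟨⟨fun h ↦ absurd h hll, fun b hb h ↦ ?_⟩, fun a ha ↦ ⟨fun h ↦ ?_, fun b hb h ↦ ?_⟩⟩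
    · rw [hgT b hb]; exact (harc b hb).2 h
    · rw [hgT a ha]; exact (harc a ha).1 h
    · rw [hgT a ha, hgT b hb]; exact hf.map_rel a ha b hb h

/-- The images of the forest are chosen leaf by leaf, always reserving for the leaf an absorbing set
that the image of its neighbour avoids. -/
theorem exists_embedsOn_of_isAcyclic [Fintype V] [Nonempty V] (o : V → V → Prop)
    {F : β → β → Prop} (hF : ∀ a b, F a b → ¬ F b a) (hac : (fromRel F).IsAcyclic)
    {T : Finset β} {U : Finset V}
    (hU : #T * ((fromRel o).indepNum * (Nat.log 2 (Fintype.card V) + 1)) ≤ #U) :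
    ∃ f, EmbedsOn F o f T U := by
  classical
  set N := (fromRel o).indepNum * (Nat.log 2 (Fintype.card V) + 1)
  have hN : 0 < N := Nat.mul_pos (indepNum_pos _) (Nat.succ_pos _)
  induction hk : #T generalizing T U with
  | zero =>
    obtain rfl : T = ∅ := Finset.card_eq_zero.1 hk
    exact ⟨fun _ ↦ Classical.arbitrary V, by simp, by simp [Set.mapsTo_empty], by simp⟩
  | succ k ih =>
    have hTne : T.Nonempty := Finset.card_pos.1 (hk ▸ k.succ_pos)
    obtain ⟨l, hl, c, hlc⟩ := exists_forall_adj_eq_of_isAcyclic hac hTne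
    obtain ⟨T, hlT, rfl⟩ : ∃ T', l ∉ T' ∧ insert l T' = T :=
      ⟨T.erase l, Finset.notMem_erase l T, Finset.insert_erase hl⟩
    obtain ⟨S, hSU, hSN, hSabs⟩ := exists_attaching_set o hF l c <|
      U.card_le_univ.trans_lt (Nat.lt_pow_succ_log_self one_lt_two _)
    have hSne : S.Nonempty := by
      obtain ⟨u, hu⟩ : U.Nonempty := Finset.card_pos.1 <| hU.trans_lt' (by rw [hk]; positivity)
      exact (hSabs u hu).imp fun s hs ↦ hs.1
    rw [Finset.card_insert_of_notMem hlT] at hk hU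
    have hUS : #T * N ≤ #(U \ S) := by
      have := Finset.le_card_sdiff S U
      rw [add_one_mul] at hU
      change _ ≤ N at hSN
      omega
    obtain ⟨f, hf⟩ := ih hUS (Nat.succ_injective hk)
    obtain ⟨s, hs, harc⟩ := exists_attaching_vertex
      (fun a ha ↦ hlc a (Finset.mem_insert_of_mem ha)) hlT hSne hSabs hf.mapsTo
    exact ⟨_, hf.update hlT (fun h ↦ hF l l h h) hSU hs harc⟩

end ForestEmbedding

section Arrows

open SimpleGraph
open scoped Finset

variable {V : Type*}

lemma IsOrientation.fromRel_eq {G : SimpleGraph V} {o : V → V → Prop} (ho : IsOrientation G o) :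
    fromRel o = G := by
  ext u v
  refine ⟨fun h ↦ h.2.elim (ho.1 u v) fun h ↦ (ho.1 v u h).symm, fun h ↦ ⟨h.ne, ?_⟩⟩
  have := ho.2 u v h
  tauto

lemma IsOrientation.comap {W : Type*} {G : SimpleGraph V} {o : V → V → Prop}
    (ho : IsOrientation G o) {H : SimpleGraph W} (e : H ↪g G) :
    IsOrientation H fun a b ↦ o (e a) (e b) :=
  ⟨fun _ _ h ↦ e.map_adj_iff.1 (ho.1 _ _ h), fun _ _ h ↦ ho.2 _ _ (e.map_adj_iff.2 h)⟩

lemma Arrows.exists_injective_mem {γ : Type*} {k : ℕ} {H : γ → γ → Prop}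
    (hH : Arrows (⊤ : SimpleGraph (Fin k)) H) {G : SimpleGraph V} {o : V → V → Prop}
    (ho : IsOrientation G o) {K : Finset V} (hK : G.IsNClique k K) :
    ∃ g : γ → V, Function.Injective g ∧ (∀ i, g i ∈ K) ∧ ∀ i j, H i j → o (g i) (g j) := by
  let e : Fin k ≃ K := (K.equivFinOfCardEq hK.card_eq).symm
  have he : Function.Injective fun i ↦ (e i : V) := Subtype.val_injective.comp e.injective
  let f : (⊤ : SimpleGraph (Fin k)) ↪g G :=
    ⟨⟨fun i ↦ e i, he⟩, fun {i j} ↦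
      ⟨fun h hij ↦ h.ne (congrArg _ hij), fun h ↦ hK.isClique (e i).2 (e j).2 (he.ne h)⟩⟩
  obtain ⟨g, hg, hgH⟩ := hH _ (ho.comap f)
  exact ⟨fun i ↦ e (g i), he.comp hg, fun i ↦ (e (g i)).2, hgH⟩

/-- Some vertex of a tournament on four vertices has two in-neighbours, and together with them it
spans a transitive triangle. -/
lemma arrows_top_TT3 : Arrows (⊤ : SimpleGraph (Fin 4)) TT3 := by
  classical
  intro o ho
  have hirr : ∀ v, ¬ o v v := fun v h ↦ (ho.1 v v h).ne rfl
  obtain ⟨z, -, hz⟩ := exists_outdegree_le_indegree (o := o) (U := Finset.univ) ⟨0, by simp⟩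
  have hdeg : 3 ≤ #{w | o z w} + #{w | o w z} := by
    refine le_trans ?_ (Finset.card_union_le _ _)
    rw [show 3 = #(Finset.univ.erase z) by simp]
    refine Finset.card_le_card fun w hw ↦ ?_
    have := ho.2 z w (Finset.ne_of_mem_erase hw).symm
    simp only [Finset.mem_union, Finset.mem_filter_univ]
    tauto
  obtain ⟨x, hx, y, hy, hxy⟩ := Finset.one_lt_card.1 (show 1 < #{w | o w z} by omega)
  rw [Finset.mem_filter_univ] at hx hy
  wlog hoxy : o x y generalizing x y
  · exact this y hy x hx hxy.symm (not_not.1 fun h ↦ hoxy ((ho.2 x y hxy).2 h))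
  have harc : ∀ i j, TT3 i j → o (![x, y, z] i) (![x, y, z] j) := by
    intro i j hij
    fin_cases i <;> fin_cases j <;> simp_all [TT3]
  refine ⟨![x, y, z], fun i j h ↦ by_contra fun hij ↦ ?_, harc⟩
  rcases lt_or_gt_of_ne hij with hij | hij
  · exact hirr _ (h ▸ harc i j hij)
  · exact hirr _ (h ▸ harc j i hij)

/-- The forest is embedded on the representatives of the root in the copies of `H` found inside a
largest clique packing. -/
theorem arrows_rootedProd [Fintype V] [Nonempty V] {β γ : Type*} [Fintype β] {k : ℕ}
    {G : SimpleGraph V} {F : β → β → Prop} {H : γ → γ → Prop} (r : γ)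
    (hH : Arrows (⊤ : SimpleGraph (Fin k)) H) (hF : ∀ a b, F a b → ¬ F b a)
    (hac : (fromRel F).IsAcyclic)
    (hcard : Fintype.card β * (G.indepNum * (Nat.log 2 (Fintype.card V) + 1)) ≤
      cliquePackingNum G k) :
    Arrows G (rootedProd F H r) := by
  classical
  intro o ho
  obtain ⟨P, hP, hPcard⟩ := exists_isCliquePacking_card_eq G k
  choose! g hg hgmem hgH using fun K (hK : K ∈ P) ↦ hH.exists_injective_mem ho (hP.isNClique K hK)
  have hgeq : ∀ K ∈ P, ∀ L ∈ P, ∀ i j, g K i = g L j → K = L := by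
    intro K hK L hL i j hij
    refine hP.pairwiseDisjoint.elim_finset hK hL (g K i) (hgmem K hK i) ?_
    exact hij ▸ hgmem L hL j
  obtain ⟨f, hf⟩ := exists_embedsOn_of_isAcyclic o hF hac (T := Finset.univ)
    (U := P.image (g · r)) (by
      rw [Finset.card_image_of_injOn fun K hK L hL h ↦ hgeq K hK L hL r r h, ho.fromRel_eq, hPcard]
      exact hcard)
  choose K hK hKf using fun a ↦ Finset.mem_image.1 (hf.mapsTo (Finset.mem_univ a))
  refine ⟨fun x ↦ g (K x.1) x.2, ?_, ?_⟩
  · rintro ⟨a, i⟩ ⟨b, j⟩ (hij : g (K a) i = g (K b) j)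
    have hab : K a = K b := hgeq _ (hK a) _ (hK b) i j hij
    obtain rfl : a = b := hf.injOn (Finset.mem_univ a) (Finset.mem_univ b)
      ((hKf a).symm.trans (hab ▸ hKf b))
    rw [hg _ (hK a) hij]
  · rintro ⟨a, i⟩ ⟨b, j⟩ (⟨rfl, rfl, hab⟩ | ⟨rfl, hij⟩)
    · change o (g (K a) j) (g (K b) j)
      rw [hKf, hKf]
      exact hf.map_rel a (Finset.mem_univ a) b (Finset.mem_univ b) hab
    · exact hgH _ (hK _) i j hij

end Arrows

section SufficientConditions

open MeasureTheory ProbabilityTheory SimpleGraph unitInterval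
open scoped Finset

theorem binomialRandom_real_cliquePackingNum_lt_le {V : Type*} [Fintype V] {p : I} {k : ℕ}
    (hpos : 0 < (Fintype.card V).choose k * (p : ℝ) ^ k.choose 2)
    (hsum : ∑ j ∈ Finset.Ico 1 k, (k.choose j : ℝ) * (Fintype.card V).choose (k - j) *
      p ^ (k.choose 2 - j.choose 2) ≤ 3 / 4) :
    G(V, p).real {G | (cliquePackingNum G k : ℝ) <
        (Fintype.card V).choose k * (p : ℝ) ^ k.choose 2 / 8} ≤
      64 * k.choose 2 / ((Fintype.card V).choose k * (p : ℝ) ^ k.choose 2) := by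
  have hmean := le_integral_cliquePackingNum (V := V) (p := p) k
  have hvar := variance_cliquePackingNum_le (V := V) (p := p) k
  rw [mul_assoc] at hvar
  set M := (Fintype.card V).choose k * (p : ℝ) ^ k.choose 2
  have hmean' : M / 4 ≤ ∫ G, (cliquePackingNum G k : ℝ) ∂G(V, p) := by
    refine hmean.trans' ?_
    rw [div_eq_mul_inv]
    gcongr
    linarith
  calc _ ≤ G(V, p).real {G | M / 8 ≤
          |(cliquePackingNum G k : ℝ) - ∫ G, (cliquePackingNum G k : ℝ) ∂G(V, p)|} := by
        refine measureReal_mono (fun G hG ↦ ?_) (measure_ne_top _ _)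
        rw [Set.mem_ofPred_eq] at hG ⊢
        rw [abs_sub_comm]
        exact (by linarith : M / 8 ≤ _).trans (le_abs_self _)
    _ ≤ Var[fun G ↦ (cliquePackingNum G k : ℝ); G(V, p)] / (M / 8) ^ 2 :=
        ENNReal.toReal_le_of_le_ofReal (div_nonneg (variance_nonneg _ _) (sq_nonneg _))
          (meas_ge_le_variance_div_sq .of_discrete (div_pos hpos (by norm_num)))
    _ ≤ k.choose 2 * M / (M / 8) ^ 2 := by gcongr
    _ = 64 * k.choose 2 / M := by field_simp; norm_num

/-- `G → F⃗∘TT⃗₃′` for every oriented forest `F⃗` with at most `x` vertices and every choice of root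
of `TT⃗₃`. -/
def ArrowsForestProducts {V : Type*} (G : SimpleGraph V) (x : ℝ) : Prop :=
  ∀ (m : ℕ) (F : Fin m → Fin m → Prop) (r : Fin 3),
    (∀ a b, F a b → ¬ F b a) → (fromRel F).IsAcyclic → (m : ℝ) ≤ x → Arrows G (rootedProd F TT3 r)

lemma arrowsForestProducts_of_mul_le {V : Type*} [Fintype V] [Nonempty V] {G : SimpleGraph V}
    {x : ℝ} (hx : x * (G.indepNum * (Nat.log 2 (Fintype.card V) + 1 : ℕ)) ≤ cliquePackingNum G 4) :
    ArrowsForestProducts G x := by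
  intro m F r hF hac hm
  refine arrows_rootedProd r arrows_top_TT3 hF hac ?_
  rw [Fintype.card_fin]
  exact_mod_cast (mul_le_mul_of_nonneg_right hm (by positivity)).trans hx

theorem le_binomialRandom_real_arrowsForestProducts {V : Type*} [Fintype V] [Nonempty V] {p : I}
    {K : ℕ} {x : ℝ} (hx : 0 ≤ x) (hK : 4 * Real.log (Fintype.card V) ≤ p * K)
    (hpos : 0 < (Fintype.card V).choose 4 * (p : ℝ) ^ 6)
    (hsum : ∑ j ∈ Finset.Ico 1 4, ((4).choose j : ℝ) * (Fintype.card V).choose (4 - j) *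
      p ^ (6 - j.choose 2) ≤ 3 / 4)
    (hxK : x * (K * (Nat.log 2 (Fintype.card V) + 1 : ℕ)) ≤
      (Fintype.card V).choose 4 * (p : ℝ) ^ 6 / 8) :
    1 - 384 / ((Fintype.card V).choose 4 * (p : ℝ) ^ 6) - (Fintype.card V : ℝ)⁻¹ ≤
      G(V, p).real {G | ArrowsForestProducts G x} := by
  have hpack := binomialRandom_real_cliquePackingNum_lt_le (k := 4) hpos hsum
  rw [show Nat.choose 4 2 = 6 from rfl, Nat.cast_ofNat,
    show (64 * 6 : ℝ) = 384 by norm_num] at hpack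
  have hindep := binomialRandom_real_lt_indepNum_le_inv hK
  set M := (Fintype.card V).choose 4 * (p : ℝ) ^ 6
  have hsub : {G : SimpleGraph V | ArrowsForestProducts G x}ᶜ ⊆
      {G | (cliquePackingNum G 4 : ℝ) < M / 8} ∪ {G | K < G.indepNum} := by
    intro G hG
    by_contra! h
    simp only [Set.mem_union, Set.mem_ofPred_eq, not_or, not_lt] at h
    refine hG (arrowsForestProducts_of_mul_le ((hxK.trans h.1).trans' ?_))
    gcongr
    exact h.2
  have hcompl := (measureReal_mono (μ := G(V, p)) hsub).trans (measureReal_union_le _ _)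
  rw [probReal_compl_eq_one_sub .of_discrete] at hcompl
  linarith

end SufficientConditions

section Asymptotics

open unitInterval

variable {n : ℕ} {δ : ℝ}

lemma pow_four_div_le_choose_four (hn : 6 ≤ n) : (n : ℝ) ^ 4 / 384 ≤ n.choose 4 := by
  have hn' : (n : ℝ) / 2 ≤ (n + 1 - 4 : ℕ) := by
    rw [Nat.cast_sub (by omega)]
    have : (6 : ℝ) ≤ n := by exact_mod_cast hn
    push_cast
    linarith
  calc (n : ℝ) ^ 4 / 384 = (n / 2 : ℝ) ^ 4 / (4).factorial := by norm_num [Nat.factorial]; ring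
    _ ≤ ((n + 1 - 4 : ℕ) : ℝ) ^ 4 / (4).factorial := by gcongr
    _ ≤ n.choose 4 := Nat.pow_le_choose 4 n

lemma one_le_log_natCast (hn : 3 ≤ n) : 1 ≤ Real.log n := by
  have hn' : (3 : ℝ) ≤ n := by exact_mod_cast hn
  rw [Real.le_log_iff_exp_le (by linarith)]
  linarith [Real.exp_one_lt_d9]

lemma natLog_two_add_one_le (hn : 3 ≤ n) : ((Nat.log 2 n + 1 : ℕ) : ℝ) ≤ 3 * Real.log n := by
  have hlog : (Nat.log 2 n : ℝ) ≤ Real.log n / Real.log 2 := Real.natLog_le_logb n 2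
  rw [le_div_iff₀ (Real.log_pos one_lt_two)] at hlog
  push_cast
  nlinarith [Real.log_two_gt_d9, one_le_log_natCast hn, (Nat.log 2 n).cast_nonneg (α := ℝ)]

lemma pow_mul_rpow_pow (hn : 0 < n) (x : ℝ) (a b : ℕ) :
    (n : ℝ) ^ a * ((n : ℝ) ^ x) ^ b = (n : ℝ) ^ (a + x * b) := by
  rw [Real.rpow_add (Nat.cast_pos.2 hn), Real.rpow_natCast, Real.rpow_mul n.cast_nonneg,
    Real.rpow_natCast]

lemma pow_mul_rpow_pow_le (hn : 0 < n) {x y : ℝ} (a b : ℕ) (hxy : a + x * b ≤ y) :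
    (n : ℝ) ^ a * ((n : ℝ) ^ x) ^ b ≤ (n : ℝ) ^ y := by
  rw [pow_mul_rpow_pow hn]
  exact Real.rpow_le_rpow_of_exponent_le (by exact_mod_cast hn) hxy

lemma sum_choose_mul_pow_le (hn : 0 < n) (hδ : δ ≤ 1 / 6)
    (hbig : 7 * (n : ℝ) ^ (-(1 / 2) : ℝ) ≤ 1 / 12) :
    ∑ j ∈ Finset.Ico 1 4, ((4).choose j : ℝ) * n.choose (4 - j) *
      ((n : ℝ) ^ (δ - 2 / 3)) ^ (6 - j.choose 2) ≤ 3 / 4 := by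
  have h₁ := pow_mul_rpow_pow_le hn (x := δ - 2 / 3) (y := 0) 3 6 (by push_cast; linarith)
  have h₂ := pow_mul_rpow_pow_le hn (x := δ - 2 / 3) (y := -(1 / 2)) 2 5 (by push_cast; linarith)
  have h₃ := pow_mul_rpow_pow_le hn (x := δ - 2 / 3) (y := -(1 / 2)) 1 3 (by push_cast; linarith)
  have hp : 0 ≤ (n : ℝ) ^ (δ - 2 / 3) := by positivity
  set p := (n : ℝ) ^ (δ - 2 / 3)
  have hchoose (a : ℕ) : (n.choose a : ℝ) ≤ n ^ a / a.factorial := Nat.choose_le_pow_div a n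
  have c₃ := mul_le_mul_of_nonneg_right (hchoose 3) (pow_nonneg hp 6)
  have c₂ := mul_le_mul_of_nonneg_right (hchoose 2) (pow_nonneg hp 5)
  rw [Real.rpow_zero] at h₁
  rw [pow_one] at h₃
  norm_num [Nat.factorial] at c₂ c₃
  calc _ = 4 * n.choose 3 * p ^ 6 + 6 * n.choose 2 * p ^ 5 + 4 * n * p ^ 3 := by
        simp [Finset.sum_Ico_succ_top, Nat.choose]
    _ ≤ 3 / 4 := by linarith

lemma rpow_six_mul_div_le_choose_four_mul (hn : 6 ≤ n) (δ : ℝ) :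
    (n : ℝ) ^ (6 * δ) / 384 ≤ n.choose 4 * ((n : ℝ) ^ (δ - 2 / 3)) ^ 6 := by
  calc (n : ℝ) ^ (6 * δ) / 384 = n ^ 4 / 384 * ((n : ℝ) ^ (δ - 2 / 3)) ^ 6 := by
        rw [div_mul_eq_mul_div, pow_mul_rpow_pow (by omega)]
        push_cast
        ring_nf
    _ ≤ n.choose 4 * ((n : ℝ) ^ (δ - 2 / 3)) ^ 6 := by
        gcongr
        exact pow_four_div_le_choose_four hn

lemma natCeil_four_mul_log_div_le (hn : 3 ≤ n) {p : ℝ} (hp : 0 < p) (hp1 : p ≤ 1) :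
    (⌈4 * Real.log n / p⌉₊ : ℝ) ≤ 5 * Real.log n / p := by
  have hlog := one_le_log_natCast hn
  have hone : 1 ≤ Real.log n / p := (one_le_div hp).2 (hp1.trans hlog)
  calc (⌈4 * Real.log n / p⌉₊ : ℝ) ≤ 4 * Real.log n / p + 1 :=
        (Nat.ceil_lt_add_one (by positivity)).le
    _ ≤ 4 * Real.log n / p + Real.log n / p := by gcongr
    _ = 5 * Real.log n / p := by ring

lemma rpow_div_log_sq_mul_le (hn : 6 ≤ n) (hδ : δ ≤ 2 / 3) :
    1 / 50000 * (n : ℝ) ^ (7 * δ - 2 / 3) / Real.log n ^ 2 *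
      (⌈4 * Real.log n / (n : ℝ) ^ (δ - 2 / 3)⌉₊ * (Nat.log 2 n + 1 : ℕ)) ≤
      n.choose 4 * ((n : ℝ) ^ (δ - 2 / 3)) ^ 6 / 8 := by
  have hn0 : (0 : ℝ) < n := by exact_mod_cast (by omega : 0 < n)
  have hlog : 0 < Real.log n := zero_lt_one.trans_le (one_le_log_natCast (by omega))
  have hp : 0 < (n : ℝ) ^ (δ - 2 / 3) := Real.rpow_pos_of_pos hn0 _
  have hp1 : (n : ℝ) ^ (δ - 2 / 3) ≤ 1 :=
    Real.rpow_le_one_of_one_le_of_nonpos (by exact_mod_cast (by omega : 1 ≤ n)) (by linarith)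
  have hsplit : (n : ℝ) ^ (7 * δ - 2 / 3) = n ^ (6 * δ) * n ^ (δ - 2 / 3) := by
    rw [← Real.rpow_add hn0]
    ring_nf
  calc _ ≤ 1 / 50000 * (n : ℝ) ^ (7 * δ - 2 / 3) / Real.log n ^ 2 *
          (5 * Real.log n / (n : ℝ) ^ (δ - 2 / 3) * (3 * Real.log n)) := by
        gcongr
        · exact natCeil_four_mul_log_div_le (by omega) hp hp1
        · exact natLog_two_add_one_le (by omega)
    _ = 3 / 10000 * (n : ℝ) ^ (6 * δ) := by
        rw [hsplit]
        field_simp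
        norm_num
    _ ≤ n.choose 4 * ((n : ℝ) ^ (δ - 2 / 3)) ^ 6 / 8 := by
        linarith [rpow_six_mul_div_le_choose_four_mul hn δ, Real.rpow_pos_of_pos hn0 (6 * δ)]

theorem le_probGnp_arrowsForestProducts (hn : 6 ≤ n) (hδ : δ ≤ 1 / 6)
    (hbig : 7 * (n : ℝ) ^ (-(1 / 2) : ℝ) ≤ 1 / 12) :
    1 - 147456 / (n : ℝ) ^ (6 * δ) - (n : ℝ)⁻¹ ≤ probGnp n ((n : ℝ) ^ (δ - 2 / 3))
      (ArrowsForestProducts · (1 / 50000 * (n : ℝ) ^ (7 * δ - 2 / 3) / Real.log n ^ 2)) := by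
  have hn0 : (0 : ℝ) < n := by exact_mod_cast (by omega : 0 < n)
  have : Nonempty (Fin n) := ⟨0, by omega⟩
  have hM := rpow_six_mul_div_le_choose_four_mul hn δ
  have hX : 0 < (n : ℝ) ^ (6 * δ) := Real.rpow_pos_of_pos hn0 _
  have hsum := sum_choose_mul_pow_le (by omega) hδ hbig
  have hxK := rpow_div_log_sq_mul_le hn (hδ.trans (by norm_num))
  obtain ⟨p, hp⟩ : ∃ p : I, (p : ℝ) = (n : ℝ) ^ (δ - 2 / 3) :=
    ⟨⟨_, by positivity, Real.rpow_le_one_of_one_le_of_nonpos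
      (by exact_mod_cast (by omega : 1 ≤ n)) (by linarith)⟩, rfl⟩
  have hp0 : 0 < (p : ℝ) := hp ▸ Real.rpow_pos_of_pos hn0 _
  rw [← hp] at hM hsum hxK ⊢
  rw [probGnp_eq_binomialRandom_real]
  have hmain := le_binomialRandom_real_arrowsForestProducts (V := Fin n) (p := p)
    (K := ⌈4 * Real.log n / p⌉₊)
    (x := 1 / 50000 * (n : ℝ) ^ (7 * δ - 2 / 3) / Real.log n ^ 2) (by positivity)
  simp only [Fintype.card_fin] at hmain
  have hK : 4 * Real.log n ≤ p * ⌈4 * Real.log n / p⌉₊ := (div_le_iff₀' hp0).1 (Nat.le_ceil _)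
  have hMX : 384 / (n.choose 4 * (p : ℝ) ^ 6) ≤ 147456 / (n : ℝ) ^ (6 * δ) := by
    rw [div_le_div_iff₀ (by linarith) hX]
    linarith
  linarith [hmain hK (by linarith) hsum hxK]

end Asymptotics

open Filter in
/-- There is an absolute constant `b > 0` such that for every `0 < δ ≤ 1/6`, with
`p = n^{δ-2/3}`, a.a.s. `G(n,p) → F⃗∘TT⃗₃′` simultaneously for every oriented forest `F⃗`
with `v(F⃗) ≤ b·n^{7δ-2/3}/(log n)²`. -/
theorem stmt3 :
    ∃ b : ℝ, 0 < b ∧ ∀ δ : ℝ, 0 < δ → δ ≤ 1 / 6 →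
      Tendsto (fun n : ℕ => probGnp n ((n : ℝ) ^ (δ - 2 / 3))
        (fun G => ∀ (m : ℕ) (F : Fin m → Fin m → Prop) (r : Fin 3),
          (∀ a b, F a b → ¬ F b a) → (SimpleGraph.fromRel F).IsAcyclic →
          (m : ℝ) ≤ b * (n : ℝ) ^ (7 * δ - 2 / 3) / (Real.log n) ^ 2 →
          Arrows G (rootedProd F TT3 r)))
        atTop (nhds 1) := by
  refine ⟨1 / 50000, by norm_num, fun δ hδ hδ' ↦ ?_⟩
  have hcast := tendsto_natCast_atTop_atTop (R := ℝ)
  have hbig : ∀ᶠ n : ℕ in atTop, 7 * (n : ℝ) ^ (-(1 / 2) : ℝ) ≤ 1 / 12 := by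
    have := ((tendsto_rpow_neg_atTop (by norm_num : (0 : ℝ) < 1 / 2)).comp hcast).const_mul 7
    rw [mul_zero] at this
    exact this.eventually_le_const (by norm_num)
  have hlower : Tendsto (fun n : ℕ ↦ 1 - 147456 / (n : ℝ) ^ (6 * δ) - (n : ℝ)⁻¹)
      atTop (nhds 1) := by
    have hX := (tendsto_rpow_atTop (by positivity : 0 < 6 * δ)).comp hcast
    simpa using (tendsto_const_nhds.sub (tendsto_const_nhds.div_atTop hX)).sub
      (tendsto_inv_atTop_zero.comp hcast)
  refine tendsto_of_tendsto_of_tendsto_of_le_of_le' hlower tendsto_const_nhds ?_ ?_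
  · filter_upwards [hbig, eventually_ge_atTop 6] with n hn hn6
    exact le_probGnp_arrowsForestProducts hn6 hδ' hn
  · filter_upwards [eventually_ge_atTop 1] with n hn
    exact probGnp_le_one n ⟨_, by positivity, Real.rpow_le_one_of_one_le_of_nonpos
      (by exact_mod_cast hn) (by linarith)⟩ _
end

section
/- For every integer a ≥ 3 there exist constants c_a and C_a with 1 < c_a ≤ C_a such that the following holds. Let b > 0 be a constant and p = p(n) = b/n. If T⃗ is an oriented tree with a(T⃗) = a, then: if b < c_a, then P(G(n,p) → T⃗) → 0 as n → ∞; and if b > C_a, then P(G(n,p) → T⃗) → 1 as n → ∞. -/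
/-- The height `h(T⃗)` of an oriented tree: the number of arcs of a longest
directed path in `T⃗`. -/
noncomputable def dirHeight {β : Type*} [Fintype β] (T : β → β → Prop) : ℕ :=
  sSup {k : ℕ | ∃ f : Fin (k + 1) → β, Function.Injective f ∧
    ∀ i : Fin k, T (f i.castSucc) (f i.succ)}

/-- The maximum degree of a finite simple graph. -/
noncomputable def maxDeg {β : Type*} [Fintype β] (G : SimpleGraph β) : ℕ :=
  sSup {d : ℕ | ∃ v, d = (G.neighborSet v).ncard}

/-- The parameter `a(T⃗) = max{h(T⃗), Δ(T⃗)}` of an oriented tree. -/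
noncomputable def treeParam {β : Type*} [Fintype β] (T : β → β → Prop) : ℕ :=
  max (dirHeight T) (maxDeg (SimpleGraph.fromRel T))

/-!
Lower threshold. For `b ≤ 1.001` a first moment computation shows that `G(n, b / n)` is
asymptotically almost surely `2`-degenerate. Order a `2`-degenerate graph so that each vertex has
at most two earlier neighbours. Orienting edges backwards bounds the out-degrees by `2`. Orienting
them down a greedy `3`-colouring leaves no directed path with three arcs. Orienting them out of
the first greedy colour class, and backwards elsewhere, leaves out-degree at most `1` at every
vertex of positive in-degree. As these constructions may be reversed, an oriented tree `T` that is
arrowed has `treeParam T ≤ 2`.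

Upper threshold. For large `b`, asymptotically almost surely any two disjoint linear-sized vertex
sets are joined by an edge, and deleting few vertices leaves a linear-sized set `Z` that spans no
short cycle. Given an orientation, split `Z` into `2 ^ a` blocks. Passing to subsets, each pair of
blocks becomes dense in one of the two directions, which gives a tournament on the blocks. It
contains a transitive subtournament on `a + 1` blocks, and deleting vertices of low degree turns
these into layers where every vertex has `a` out-neighbours in each later layer and `a`
in-neighbours in each earlier one. Map each vertex of `T` to the layer given by the length of the
longest directed path ending there, and embed `T` leaf by leaf: the image of a subtree spans no
further edges, so some neighbour of the required kind is always unused.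
-/

/-! ### Binomial random graphs -/

section RandomGraph

open MeasureTheory ProbabilityTheory unitInterval Classical
open scoped SimpleGraph Finset

variable {V : Type*} {p : I}

instance [Finite V] : DiscreteMeasurableSpace (SimpleGraph V) :=
  have : MeasurableSingletonClass (SimpleGraph V) :=
    ⟨fun G ↦ SimpleGraph.measurableEmbedding_edgeSet.measurableSet_image.1 (by simp)⟩
  inferInstance

theorem binomialRandom_real_singleton [Finite V] (G : SimpleGraph V) :
    G(V, p).real {G} =
      (p : ℝ) ^ G.edgeSet.ncard * (1 - p : ℝ) ^ ((Nat.card V).choose 2 - G.edgeSet.ncard) := by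
  simp [measureReal_def]

theorem probGnp_eq_binomialRandom (n : ℕ) (Q : SimpleGraph (Fin n) → Prop) :
    probGnp n p Q = G(Fin n, p).real {G | Q G} := by
  classical
  rw [probGnp, ← Finset.sum_filter, ← Finset.coe_filter_univ, ← sum_measureReal_singleton]
  simp [binomialRandom_real_singleton]

theorem binomialRandom_forall_edge [Finite V] {F : Finset (Sym2 V)}
    (hF : ∀ e ∈ F, ¬ e.IsDiag) (A : Set Prop) :
    G(V, p) {G | ∀ e ∈ F, (e ∈ G.edgeSet) ∈ A} =
      ((toNNReal p • Measure.dirac True + toNNReal (σ p) • Measure.dirac False) A) ^ F.card := by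
  rw [SimpleGraph.binomialRandom_eq_map, Measure.map_apply (by fun_prop) .of_discrete,
    setBernoulli_apply', ← Finset.prod_const]
  convert Measure.infinitePi_pi (s := F) (t := fun _ ↦ A) _ (fun _ _ ↦ .of_discrete) using 2
  · ext f
    refine forall₂_congr fun e he ↦ ?_
    simp [hF e he]
  · simp [hF _ ‹_›]
  · infer_instance

theorem binomialRandom_real_forall_mem_edgeSet [Finite V] {F : Finset (Sym2 V)}
    (hF : ∀ e ∈ F, ¬ e.IsDiag) :
    G(V, p).real {G | ∀ e ∈ F, e ∈ G.edgeSet} = (p : ℝ) ^ F.card := by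
  have h := binomialRandom_forall_edge (p := p) hF {True}
  simp only [Set.mem_singleton_iff, eq_iff_iff, iff_true] at h
  simp [measureReal_def, h]

theorem binomialRandom_real_forall_notMem_edgeSet [Finite V] {F : Finset (Sym2 V)}
    (hF : ∀ e ∈ F, ¬ e.IsDiag) :
    G(V, p).real {G | ∀ e ∈ F, e ∉ G.edgeSet} = (1 - p : ℝ) ^ F.card := by
  have h := binomialRandom_forall_edge (p := p) hF {False}
  simp only [Set.mem_singleton_iff, eq_iff_iff, iff_false] at h
  simp [measureReal_def, h]

theorem mgf_card_filter_mem_edgeSet [Finite V] {F : Finset (Sym2 V)}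
    (hF : ∀ e ∈ F, ¬ e.IsDiag) (t : ℝ) :
    mgf (fun G : SimpleGraph V ↦ (#{e ∈ F | e ∈ G.edgeSet} : ℝ)) G(V, p) t =
      (1 + (Real.exp t - 1) * p) ^ #F := by
  have expand (G : SimpleGraph V) : Real.exp (t * #{e ∈ F | e ∈ G.edgeSet}) =
      ∑ A ∈ F.powerset, {G : SimpleGraph V | ∀ e ∈ A, e ∈ G.edgeSet}.indicator
        (fun _ ↦ (Real.exp t - 1) ^ #A) G := by
    calc Real.exp (t * #{e ∈ F | e ∈ G.edgeSet})
        = ∏ e ∈ F, (1 + if e ∈ G.edgeSet then Real.exp t - 1 else 0) := by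
          rw [mul_comm, Real.exp_nat_mul, ← Finset.prod_const, Finset.prod_filter]
          refine Finset.prod_congr rfl fun e _ ↦ ?_
          split_ifs <;> ring
      _ = _ := by
          rw [Finset.prod_one_add]
          refine Finset.sum_congr rfl fun A _ ↦ ?_
          rw [Finset.prod_ite_zero, Finset.prod_const, Set.indicator_apply]
          rfl
  simp_rw [mgf, expand]
  rw [integral_finsetSum _ fun _ _ ↦ .of_finite, add_comm,
    ← Finset.sum_pow_mul_eq_add_pow]
  refine Finset.sum_congr rfl fun A hA ↦ ?_
  rw [integral_indicator_const _ .of_discrete,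
    binomialRandom_real_forall_mem_edgeSet fun e he ↦ hF e (Finset.mem_powerset.1 hA he)]
  simp [mul_pow, mul_comm]

theorem binomialRandom_real_le_card_edges_le [Finite V] {F : Finset (Sym2 V)}
    (hF : ∀ e ∈ F, ¬ e.IsDiag) {t : ℝ} (ht : 0 ≤ t) (k : ℝ) :
    G(V, p).real {G | k ≤ #{e ∈ F | e ∈ G.edgeSet}} ≤
      Real.exp (-t * k + (Real.exp t - 1) * p * #F) := by
  refine (measure_ge_le_exp_mul_mgf k ht .of_finite).trans ?_
  rw [mgf_card_filter_mem_edgeSet hF, Real.exp_add]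
  gcongr
  rw [mul_comm _ (#F : ℝ), Real.exp_nat_mul]
  have : 0 ≤ (Real.exp t - 1) * p := mul_nonneg (by simpa using ht) p.2.1
  gcongr
  linarith [Real.add_one_le_exp ((Real.exp t - 1) * p)]

end RandomGraph

section Estimates

theorem one_sub_le_exp_neg_sub_sq {x : ℝ} (h0 : 0 ≤ x) (h1 : x < 1) :
    1 - x ≤ Real.exp (-x - x ^ 2 / 2) := by
  rw [← Real.log_le_iff_le_exp (by linarith)]
  have hs := Real.hasSum_pow_div_log_of_abs_lt_one (abs_lt.2 ⟨by linarith, h1⟩)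
  have := sum_le_hasSum (Finset.range 2) (fun i _ ↦ by positivity) hs
  norm_num [Finset.sum_range_succ] at this
  linarith

theorem descFactorial_le_exp {n s : ℕ} (hs : s ≤ n) (hn : 0 < n) :
    (n.descFactorial s : ℝ) ≤
      n ^ s * Real.exp (s / n - s ^ 2 / (2 * n) - s ^ 3 / (6 * n ^ 2)) := by
  have hn' : (0 : ℝ) < n := by exact_mod_cast hn
  induction s with
  | zero => simp
  | succ s ih =>
    have hsn : (s : ℝ) + 1 ≤ n := by exact_mod_cast hs
    have step : (1 : ℝ) - s / n ≤ Real.exp (-(s / n) - (s / n) ^ 2 / 2) :=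
      one_sub_le_exp_neg_sub_sq (by positivity) (by rw [div_lt_one hn']; linarith)
    rw [Nat.descFactorial_succ]
    calc (((n - s) * n.descFactorial s : ℕ) : ℝ)
        = n * (1 - s / n) * n.descFactorial s := by
          rw [Nat.cast_mul, Nat.cast_sub (by omega)]; field_simp
      _ ≤ n * Real.exp (-(s / n) - (s / n) ^ 2 / 2) *
          (n ^ s * Real.exp (s / n - s ^ 2 / (2 * n) - s ^ 3 / (6 * n ^ 2))) := by
          gcongr
          exact ih (by omega)
      _ = n ^ (s + 1) * Real.exp (-(s / n) - (s / n) ^ 2 / 2 +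
          (s / n - s ^ 2 / (2 * n) - s ^ 3 / (6 * n ^ 2))) := by
          rw [Real.exp_add]; ring
      _ ≤ _ := by
          push_cast
          gcongr
          have : 0 ≤ (3 * (n : ℝ) - 3 * s - 1) / (6 * n ^ 2) := by
            apply div_nonneg _ (by positivity); linarith
          refine sub_nonneg.1 (this.trans_eq ?_)
          field_simp
          ring

theorem choose_le_exp {n s : ℕ} (hs : 0 < s) (hsn : s ≤ n) :
    (n.choose s : ℝ) ≤ Real.exp (1 + s * (1 + Real.log (n / s) - s / n / 2 - (s / n) ^ 2 / 6)) := by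
  have hs' : (0 : ℝ) < s := by exact_mod_cast hs
  have hn' : (0 : ℝ) < n := by exact_mod_cast hs.trans_le hsn
  have hfact := Real.pow_div_factorial_le_exp (s : ℝ) hs'.le s
  calc (n.choose s : ℝ) = n.descFactorial s / s.factorial := by
        rw [Nat.descFactorial_eq_factorial_mul_choose]; field_simp; push_cast; ring
    _ ≤ n ^ s * Real.exp (s / n - s ^ 2 / (2 * n) - s ^ 3 / (6 * n ^ 2)) / s.factorial := by
        gcongr
        exact descFactorial_le_exp hsn (by omega)
    _ = (n / s) ^ s * Real.exp (s / n - s ^ 2 / (2 * n) - s ^ 3 / (6 * n ^ 2)) *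
        (s ^ s / s.factorial) := by
        rw [div_pow]; field_simp
    _ ≤ Real.exp (s * Real.log (n / s)) *
        Real.exp (s / n - s ^ 2 / (2 * n) - s ^ 3 / (6 * n ^ 2)) * Real.exp s := by
        rw [Real.exp_nat_mul, Real.exp_log (by positivity)]
        gcongr
    _ ≤ _ := by
        rw [← Real.exp_add, ← Real.exp_add, Real.exp_le_exp]
        have : (s : ℝ) / n ≤ 1 := by rw [div_le_one hn']; exact_mod_cast hsn
        refine sub_nonneg.1 ((sub_nonneg.2 this).trans_eq ?_)
        field_simp
        ring

theorem exp_four_fifths_le : Real.exp (4 / 5) ≤ 2.226 := by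
  refine le_of_pow_le_pow_left₀ (n := 5) (by norm_num) (by norm_num) ?_
  rw [← Real.exp_nat_mul, show ((5 : ℕ) : ℝ) * (4 / 5) = (4 : ℕ) * 1 by norm_num, Real.exp_nat_mul]
  calc Real.exp 1 ^ 4 ≤ 2.7182818286 ^ 4 := by gcongr; exact Real.exp_one_lt_d9.le
    _ ≤ 2.226 ^ 5 := by norm_num

theorem chernoff_exponent_le {x : ℝ} (hx : 0 < x) :
    -1 / 2 + 1 / 2 * Real.log x + Real.exp 1 * 1.001 / 2 - x * 2.001 / 2 - x ^ 2 / 6 ≤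
      -(1 / 200) + 1 / 100 * Real.log x := by
  -- The tangent to `log` at `exp (-4 / 5)`.
  have hlog : Real.log x ≤ 2.226 * x - 1.8 := by
    have := Real.log_le_sub_one_of_pos (mul_pos hx (Real.exp_pos (4 / 5)))
    rw [Real.log_mul hx.ne' (Real.exp_pos _).ne', Real.log_exp] at this
    nlinarith [exp_four_fifths_le]
  nlinarith [sq_nonneg (x - 0.2722), Real.exp_one_lt_d9]

end Estimates

/-! ### Degeneracy of sparse random graphs -/

section EdgesIn

open Classical Finset

variable {V : Type*}

/-- The number of edges of `G` with both ends in `S`, usually written `e(S)`. -/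
noncomputable def edgesIn (G : SimpleGraph V) (S : Finset V) : ℕ :=
  #{e ∈ {e ∈ S.sym2 | ¬ e.IsDiag} | e ∈ G.edgeSet}

theorem card_filter_sym2_not_isDiag (S : Finset V) :
    #{e ∈ S.sym2 | ¬ e.IsDiag} = (#S).choose 2 := by
  rw [sym2_eq_image, Sym2.filter_image_mk_not_isDiag]
  exact Sym2.card_image_offDiag S

theorem mul_card_le_two_mul_edgesIn {G : SimpleGraph V} {S : Finset V} {d : ℕ}
    (h : ∀ v ∈ S, d ≤ #{w ∈ S | G.Adj v w}) : d * #S ≤ 2 * edgesIn G S := by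
  let arcs : Finset (V × V) := {x ∈ S ×ˢ S | G.Adj x.1 x.2}
  have card_arcs : d * #S ≤ #arcs := by
    rw [card_filter, sum_product, mul_comm]
    simp_rw [← card_filter]
    exact card_nsmul_le_sum _ _ _ h
  refine card_arcs.trans (card_le_mul_card_image_of_maps_to (f := fun x ↦ s(x.1, x.2)) ?_ 2 ?_)
  · rintro ⟨v, w⟩ hvw
    obtain ⟨hS, hadj⟩ := mem_filter.1 hvw
    simpa [hadj, hadj.ne] using hS
  · rintro ⟨v, w⟩ -
    refine (card_le_card (t := {(v, w), (w, v)}) fun x hx ↦ ?_).trans card_le_two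
    simpa [Prod.ext_iff] using (mem_filter.1 hx).2

end EdgesIn

section SparseSubsets

open Classical MeasureTheory ProbabilityTheory unitInterval Finset
open scoped SimpleGraph

variable {V : Type*} [Fintype V] {p : I}

theorem binomialRandom_real_exists_le_edgesIn_le {t : ℝ} (ht : 0 ≤ t) (s : ℕ) (k : ℝ) :
    G(V, p).real {G | ∃ S : Finset V, #S = s ∧ k ≤ edgesIn G S} ≤
      (Fintype.card V).choose s * Real.exp (-t * k + (Real.exp t - 1) * p * (s ^ 2 / 2)) := by
  have choose_two_le : (s.choose 2 : ℝ) ≤ s ^ 2 / 2 := by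
    rw [Nat.cast_choose_two]; nlinarith [(s.cast_nonneg : (0 : ℝ) ≤ s)]
  have hp : 0 ≤ (Real.exp t - 1) * p := mul_nonneg (by simpa using ht) p.2.1
  calc G(V, p).real {G | ∃ S : Finset V, #S = s ∧ k ≤ edgesIn G S}
      ≤ G(V, p).real (⋃ S ∈ powersetCard s univ, {G | k ≤ edgesIn G S}) := by
        refine measureReal_mono (fun G ⟨S, hS, hk⟩ ↦ ?_) (measure_ne_top _ _)
        simpa using ⟨S, hS, hk⟩
    _ ≤ ∑ S ∈ powersetCard s (univ : Finset V), G(V, p).real {G | k ≤ edgesIn G S} :=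
        measureReal_biUnion_finset_le _ _
    _ ≤ ∑ S ∈ powersetCard s (univ : Finset V),
          Real.exp (-t * k + (Real.exp t - 1) * p * (s ^ 2 / 2)) := by
        refine sum_le_sum fun S hS ↦
          (binomialRandom_real_le_card_edges_le (by simp) ht k).trans ?_
        rw [card_filter_sym2_not_isDiag, (mem_powersetCard.1 hS).2]
        gcongr
    _ = _ := by rw [sum_const, card_powersetCard, card_univ, nsmul_eq_mul]

end SparseSubsets

section Degenerate

open Classical Finset

variable {V : Type*}

/-- A graph is `k`-degenerate if each of its nonempty finite induced subgraphs has a vertex of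
degree at most `k`. -/
def IsDegenerate (k : ℕ) (G : SimpleGraph V) : Prop :=
  ∀ S : Finset V, S.Nonempty → ∃ v ∈ S, #{w ∈ S | G.Adj v w} ≤ k

theorem exists_le_edgesIn_of_not_isDegenerate {k : ℕ} {G : SimpleGraph V} (h : ¬ IsDegenerate k G) :
    ∃ S : Finset V, S.Nonempty ∧ (k + 1) * #S ≤ 2 * edgesIn G S := by
  unfold IsDegenerate at h
  push Not at h
  obtain ⟨S, hS, hdeg⟩ := h
  exact ⟨S, hS, mul_card_le_two_mul_edgesIn hdeg⟩

end Degenerate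

section TwoDegenerate

open MeasureTheory ProbabilityTheory unitInterval Filter
open scoped SimpleGraph

variable {V : Type*} [Fintype V] {p : I}

-- The ratio `exp (1 + log (n / s)) = exp 1 * n / s` is close to the optimal `3 * n / s`, the
-- quotient of the target `3 / 2 * s` and the approximate mean `s ^ 2 / (2 * n)`.
theorem choose_mul_chernoff_le {n s : ℕ} (hs : 0 < s) (hsn : s ≤ n) {p : ℝ} (hp : n * p ≤ 1.001) :
    n.choose s * Real.exp (-(1 + Real.log (n / s)) * (3 / 2 * s) +
        (Real.exp (1 + Real.log (n / s)) - 1) * p * (s ^ 2 / 2)) ≤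
      Real.exp (1 + s * (-(1 / 200) + 1 / 100 * Real.log (s / n))) := by
  have hs' : (0 : ℝ) < s := by exact_mod_cast hs
  have hn' : (0 : ℝ) < n := by exact_mod_cast hs.trans_le hsn
  have hsn' : (s : ℝ) / n ≤ 1 := by rw [div_le_one hn']; exact_mod_cast hsn
  have hlog : Real.log (n / s) = -Real.log (s / n) := by rw [← Real.log_inv, inv_div]
  have mean : (Real.exp (1 + Real.log (n / s)) - 1) * p * (s ^ 2 / 2) ≤
      s * (Real.exp 1 * 1.001 / 2 - s / n * 1.001 / 2) := by
    have h1 : 0 ≤ s * (Real.exp 1 - s / n) / 2 := by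
      have := Real.add_one_le_exp 1
      exact div_nonneg (mul_nonneg hs'.le (by linarith)) (by norm_num)
    calc _ = (n * p) * (s * (Real.exp 1 - s / n) / 2) := by
          rw [Real.exp_add, Real.exp_log (by positivity)]; field_simp
      _ ≤ 1.001 * (s * (Real.exp 1 - s / n) / 2) := by gcongr
      _ = _ := by ring
  calc _ ≤ Real.exp (1 + s * (1 + Real.log (n / s) - s / n / 2 - (s / n) ^ 2 / 6)) *
        Real.exp (-(1 + Real.log (n / s)) * (3 / 2 * s) +
          s * (Real.exp 1 * 1.001 / 2 - s / n * 1.001 / 2)) := by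
        gcongr
        exact choose_le_exp hs hsn
    _ = Real.exp (1 + s * (-1 / 2 + 1 / 2 * Real.log (s / n) + Real.exp 1 * 1.001 / 2 -
          s / n * 2.001 / 2 - (s / n) ^ 2 / 6)) := by
        rw [← Real.exp_add, hlog]; ring_nf
    _ ≤ _ := by
        gcongr
        exact chernoff_exponent_le (by positivity)

theorem binomialRandom_real_not_isDegenerate_two_le (hp : (Fintype.card V : ℝ) * p ≤ 1.001) :
    G(V, p).real {G | ¬ IsDegenerate 2 G} ≤ ∑ s ∈ Finset.Icc 1 (Fintype.card V),
      Real.exp (1 + s * (-(1 / 200) + 1 / 100 * Real.log (s / Fintype.card V))) := by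
  calc G(V, p).real {G | ¬ IsDegenerate 2 G}
      ≤ G(V, p).real (⋃ s ∈ Finset.Icc 1 (Fintype.card V),
          {G | ∃ S : Finset V, S.card = s ∧ (3 / 2 * s : ℝ) ≤ edgesIn G S}) := by
        refine measureReal_mono (fun G hG ↦ ?_) (measure_ne_top _ _)
        obtain ⟨S, hS, hcard⟩ := exists_le_edgesIn_of_not_isDegenerate hG
        have hcard' : 3 * (S.card : ℝ) ≤ 2 * edgesIn G S := by exact_mod_cast hcard
        simp only [Set.mem_iUnion, Finset.mem_Icc]
        exact ⟨S.card, ⟨hS.card_pos, S.card_le_univ⟩, S, rfl, by linarith⟩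
    _ ≤ _ := measureReal_biUnion_finset_le _ _
    _ ≤ _ := by
        refine Finset.sum_le_sum fun s hs ↦ ?_
        obtain ⟨hs, hsn⟩ := Finset.mem_Icc.1 hs
        refine (binomialRandom_real_exists_le_edgesIn_le ?_ s _).trans
          (choose_mul_chernoff_le hs hsn hp)
        have : (1 : ℝ) ≤ Fintype.card V / s := by
          rw [one_le_div (by exact_mod_cast hs)]; exact_mod_cast hsn
        linarith [Real.log_nonneg this]

theorem exp_mul_log_div_le {n s : ℕ} (hs : 0 < s) (hsn : s ≤ n) :
    Real.exp (1 + s * (-(1 / 200) + 1 / 100 * Real.log (s / n))) ≤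
      Real.exp 1 * (s ^ 1 * Real.exp (-(1 / 200)) ^ s) * Real.exp (-(1 / 100) * Real.log n) := by
  have hs' : (1 : ℝ) ≤ s := by exact_mod_cast hs
  have hsn' : (s : ℝ) ≤ n := by exact_mod_cast hsn
  have hlog : Real.log (s / n) = Real.log s - Real.log n :=
    Real.log_div (by positivity) (by linarith)
  have hlogs : 0 ≤ Real.log s := Real.log_nonneg hs'
  have hlogle : Real.log s ≤ Real.log n := Real.log_le_log (by positivity) hsn'
  calc _ ≤ Real.exp (1 + (Real.log s + s * -(1 / 200)) + -(1 / 100) * Real.log n) := by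
        rw [Real.exp_le_exp, hlog]
        nlinarith
    _ = _ := by
        rw [Real.exp_add, Real.exp_add, Real.exp_add, Real.exp_log (by positivity),
          Real.exp_nat_mul, pow_one]

theorem tendsto_sum_exp_mul_log_div :
    Tendsto (fun n : ℕ ↦ ∑ s ∈ Finset.Icc 1 n,
      Real.exp (1 + s * (-(1 / 200) + 1 / 100 * Real.log (s / n)))) atTop (nhds 0) := by
  set f : ℕ → ℝ := fun s ↦ Real.exp 1 * ((s : ℝ) ^ 1 * Real.exp (-(1 / 200)) ^ s)
  have hr : ‖Real.exp (-(1 / 200))‖ < 1 := by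
    rw [Real.norm_eq_abs, Real.abs_exp, Real.exp_lt_one_iff]; norm_num
  have hf : Summable f := (summable_pow_mul_geometric_of_norm_lt_one 1 hr).mul_left _
  have hlim : Tendsto (fun n : ℕ ↦ Real.exp (-(1 / 100) * Real.log n)) atTop (nhds 0) :=
    Real.tendsto_exp_atBot.comp <|
      (Real.tendsto_log_atTop.comp tendsto_natCast_atTop_atTop).const_mul_atTop_of_neg (by norm_num)
  refine squeeze_zero (fun n ↦ Finset.sum_nonneg fun s _ ↦ (Real.exp_pos _).le) (fun n ↦ ?_)
    (mul_zero (∑' s, f s) ▸ hlim.const_mul (∑' s, f s))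
  calc _ ≤ ∑ s ∈ Finset.Icc 1 n, f s * Real.exp (-(1 / 100) * Real.log n) :=
        Finset.sum_le_sum fun s hs ↦
          exp_mul_log_div_le (Finset.mem_Icc.1 hs).1 (Finset.mem_Icc.1 hs).2
    _ ≤ _ := by
        rw [← Finset.sum_mul]
        gcongr
        exact hf.sum_le_tsum _ fun s _ ↦ by positivity

end TwoDegenerate

/-! ### Orientations of degenerate graphs -/

section OrientationsOfDegenerate

open Classical Finset

variable {V β : Type*} {G : SimpleGraph V} {k : ℕ}

theorem IsDegenerate.exists_rank_on (h : IsDegenerate k G) (S : Finset V) :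
    ∃ r : V → ℕ, Set.InjOn r S ∧ ∀ v ∈ S, #{w ∈ S | G.Adj v w ∧ r w < r v} ≤ k := by
  induction S using Finset.strongInduction with
  | H S ih =>
    obtain rfl | hS := S.eq_empty_or_nonempty
    · exact ⟨0, by simp, by simp⟩
    obtain ⟨v, hv, hdeg⟩ := h S hS
    obtain ⟨r, hinj, hr⟩ := ih (S.erase v) (erase_ssubset hv)
    set r' := Function.update r v ((S.erase v).sup r + 1)
    have r'_v : r' v = (S.erase v).sup r + 1 := Function.update_self ..
    have r'_of_ne {w : V} (hw : w ≠ v) : r' w = r w := Function.update_of_ne hw ..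
    have lt_v {w : V} (hw : w ∈ S) (hwv : w ≠ v) : r' w < r' v := by
      rw [r'_v, r'_of_ne hwv]
      exact Nat.lt_succ_of_le (le_sup (mem_erase.2 ⟨hwv, hw⟩))
    refine ⟨r', ?_, fun u hu ↦ ?_⟩
    · rw [← insert_erase hv, coe_insert, Set.injOn_insert (by simp)]
      refine ⟨hinj.congr fun w hw ↦ (r'_of_ne (ne_of_mem_erase hw)).symm, ?_⟩
      rintro ⟨w, hw, hwv⟩
      exact (lt_v (mem_of_mem_erase hw) (ne_of_mem_erase hw)).ne hwv
    · obtain rfl | huv := eq_or_ne u v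
      · exact (card_le_card fun w ↦ by simp +contextual).trans hdeg
      · refine (card_le_card fun w hw ↦ ?_).trans (hr u (mem_erase.2 ⟨huv, hu⟩))
        obtain ⟨hw, huw, hlt⟩ := mem_filter.1 hw
        have hwv : w ≠ v := by
          rintro rfl
          exact (lt_v hu huv).not_gt hlt
        rw [r'_of_ne huv, r'_of_ne hwv] at hlt
        exact mem_filter.2 ⟨mem_erase.2 ⟨hwv, hw⟩, huw, hlt⟩

theorem IsDegenerate.exists_rank [Fintype V] (h : IsDegenerate k G) :
    ∃ r : V → ℕ, Function.Injective r ∧ ∀ v, #{w | G.Adj v w ∧ r w < r v} ≤ k := by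
  simpa using h.exists_rank_on univ

theorem exists_greedy_coloring [Finite V] (G : SimpleGraph V) {r : V → ℕ}
    (hr : Function.Injective r) :
    ∃ c : G.Coloring ℕ, ∀ v, ∀ i < c v, ∃ w, G.Adj v w ∧ r w < r v ∧ c w = i := by
  let c : V → ℕ := (measure r).wf.fix fun v c ↦ sInf {i | ∀ w hw, G.Adj v w → c w hw ≠ i}
  have c_eq (v : V) : c v = sInf {i | ∀ w, r w < r v → G.Adj v w → c w ≠ i} :=
    (measure r).wf.fix_eq ..
  have ne_of_lt {v w : V} (hw : r w < r v) (hvw : G.Adj v w) : c w ≠ c v := by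
    have hne : {i | ∀ w, r w < r v → G.Adj v w → c w ≠ i}.Nonempty := by
      obtain ⟨i, hi⟩ := Set.Infinite.nonempty (Set.finite_range c).infinite_compl
      exact ⟨i, fun w _ _ hwi ↦ hi ⟨w, hwi⟩⟩
    have := Nat.sInf_mem hne
    rw [← c_eq] at this
    exact this w hw hvw
  refine ⟨SimpleGraph.Coloring.mk c fun {v w} hvw ↦ ?_, fun v i hi ↦ ?_⟩
  · obtain h | h := (hr.ne hvw.ne).lt_or_gt
    · exact ne_of_lt h hvw.symm
    · exact (ne_of_lt h hvw).symm
  · obtain ⟨w, hw, hvw, hc⟩ : ∃ w, r w < r v ∧ G.Adj v w ∧ c w = i := by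
      simpa using Nat.notMem_of_lt_sInf (hi.trans_eq (c_eq v))
    exact ⟨w, hvw, hw, hc⟩

theorem IsOrientation.reverse {o : V → V → Prop} (h : IsOrientation G o) :
    IsOrientation G fun u v ↦ o v u :=
  ⟨fun u v huv ↦ (h.1 v u huv).symm, fun u v huv ↦ h.2 v u huv.symm⟩

theorem isOrientation_adj_and_lt {L : Type*} [LinearOrder L] {f : V → L}
    (hf : ∀ u v, G.Adj u v → f u ≠ f v) : IsOrientation G fun u v ↦ G.Adj u v ∧ f v < f u := by
  refine ⟨fun u v h ↦ h.1, fun u v huv ↦ ?_⟩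
  simpa [huv, huv.symm] using (hf u v huv).symm.le_iff_lt.symm

theorem IsDegenerate.exists_isOrientation_ncard_out_le [Finite V] (h : IsDegenerate k G) :
    ∃ o, IsOrientation G o ∧ ∀ v, {w | o v w}.ncard ≤ k := by
  cases nonempty_fintype V
  obtain ⟨r, hr, hcard⟩ := h.exists_rank
  refine ⟨_, isOrientation_adj_and_lt fun u v huv ↦ hr.ne huv.ne, fun v ↦ ?_⟩
  rw [← coe_filter_univ, Set.ncard_coe_finset]
  exact hcard v

theorem IsDegenerate.exists_isOrientation_ncard_out_le_sub_one [Finite V] (h : IsDegenerate k G) :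
    ∃ o, IsOrientation G o ∧ ∀ u v, o u v → {w | o v w}.ncard ≤ k - 1 := by
  cases nonempty_fintype V
  obtain ⟨r, hr, hcard⟩ := h.exists_rank
  obtain ⟨c, hc⟩ := exists_greedy_coloring G hr
  -- The vertices of colour `0` become sources, and every other vertex has one of them below it.
  let f : V → WithTop ℕ := fun v ↦ if c v = 0 then ⊤ else r v
  have hf (u v : V) (huv : G.Adj u v) : f u ≠ f v := by
    have hcuv : c u ≠ c v := c.valid huv
    have hruv : r u ≠ r v := hr.ne huv.ne
    by_cases hu : c u = 0 <;> by_cases hv : c v = 0 <;> simp_all [f]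
  refine ⟨_, isOrientation_adj_and_lt hf, fun u v ⟨_, hvu⟩ ↦ ?_⟩
  have hv : c v ≠ 0 := fun hv ↦ by simp [f, hv] at hvu
  obtain ⟨z, hvz, hzv, hz⟩ := hc v 0 (Nat.pos_of_ne_zero hv)
  rw [← coe_filter_univ, Set.ncard_coe_finset]
  calc #{w | G.Adj v w ∧ f w < f v} ≤ #(({w | G.Adj v w ∧ r w < r v} : Finset V).erase z) := by
        refine card_le_card fun w hw ↦ ?_
        obtain ⟨hvw, hlt⟩ := (mem_filter.1 hw).2
        have hw : c w ≠ 0 := fun hw ↦ by simp [f, hw] at hlt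
        simp only [f, hw, hv, if_false] at hlt
        simp only [mem_erase, mem_filter_univ]
        exact ⟨fun hwz ↦ hw (hwz ▸ hz), hvw, by exact_mod_cast hlt⟩
    _ ≤ k - 1 := by
        rw [card_erase_of_mem (by simp [hvz, hzv])]
        exact Nat.sub_le_sub_right (hcard v) 1

theorem IsDegenerate.exists_isOrientation_path_length_le [Finite V] (h : IsDegenerate k G) :
    ∃ o, IsOrientation G o ∧ ∀ (m : ℕ) (f : Fin (m + 1) → V),
      (∀ i : Fin m, o (f i.castSucc) (f i.succ)) → m ≤ k := by
  cases nonempty_fintype V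
  obtain ⟨r, hr, hcard⟩ := h.exists_rank
  obtain ⟨c, hc⟩ := exists_greedy_coloring G hr
  have c_le (v : V) : c v ≤ k := by
    refine le_trans ?_ ((card_image_le (f := c)).trans (hcard v))
    rw [← card_range (c v)]
    refine card_le_card fun i hi ↦ ?_
    obtain ⟨w, hvw, hwv, hw⟩ := hc v i (mem_range.1 hi)
    exact mem_image.2 ⟨w, by simp [hvw, hwv], hw⟩
  refine ⟨_, isOrientation_adj_and_lt fun u v huv ↦ c.valid huv, fun m f hf ↦ ?_⟩
  have anti : StrictAnti (c ∘ f) := Fin.strictAnti_iff_succ_lt.2 fun i ↦ (hf i).2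
  have := Fintype.card_le_of_injective
    (fun i ↦ (⟨c (f i), Nat.lt_succ_of_le (c_le _)⟩ : Fin (k + 1)))
    fun i j hij ↦ anti.injective (Fin.mk.inj hij)
  simpa using this

theorem HasCopy.exists_ncard_out_le [Finite V] {o : V → V → Prop} {T : β → β → Prop}
    (h : HasCopy o T) : ∃ f : β → V, (∀ x y, T x y → o (f x) (f y)) ∧
      ∀ x, {y | T x y}.ncard ≤ {v | o (f x) v}.ncard := by
  obtain ⟨f, hf, hT⟩ := h
  exact ⟨f, hT, fun x ↦ Set.ncard_le_ncard_of_injOn f (fun y hy ↦ hT x y hy) hf.injOn⟩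

theorem IsDegenerate.ncard_out_le_of_arrows [Finite V] (h : IsDegenerate k G) {T : β → β → Prop}
    (hT : Arrows G T) (x : β) : {y | T x y}.ncard ≤ k := by
  obtain ⟨o, ho, hout⟩ := h.exists_isOrientation_ncard_out_le
  obtain ⟨f, -, hcard⟩ := (hT o ho).exists_ncard_out_le
  exact (hcard x).trans (hout _)

theorem IsDegenerate.ncard_out_le_sub_one_of_arrows [Finite V] (h : IsDegenerate k G)
    {T : β → β → Prop} (hT : Arrows G T) {x y : β} (hxy : T x y) : {z | T y z}.ncard ≤ k - 1 := by
  obtain ⟨o, ho, hout⟩ := h.exists_isOrientation_ncard_out_le_sub_one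
  obtain ⟨f, hf, hcard⟩ := (hT o ho).exists_ncard_out_le
  exact (hcard y).trans (hout _ _ (hf _ _ hxy))

theorem Arrows.reverse {T : β → β → Prop} (hT : Arrows G T) : Arrows G fun x y ↦ T y x :=
  fun _ ho ↦ (hT _ ho.reverse).imp fun _ hf ↦ ⟨hf.1, fun _ _ hxy ↦ hf.2 _ _ hxy⟩

theorem IsDegenerate.dirHeight_le_of_arrows [Finite V] [Fintype β] (h : IsDegenerate k G)
    {T : β → β → Prop} (hT : Arrows G T) : dirHeight T ≤ k := by
  obtain ⟨o, ho, hpath⟩ := h.exists_isOrientation_path_length_le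
  obtain ⟨f, -, hf⟩ := hT o ho
  refine csSup_le' ?_
  rintro m ⟨g, -, hg⟩
  exact hpath m (f ∘ g) fun i ↦ hf _ _ (hg i)

theorem IsDegenerate.maxDeg_le_of_arrows [Finite V] [Fintype β] (h : IsDegenerate k G)
    {T : β → β → Prop} (hT : Arrows G T) :
    maxDeg (SimpleGraph.fromRel T) ≤ max k (2 * (k - 1)) := by
  refine csSup_le' ?_
  rintro _ ⟨x, rfl⟩
  have hunion : ((SimpleGraph.fromRel T).neighborSet x).ncard ≤
      {y | T x y}.ncard + {y | T y x}.ncard := by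
    refine (Set.ncard_le_ncard fun y hy ↦ ?_).trans (Set.ncard_union_le _ _)
    exact ((SimpleGraph.fromRel_adj T x y).1 hy).2
  have hout := h.ncard_out_le_of_arrows hT x
  have hin := h.ncard_out_le_of_arrows hT.reverse x
  obtain hout0 | ⟨y, hxy⟩ := {y | T x y}.eq_empty_or_nonempty
  · rw [hout0, Set.ncard_empty] at hunion
    omega
  obtain hin0 | ⟨z, hzx⟩ := {y | T y x}.eq_empty_or_nonempty
  · rw [hin0, Set.ncard_empty] at hunion
    omega
  have hout' := h.ncard_out_le_sub_one_of_arrows hT hzx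
  have hin' := h.ncard_out_le_sub_one_of_arrows hT.reverse hxy
  omega

theorem IsDegenerate.treeParam_le_two_of_arrows [Finite V] [Fintype β] (h : IsDegenerate 2 G)
    {T : β → β → Prop} (hT : Arrows G T) : treeParam T ≤ 2 :=
  max_le (h.dirHeight_le_of_arrows hT) (h.maxDeg_le_of_arrows hT)

end OrientationsOfDegenerate

section LowerThreshold

open Filter MeasureTheory ProbabilityTheory unitInterval
open scoped SimpleGraph

theorem eventually_mem_unitInterval_div_natCast {b : ℝ} (hb : 0 ≤ b) :
    ∀ᶠ n : ℕ in atTop, b / n ∈ I := by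
  filter_upwards [eventually_ge_atTop (max 1 ⌈b⌉₊)] with n hn
  have hn' : (0 : ℝ) < n := by exact_mod_cast (le_max_left ..).trans hn
  exact ⟨by positivity, (div_le_one hn').2 (Nat.ceil_le.1 ((le_max_right ..).trans hn))⟩

theorem tendsto_probGnp_arrows_zero {β : Type*} [Fintype β] {T : β → β → Prop}
    (hT : 3 ≤ treeParam T) {b : ℝ} (hb : 0 ≤ b) (hb' : b ≤ 1.001) :
    Tendsto (fun n : ℕ ↦ probGnp n (b / n) fun G ↦ Arrows G T) atTop (nhds 0) := by
  refine tendsto_of_tendsto_of_tendsto_of_le_of_le' tendsto_const_nhds tendsto_sum_exp_mul_log_div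
    ?_ ?_ <;>
  filter_upwards [eventually_mem_unitInterval_div_natCast hb] with n hI
  · rw [probGnp_eq_binomialRandom (p := ⟨b / n, hI⟩)]
    positivity
  · rw [probGnp_eq_binomialRandom (p := ⟨b / n, hI⟩)]
    have hp : (Fintype.card (Fin n) : ℝ) * (b / n) ≤ 1.001 := by
      rw [Fintype.card_fin, mul_div_left_comm]
      exact (mul_le_of_le_one_right hb (div_self_le_one _)).trans hb'
    refine (measureReal_mono (fun G hG h ↦ ?_) (measure_ne_top _ _)).trans
      ((binomialRandom_real_not_isDegenerate_two_le hp).trans_eq (by rw [Fintype.card_fin]))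
    exact absurd (IsDegenerate.treeParam_le_two_of_arrows h hG) (by omega)

end LowerThreshold

/-! ### Embedding trees into locally sparse graphs -/

section Levels

open Classical Relation

variable {β : Type*} {T : β → β → Prop}

theorem exists_walk_of_transGen (hT : ∀ x y, T x y → ¬ T y x) {x y : β} (h : TransGen T x y) :
    ∃ w : (SimpleGraph.fromRel T).Walk x y, ¬ w.Nil ∧ ∀ d ∈ w.darts, T d.fst d.snd := by
  have adj {x y : β} (hxy : T x y) : (SimpleGraph.fromRel T).Adj x y :=
    (SimpleGraph.fromRel_adj T x y).2 ⟨fun h ↦ hT x y hxy (h ▸ h ▸ hxy), .inl hxy⟩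
  induction h using TransGen.head_induction_on with
  | single hxy => exact ⟨(adj hxy).toWalk, by simp, by simpa using hxy⟩
  | head hxz _ ih =>
    obtain ⟨w, -, hw⟩ := ih
    exact ⟨.cons (adj hxz) w, by simp, by simpa using ⟨hxz, hw⟩⟩

theorem not_transGen_self_of_isAcyclic (hT : ∀ x y, T x y → ¬ T y x)
    (hacyc : (SimpleGraph.fromRel T).IsAcyclic) (x : β) : ¬ TransGen T x x := by
  intro h
  obtain ⟨w, hw, hdarts⟩ := exists_walk_of_transGen hT h
  refine hw (SimpleGraph.Walk.isPath_iff_nil.1 ((hacyc.isPath_iff_isChain w).2 ?_))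
  -- A directed walk never backtracks, since `T` has no arc in both directions.
  refine (List.isChain_map _).2 (w.isChain_dartAdj_darts.imp_of_mem_imp ?_)
  intro d d' hd hd' hadj hedge
  obtain rfl | rfl := (SimpleGraph.dart_edge_eq_iff d d').1 hedge
  · exact d.adj.ne' hadj
  · exact hT _ _ (hdarts _ hd) (hdarts _ hd')

theorem exists_level [Fintype β] (hT : ∀ x, ¬ TransGen T x x) :
    ∃ l : β → ℕ, (∀ x, l x ≤ dirHeight T) ∧ ∀ x y, T x y → l x < l y := by
  have hwf : WellFounded T :=
    have : Std.Irrefl (TransGen T) := ⟨hT⟩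
    Subrelation.wf TransGen.single (Finite.wellFounded_of_trans_of_irrefl _)
  let l : β → ℕ := hwf.fix fun y l ↦ Finset.univ.sup fun x ↦ if h : T x y then l x h + 1 else 0
  have l_eq (y : β) : l y = Finset.univ.sup fun x ↦ if T x y then l x + 1 else 0 :=
    hwf.fix_eq ..
  have l_lt (x y : β) (hxy : T x y) : l x < l y := by
    rw [← Nat.succ_le_iff, l_eq y]
    exact (if_pos hxy).symm.trans_le
      (Finset.le_sup (f := fun x ↦ if T x y then l x + 1 else 0) (Finset.mem_univ x))
  have exists_path (k : ℕ) : ∀ y, l y = k → ∃ f : Fin (k + 1) → β, f (Fin.last k) = y ∧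
      ∀ i : Fin k, T (f i.castSucc) (f i.succ) := by
    induction k with
    | zero => exact fun y _ ↦ ⟨fun _ ↦ y, rfl, fun i ↦ i.elim0⟩
    | succ k ih =>
      intro y hy
      obtain ⟨x, -, hx⟩ := Finset.exists_mem_eq_sup Finset.univ ⟨y, Finset.mem_univ y⟩
        fun x ↦ if T x y then l x + 1 else 0
      rw [← l_eq, hy] at hx
      have hxy : T x y := by by_contra h; simp [h] at hx
      obtain ⟨f, hfx, hf⟩ := ih x (by simpa [hxy] using hx.symm)
      refine ⟨Fin.snoc f y, by simp, Fin.lastCases ?_ fun i ↦ ?_⟩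
      · simpa [hfx] using hxy
      · simpa only [← Fin.castSucc_succ, Fin.snoc_castSucc] using hf i
  refine ⟨l, fun x ↦ ?_, l_lt⟩
  obtain ⟨f, -, hf⟩ := exists_path _ x rfl
  have hmono : StrictMono (l ∘ f) := Fin.strictMono_iff_lt_succ.2 fun i ↦ l_lt _ _ (hf i)
  refine le_csSup ⟨Fintype.card β, ?_⟩ ⟨f, hmono.injective.of_comp, hf⟩
  rintro k ⟨g, hg, -⟩
  exact (Nat.le_succ k).trans (by simpa using Fintype.card_le_of_injective g hg)

end Levels

section TreeEmbedding

open Classical Finset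

variable {V β : Type*} {G : SimpleGraph V} {H : SimpleGraph β}

theorem card_edgeFinset_comap_le_edgesIn [Fintype β] (f : β ↪ V) :
    #(G.comap f).edgeFinset ≤ edgesIn G (univ.map f) := by
  refine card_le_card_of_injOn (Sym2.map f) ?_ (Sym2.map.injective f.injective).injOn
  intro e he
  induction e with | _ x y =>
  have hxy : G.Adj (f x) (f y) := by simpa using he
  simpa [hxy] using hxy.ne

theorem comap_eq_of_isTree_of_edgesIn_lt [Fintype β] (hH : H.IsTree) {f : β ↪ V}
    (hf : H ≤ G.comap f) (hG : edgesIn G (univ.map f) < Fintype.card β) : G.comap f = H := by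
  refine (SimpleGraph.edgeFinset_inj.1 (eq_of_subset_of_card_le (by simpa using hf) ?_)).symm
  have := card_edgeFinset_comap_le_edgesIn (G := G) f
  have := hH.card_edgeFinset
  omega

/-- `G` is locally sparse on `Z` up to size `m` if every nonempty subset of `Z` with at most `m`
vertices spans fewer edges than it has vertices. For finite `Z` this says that the subgraph induced
on `Z` has no cycle of length at most `m`. -/
def IsLocallySparseOn (m : ℕ) (G : SimpleGraph V) (Z : Set V) : Prop :=
  ∀ S : Finset V, ↑S ⊆ Z → S.Nonempty → #S ≤ m → edgesIn G S < #S

theorem exists_notMem_range_of_comap_eq [Finite β] {f : β ↪ V} (hf : G.comap f = H) {x : β}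
    {C : Finset V} (hC : ∀ w ∈ C, G.Adj (f x) w) (hcard : (H.neighborSet x).ncard < #C) :
    ∃ w ∈ C, w ∉ Set.range f := by
  by_contra! hrange
  refine hcard.not_ge ?_
  rw [← Set.ncard_coe_finset, ← Set.ncard_image_of_injective _ f.injective]
  refine Set.ncard_le_ncard fun w hw ↦ ?_
  obtain ⟨z, rfl⟩ := hrange w hw
  exact ⟨z, hf ▸ hC _ hw, rfl⟩

theorem IsLocallySparseOn.mono {m m' : ℕ} {Z : Set V} (hZ : IsLocallySparseOn m G Z) (hm : m' ≤ m) :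
    IsLocallySparseOn m' G Z :=
  fun S hS hne hcard ↦ hZ S hS hne (hcard.trans hm)

theorem IsLocallySparseOn.edgesIn_map_lt [Fintype β] [Nonempty β] {Z : Set V}
    (hZ : IsLocallySparseOn (Nat.card β) G Z) {f : β ↪ V} (hf : ∀ x, f x ∈ Z) :
    edgesIn G (univ.map f) < Nat.card β := by
  simpa using hZ (univ.map f) (by simpa [Set.range_subset_iff] using hf) (by simp) (by simp)

theorem exists_embedding_extending_leaf {x y : β} (hyx : H.Adj y x)
    (hleaf : ∀ z, H.Adj y z → z = x) {R : β → β → V → V → Prop}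
    (hR : ∀ x y v w, R x y v w → R y x w v) {f : ({y}ᶜ : Set β) ↪ V}
    (hf : ∀ u v : ({y}ᶜ : Set β), H.Adj u v → R u v (f u) (f v)) {w : V} (hw : w ∉ Set.range f)
    (hxw : R x y (f ⟨x, hyx.ne'⟩) w) :
    ∃ g : β ↪ V, g y = w ∧ (∀ z : ({y}ᶜ : Set β), g z = f z) ∧
      ∀ u v, H.Adj u v → R u v (g u) (g v) := by
  let g : β → V := fun z ↦ if hz : z = y then w else f ⟨z, hz⟩
  have hg (z : ({y}ᶜ : Set β)) : g z = f z := dif_neg z.2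
  have hgy : g y = w := dif_pos rfl
  have hinj : Function.Injective g := fun u v huv ↦ by
    by_cases hu : u = y <;> by_cases hv : v = y
    · rw [hu, hv]
    · exact absurd ⟨⟨v, hv⟩, by rw [← hg, ← huv, hu, hgy]⟩ hw
    · exact absurd ⟨⟨u, hu⟩, by rw [← hg, huv, hv, hgy]⟩ hw
    · rw [hg ⟨u, hu⟩, hg ⟨v, hv⟩] at huv
      exact congrArg Subtype.val (f.injective huv)
  have hgx : R x y (g x) (g y) := by rwa [hgy, hg ⟨x, hyx.ne'⟩]
  refine ⟨⟨g, hinj⟩, hgy, hg, fun u v huv ↦ ?_⟩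
  obtain rfl | hu := eq_or_ne u y
  · obtain rfl := hleaf v huv
    exact hR _ _ _ _ hgx
  obtain rfl | hv := eq_or_ne v y
  · obtain rfl := hleaf u huv.symm
    exact hgx
  · simpa only [Function.Embedding.coeFn_mk, hg ⟨u, hu⟩, hg ⟨v, hv⟩] using
      hf ⟨u, hu⟩ ⟨v, hv⟩ huv

theorem exists_embedding_of_isTree [Finite β] (hH : H.IsTree) {Z : Set V}
    (hZ : IsLocallySparseOn (Nat.card β) G Z) {W : β → Finset V} (hWZ : ∀ x, ↑(W x) ⊆ Z)
    (hW : ∀ x, (W x).Nonempty) {R : β → β → V → V → Prop}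
    (hRG : ∀ x y v w, R x y v w → G.Adj v w) (hR : ∀ x y v w, R x y v w → R y x w v)
    (hdeg : ∀ x y, H.Adj x y → ∀ v ∈ W x, (H.neighborSet x).ncard ≤ #{w ∈ W y | R x y v w}) :
    ∃ f : β ↪ V, (∀ x, f x ∈ W x) ∧ ∀ x y, H.Adj x y → R x y (f x) (f y) := by
  induction β using Finite.induction_subsingleton_or_nontrivial with
  | hbase β =>
    choose f hf using hW
    refine ⟨⟨f, Function.injective_of_subsingleton f⟩, hf, fun x y hxy ↦ ?_⟩
    exact absurd (Subsingleton.elim x y) hxy.ne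
  | hstep β ih =>
    cases nonempty_fintype β
    obtain ⟨y, hy⟩ := hH.exists_vert_degree_one_of_nontrivial
    obtain ⟨x, hyx, x_unique⟩ := SimpleGraph.degree_eq_one_iff_existsUnique_adj.1 hy
    set H' := H.induce {y}ᶜ
    have hH' : H'.IsTree :=
      ⟨hH.connected.induce_compl_singleton_of_degree_eq_one hy, hH.isAcyclic.induce _⟩
    have hcard : Nat.card ({y}ᶜ : Set β) < Nat.card β := Finite.card_subtype_lt (x := y) (by simp)
    have ncard_le (z : ({y}ᶜ : Set β)) : (H'.neighborSet z).ncard ≤ (H.neighborSet z \ {y}).ncard :=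
      Set.ncard_le_ncard_of_injOn (↑) (fun u hu ↦ ⟨hu, u.2⟩) Subtype.val_injective.injOn
    obtain ⟨f, hfW, hfR⟩ := ih _ hcard hH' (hZ.mono hcard.le) (W := fun z ↦ W z)
      (R := fun u v ↦ R u v) (fun z ↦ hWZ z) (fun z ↦ hW z) (fun u v ↦ hRG u v)
      (fun u v ↦ hR u v) fun u v huv w hw ↦
        ((ncard_le u).trans (Set.ncard_le_ncard Set.sdiff_subset)).trans (hdeg u v huv w hw)
    have hx : x ∈ ({y}ᶜ : Set β) := hyx.ne'
    have hcomap : G.comap f = H' := by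
      refine comap_eq_of_isTree_of_edgesIn_lt hH' (fun u v huv ↦ hRG _ _ _ _ (hfR u v huv)) ?_
      have := (hZ.mono hcard.le).edgesIn_map_lt (f := f) fun z ↦ hWZ z (hfW z)
      rwa [Nat.card_eq_fintype_card] at this
    obtain ⟨w, hw, hwf⟩ := exists_notMem_range_of_comap_eq hcomap (x := ⟨x, hx⟩)
      (C := {w ∈ W y | R x y (f ⟨x, hx⟩) w}) (fun w hw ↦ hRG _ _ _ _ (mem_filter.1 hw).2)
      ((ncard_le _).trans_lt ((Set.ncard_sdiff_singleton_lt_of_mem hyx.symm).trans_le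
        (hdeg x y hyx.symm _ (hfW _))))
    obtain ⟨hwW, hxw⟩ := mem_filter.1 hw
    obtain ⟨g, hgy, hg, hgR⟩ := exists_embedding_extending_leaf hyx x_unique hR hfR hwf hxw
    refine ⟨g, fun z ↦ ?_, hgR⟩
    obtain rfl | hz := eq_or_ne z y
    · rwa [hgy]
    · exact hg ⟨z, hz⟩ ▸ hfW ⟨z, hz⟩

end TreeEmbedding

/-! ### Dense pairs -/

section DensePairs

open Classical Finset Function

variable {V ι : Type*} {r : V → V → Prop} {s s' : ℕ} {A B A' B' : Finset V}

/-- `(A, B)` is a dense pair for the relation `r` at scale `s` if `r` relates some element of `A'`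
to some element of `B'` whenever `A' ⊆ A` and `B' ⊆ B` have at least `s` elements. -/
def IsDensePair (r : V → V → Prop) (s : ℕ) (A B : Finset V) : Prop :=
  ∀ A' ⊆ A, ∀ B' ⊆ B, s ≤ #A' → s ≤ #B' → ∃ u ∈ A', ∃ v ∈ B', r u v

theorem IsDensePair.mono (h : IsDensePair r s A B) (hs : s ≤ s') (hA : A' ⊆ A) (hB : B' ⊆ B) :
    IsDensePair r s' A' B' :=
  fun X hX Y hY hsX hsY ↦ h X (hX.trans hA) Y (hY.trans hB) (hs.trans hsX) (hs.trans hsY)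

theorem IsDensePair.swap (h : IsDensePair r s A B) : IsDensePair (fun u v ↦ r v u) s B A :=
  fun X hX Y hY hsX hsY ↦
    let ⟨v, hv, u, hu, hvu⟩ := h Y hY X hX hsY hsX
    ⟨u, hu, v, hv, hvu⟩

theorem IsDensePair.swap_of_forall_not (h : IsDensePair (fun u v ↦ r u v ∨ r v u) s A B)
    (hAB : ∀ u ∈ A, ∀ v ∈ B, ¬ r u v) : IsDensePair r s B A :=
  fun Y hY X hX hsY hsX ↦
    let ⟨u, hu, v, hv, huv⟩ := h X hX Y hY hsX hsY
    ⟨v, hv, u, hu, huv.resolve_left (hAB u (hX hu) v (hY hv))⟩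

theorem IsDensePair.card_filter_lt (h : IsDensePair r s A B) (hs : 0 < s) {a : ℕ}
    (hB : a * s ≤ #B) : #{u ∈ A | #{v ∈ B | r u v} < a} < s := by
  obtain _ | a := a
  · simpa using hs
  by_contra! hbad
  obtain ⟨X, hX, hXs⟩ := exists_subset_card_eq hbad
  set N := X.biUnion fun u ↦ {v ∈ B | r u v}
  have hN : #N ≤ s * a := hXs ▸ card_biUnion_le_card_mul _ _ _
    fun u hu ↦ Nat.le_of_lt_succ (mem_filter.1 (hX hu)).2
  have hBN : s ≤ #(B \ N) := by
    have := le_card_sdiff N B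
    rw [add_one_mul, mul_comm a] at hB
    omega
  obtain ⟨u, hu, v, hv, huv⟩ := h X (hX.trans (filter_subset _ _)) _ sdiff_subset hXs.ge hBN
  obtain ⟨hvB, hvN⟩ := mem_sdiff.1 hv
  exact hvN (mem_biUnion.2 ⟨u, hu, mem_filter.2 ⟨hvB, huv⟩⟩)

theorem exists_isDensePair_or_isDensePair {s₀ : ℕ} {W : ι → Finset V}
    (hW : Pairwise fun i j ↦ IsDensePair (fun u v ↦ r u v ∨ r v u) s₀ (W i) (W j))
    {P : Finset (ι × ι)} (hP : ∀ x ∈ P, x.1 ≠ x.2) {R : ℕ} (hR : 1 ≤ R)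
    (hcard : ∀ i, R ^ 2 ^ #P * s₀ ≤ #(W i)) :
    ∃ U : ι → Finset V, ∃ s ≥ s₀, (∀ i, U i ⊆ W i) ∧ (∀ i, R * s ≤ #(U i)) ∧
      ∀ x ∈ P, IsDensePair r s (U x.1) (U x.2) ∨ IsDensePair r s (U x.2) (U x.1) := by
  induction P using Finset.induction_on generalizing R with
  | empty => exact ⟨W, s₀, le_rfl, fun _ ↦ Subset.rfl, by simpa using hcard, by simp⟩
  | insert x P hx ih =>
    -- For the remaining pairs `R` is squared, so that `x` can be tested at the scale `R * s`.
    obtain ⟨U, s, hs, hUW, hU, hdense⟩ := ih (fun y hy ↦ hP y (mem_insert_of_mem hy))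
      (R := R ^ 2) (Nat.one_le_pow _ _ hR) (by
        simpa only [card_insert_of_notMem hx, pow_succ', pow_mul] using hcard)
    have hRs : s ≤ R * s := Nat.le_mul_of_pos_left s hR
    by_cases hxdense : IsDensePair r (R * s) (U x.1) (U x.2)
    · refine ⟨U, R * s, hs.trans hRs, hUW, fun i ↦ by linarith [hU i], ?_⟩
      refine forall_mem_insert _ _ _ |>.2 ⟨.inl hxdense, fun y hy ↦ ?_⟩
      exact (hdense y hy).imp (·.mono hRs Subset.rfl Subset.rfl) (·.mono hRs Subset.rfl Subset.rfl)
    · unfold IsDensePair at hxdense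
      push Not at hxdense
      obtain ⟨A, hA, B, hB, hAs, hBs, hAB⟩ := hxdense
      have hne := hP x (mem_insert_self _ _)
      set U' := update (update U x.1 A) x.2 B
      have hU' (i : ι) : U' i ⊆ U i ∧ R * s ≤ #(U' i) := by
        obtain rfl | h₂ := eq_or_ne i x.2
        · simpa [U'] using ⟨hB, hBs⟩
        obtain rfl | h₁ := eq_or_ne i x.1
        · simpa [U', h₂] using ⟨hA, hAs⟩
        · simpa [U', h₁, h₂] using
            (Nat.mul_le_mul_right s (Nat.le_self_pow two_ne_zero R)).trans (hU i)
      refine ⟨U', s, hs, fun i ↦ (hU' i).1.trans (hUW i), fun i ↦ (hU' i).2, ?_⟩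
      refine forall_mem_insert _ _ _ |>.2 ⟨.inr ?_, fun y hy ↦ ?_⟩
      · have hA' : U' x.1 = A := by simp [U', hne]
        have hB' : U' x.2 = B := by simp [U']
        rw [hA', hB']
        exact ((hW hne).mono hs (hA.trans (hUW _)) (hB.trans (hUW _))).swap_of_forall_not hAB
      · exact (hdense y hy).imp (·.mono le_rfl (hU' _).1 (hU' _).1)
          (·.mono le_rfl (hU' _).1 (hU' _).1)

theorem exists_pairwise_list_of_two_pow_le_card {r : ι → ι → Prop} {k : ℕ} {S : Finset ι}
    (hr : (S : Set ι).Pairwise fun i j ↦ r i j ∨ r j i) (hS : 2 ^ k ≤ #S) :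
    ∃ L : List ι, L.length = k + 1 ∧ L.Pairwise r ∧ ∀ x ∈ L, x ∈ S := by
  induction k generalizing S with
  | zero =>
    obtain ⟨x, hx⟩ := card_pos.1 (by simpa using hS)
    exact ⟨[x], by simp, by simp, by simpa using hx⟩
  | succ k ih =>
    obtain ⟨x, hx⟩ := card_pos.1 ((Nat.two_pow_pos _).trans_le hS)
    have hsplit : #{y ∈ S.erase x | r x y} + #{y ∈ S.erase x | ¬ r x y} = #S - 1 :=
      (card_filter_add_card_filter_not _).trans (card_erase_of_mem hx)
    have hmono {F : Finset ι} (hF : F ⊆ S.erase x) : (F : Set ι) ⊆ S :=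
      coe_subset.2 (hF.trans (erase_subset _ _))
    obtain hout | hin : 2 ^ k ≤ #{y ∈ S.erase x | r x y} ∨ 2 ^ k ≤ #{y ∈ S.erase x | ¬ r x y} := by
      rw [pow_succ] at hS
      omega
    · obtain ⟨L, hlen, hL, hLS⟩ := ih (hr.mono (hmono (filter_subset _ _))) hout
      refine ⟨x :: L, by simp [hlen], List.pairwise_cons.2 ⟨fun y hy ↦ ?_, hL⟩, ?_⟩
      · exact (mem_filter.1 (hLS y hy)).2
      · simpa [hx] using fun y hy ↦ hmono (filter_subset _ _) (hLS y hy)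
    · obtain ⟨L, hlen, hL, hLS⟩ := ih (hr.mono (hmono (filter_subset _ _))) hin
      refine ⟨L ++ [x], by simp [hlen], List.pairwise_append.2 ⟨hL, by simp, ?_⟩, ?_⟩
      · intro y hy z hz
        obtain rfl := List.mem_singleton.1 hz
        obtain ⟨hy, hzy⟩ := mem_filter.1 (hLS y hy)
        exact (hr hx (mem_of_mem_erase hy) (ne_of_mem_erase hy).symm).resolve_left hzy
      · have : ∀ y ∈ L, y ∈ S := fun y hy ↦ hmono (filter_subset _ _) (hLS y hy)
        simpa [or_imp, forall_and, hx] using this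

theorem lt_card_of_forall_mem_exists_card_filter_lt [Fintype ι] {N : ι → ι → V → V → Prop}
    {U X : ι → Finset V} {a : ℕ} (hs : 0 < s) (hU : ∀ i, (Fintype.card ι + a) * s ≤ #(U i))
    (hN : Pairwise fun i j ↦ IsDensePair (N i j) s (U i) (U j)) (hXU : X ≤ U)
    (hX : ∀ i, a * s ≤ #(X i)) {i : ι}
    (hlow : ∀ v ∈ U i, v ∉ X i → ∃ j ≠ i, #{w ∈ X j | N i j v w} < a) : a * s < #(X i) := by
  have hcover : U i \ X i ⊆ ({i}ᶜ : Finset ι).biUnion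
      fun j ↦ {v ∈ U i | #{w ∈ X j | N i j v w} < a} := fun v hv ↦ by
    obtain ⟨hvU, hvX⟩ := mem_sdiff.1 hv
    obtain ⟨j, hj, hlt⟩ := hlow v hvU hvX
    exact mem_biUnion.2 ⟨j, by simpa using hj, mem_filter.2 ⟨hvU, hlt⟩⟩
  have hcard : #(U i \ X i) ≤ (Fintype.card ι - 1) * s := by
    refine (card_le_card hcover).trans ((card_biUnion_le_card_mul _ _ s fun j hj ↦ ?_).trans ?_)
    · have hij : i ≠ j := by simpa [eq_comm] using hj
      exact (((hN hij).mono le_rfl Subset.rfl (hXU j)).card_filter_lt hs (hX j)).le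
    · rw [card_compl, card_singleton]
  obtain ⟨m, hm⟩ := Nat.exists_eq_add_of_lt (Fintype.card_pos_iff.2 ⟨i⟩)
  have := card_sdiff_add_card_eq_card (hXU i)
  have := hU i
  rw [hm] at this hcard
  simp only [zero_add, add_mul, one_mul, Nat.add_sub_cancel] at this hcard
  omega

theorem exists_forall_le_card_filter [Fintype ι] {N : ι → ι → V → V → Prop} {U : ι → Finset V}
    {a : ℕ} (hs : 0 < s) (hU : ∀ i, (Fintype.card ι + a) * s ≤ #(U i))
    (hN : Pairwise fun i j ↦ IsDensePair (N i j) s (U i) (U j)) :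
    ∃ X ≤ U, (∀ i, (X i).Nonempty) ∧
      Pairwise fun i j ↦ ∀ v ∈ X i, a ≤ #{w ∈ X j | N i j v w} := by
  -- Repeatedly delete vertices of low degree; density keeps the parts large.
  let P (X : ι → Finset V) : Prop := (∀ i, a * s < #(X i)) ∧
    ∀ i, ∀ v ∈ U i, v ∉ X i → ∃ j ≠ i, #{w ∈ X j | N i j v w} < a
  have hPU : P U := by
    refine ⟨fun i ↦ lt_card_of_forall_mem_exists_card_filter_lt hs hU hN le_rfl (fun j ↦ ?_) ?_,
      fun i v hv hv' ↦ absurd hv hv'⟩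
    · exact (Nat.mul_le_mul_right s (Nat.le_add_left _ _)).trans (hU j)
    · exact fun v hv hv' ↦ absurd hv hv'
  obtain ⟨X, hXU, ⟨hcard, hlow⟩, hmin⟩ := exists_minimal_le_of_wellFoundedLT P U hPU
  refine ⟨X, hXU, fun i ↦ card_pos.1 ((Nat.zero_le _).trans_lt (hcard i)), fun i j hij v hv ↦ ?_⟩
  by_contra! hlt
  set Y := update X i ((X i).erase v)
  have hYX : Y ≤ X := update_le_self_iff.2 (erase_subset _ _)
  have hYlow (t : ι) : ∀ w ∈ U t, w ∉ Y t → ∃ j ≠ t, #{u ∈ Y j | N t j w u} < a := by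
    intro w hw hwY
    obtain ⟨j, hj, hlt⟩ : ∃ j ≠ t, #{u ∈ X j | N t j w u} < a := by
      by_cases hwX : w ∈ X t
      · obtain rfl : t = i := by
          by_contra hti
          exact hwY (by simpa [Y, hti] using hwX)
        obtain rfl : w = v := by simpa [Y, hwX] using hwY
        exact ⟨j, hij.symm, hlt⟩
      · exact hlow t w hw hwX
    exact ⟨j, hj, (card_le_card (filter_subset_filter _ (hYX j))).trans_lt hlt⟩
  have hYcard (t : ι) : a * s ≤ #(Y t) := by
    refine (Nat.le_sub_one_of_lt (hcard t)).trans ?_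
    obtain rfl | hti := eq_or_ne t i
    · simp [Y, card_erase_of_mem hv]
    · simp [Y, hti]
  have hPY : P Y :=
    ⟨fun t ↦ lt_card_of_forall_mem_exists_card_filter_lt hs hU hN (hYX.trans hXU) hYcard (hYlow t),
      hYlow⟩
  simpa [Y] using hmin hPY hYX i hv

end DensePairs

/-! ### Graphs without bipartite holes -/

section Arrowing

open Classical Finset Function

variable {V β : Type*} {G : SimpleGraph V} {o : V → V → Prop} {a s : ℕ} {Z : Finset V}

/-- `G` has no bipartite hole of size `s`: any two disjoint sets of at least `s` vertices are joined
by an edge. -/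
def HasNoBipartiteHole (s : ℕ) (G : SimpleGraph V) : Prop :=
  ∀ A B : Finset V, Disjoint A B → IsDensePair G.Adj s A B

/-- A constant `Γ` for which every sufficiently sparse `Γ * s`-set in a graph without bipartite
holes of size `s` arrows all oriented trees of parameter at most `a`. It provides `2 ^ a` blocks,
each large enough for `exists_isDensePair_or_isDensePair` with `R = 2 * a + 1`. -/
def arrowConst (a : ℕ) : ℕ :=
  2 ^ a * (2 * a + 1) ^ 2 ^ #(univ : Finset (Fin (2 ^ a))).offDiag

theorem ncard_neighborSet_le_maxDeg [Fintype β] (H : SimpleGraph β) (x : β) :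
    (H.neighborSet x).ncard ≤ maxDeg H :=
  le_csSup ⟨Nat.card β, by rintro _ ⟨y, rfl⟩; exact Set.ncard_le_card _⟩ ⟨x, rfl⟩

theorem exists_pairwise_disjoint_subset_card_eq {k m : ℕ} (h : k * m ≤ #Z) :
    ∃ W : Fin k → Finset V, (Pairwise fun i j ↦ Disjoint (W i) (W j)) ∧
      (∀ i, W i ⊆ Z) ∧ ∀ i, #(W i) = m := by
  obtain ⟨e, he⟩ := Embedding.exists_of_card_le_finset (α := Fin k × Fin m) (s := Z) (by simpa)
  refine ⟨fun i ↦ univ.map ((Embedding.sectR i _).trans e), fun i j hij ↦ ?_, fun i v hv ↦ ?_,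
    by simp⟩
  · simp only [disjoint_left, mem_map, mem_univ, true_and]
    rintro _ ⟨x, rfl⟩ ⟨y, hxy⟩
    exact hij (congrArg Prod.fst (e.injective hxy)).symm
  · obtain ⟨x, -, rfl⟩ := mem_map.1 hv
    exact he ⟨_, rfl⟩

theorem HasNoBipartiteHole.exists_isDensePair_of_lt (hG : HasNoBipartiteHole s G)
    (ho : IsOrientation G o) (hZ : arrowConst a * s ≤ #Z) :
    ∃ U : Fin (a + 1) → Finset V, ∃ s' ≥ s, (∀ i, U i ⊆ Z) ∧ (∀ i, (2 * a + 1) * s' ≤ #(U i)) ∧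
      ∀ i j, i < j → IsDensePair o s' (U i) (U j) := by
  obtain ⟨W, hdisj, hWZ, hW⟩ := exists_pairwise_disjoint_subset_card_eq
    (hZ.trans' (mul_assoc _ _ _).symm.le)
  have hWdense : Pairwise fun i j ↦ IsDensePair (fun u v ↦ o u v ∨ o v u) s (W i) (W j) := by
    intro i j hij A hA B hB hAs hBs
    obtain ⟨u, hu, v, hv, huv⟩ := hG _ _ (hdisj hij) A hA B hB hAs hBs
    exact ⟨u, hu, v, hv, or_iff_not_imp_right.2 (ho.2 u v huv).2⟩
  obtain ⟨U, s', hs', hUW, hU, hUdense⟩ := exists_isDensePair_or_isDensePair hWdense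
    (P := univ.offDiag) (by simp) (Nat.le_add_left 1 (2 * a)) fun i ↦ (hW i).ge
  obtain ⟨L, hlen, hL, -⟩ := exists_pairwise_list_of_two_pow_le_card (k := a)
    (S := (univ : Finset (Fin (2 ^ a)))) (r := fun i j ↦ IsDensePair o s' (U i) (U j))
    (fun i _ j _ hij ↦ hUdense (i, j) (by simpa using hij)) (by simp)
  refine ⟨fun i ↦ U (L.get (i.cast hlen.symm)), s', hs', fun i ↦ (hUW _).trans (hWZ _),
    fun i ↦ hU _, fun i j hij ↦ List.pairwise_iff_get.1 hL _ _ ?_⟩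
  simpa using hij

theorem HasNoBipartiteHole.exists_layers (hG : HasNoBipartiteHole s G) (hs : 0 < s)
    (ho : IsOrientation G o) (hZ : arrowConst a * s ≤ #Z) :
    ∃ X : Fin (a + 1) → Finset V, (∀ i, X i ⊆ Z) ∧ (∀ i, (X i).Nonempty) ∧ ∀ i j, i < j →
      (∀ v ∈ X i, a ≤ #{w ∈ X j | o v w}) ∧ ∀ w ∈ X j, a ≤ #{v ∈ X i | o v w} := by
  obtain ⟨U, s', hs', hUZ, hU, hdense⟩ := hG.exists_isDensePair_of_lt ho hZ
  obtain ⟨X, hXU, hne, hdeg⟩ := exists_forall_le_card_filter (a := a)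
    (N := fun i j v w ↦ if i < j then o v w else o w v) (U := U) (hs.trans_le hs')
    (fun i ↦ by simpa [two_mul, add_right_comm] using hU i) fun i j hij ↦ by
      obtain hlt | hlt := hij.lt_or_gt
      · simpa only [hlt, if_true] using hdense i j hlt
      · simpa only [hlt.not_gt, if_false] using (hdense j i hlt).swap
  refine ⟨X, fun i ↦ (hXU i).trans (hUZ i), hne, fun i j hij ↦ ⟨?_, ?_⟩⟩
  · simpa only [hij, if_true] using hdeg hij.ne
  · simpa only [hij.not_gt, if_false] using hdeg hij.ne'

theorem HasNoBipartiteHole.arrows [Fintype β] {T : β → β → Prop} (hG : HasNoBipartiteHole s G)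
    (hs : 0 < s) (hZ : IsLocallySparseOn (Nat.card β) G Z) (hcard : arrowConst a * s ≤ #Z)
    (hT : ∀ x y, T x y → ¬ T y x) (htree : (SimpleGraph.fromRel T).IsTree)
    (ha : treeParam T ≤ a) : Arrows G T := by
  intro o ho
  obtain ⟨X, hXZ, hne, hdeg⟩ := hG.exists_layers hs ho hcard
  obtain ⟨l, hle, hlt⟩ := exists_level (not_transGen_self_of_isAcyclic hT htree.isAcyclic)
  let layer (x : β) : Fin (a + 1) :=
    ⟨l x, Nat.lt_succ_of_le ((hle x).trans ((le_max_left _ _).trans ha))⟩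
  have hdegree (x : β) : ((SimpleGraph.fromRel T).neighborSet x).ncard ≤ a :=
    (ncard_neighborSet_le_maxDeg _ x).trans ((le_max_right _ _).trans ha)
  obtain ⟨f, -, hf⟩ := exists_embedding_of_isTree htree hZ (W := fun x ↦ X (layer x))
    (R := fun x y v w ↦ (T x y ∧ o v w) ∨ (T y x ∧ o w v)) (fun x ↦ coe_subset.2 (hXZ _))
    (fun x ↦ hne _) (fun x y v w h ↦ h.elim (fun h ↦ ho.1 v w h.2) fun h ↦ (ho.1 w v h.2).symm)
    (fun x y v w h ↦ h.symm) fun x y hxy v hv ↦ by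
      obtain hxy | hyx := (SimpleGraph.fromRel_adj _ _ _ |>.1 hxy).2
      · simpa [hxy, hT x y hxy] using (hdegree x).trans ((hdeg _ _ (hlt x y hxy)).1 v hv)
      · simpa [hyx, hT y x hyx] using (hdegree x).trans ((hdeg _ _ (hlt y x hyx)).2 v hv)
  refine ⟨f, f.injective, fun x y hxy ↦ ?_⟩
  have hne : x ≠ y := by
    rintro rfl
    exact hT x x hxy hxy
  simpa [hxy, hT x y hxy] using hf x y ((SimpleGraph.fromRel_adj _ _ _).2 ⟨hne, .inl hxy⟩)

end Arrowing

/-! ### The upper threshold -/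

section UpperThreshold

open Classical MeasureTheory ProbabilityTheory unitInterval Finset Filter
open scoped SimpleGraph

variable {V : Type*} {p : I}

theorem binomialRandom_real_le_card_edges_le_choose_mul_pow [Finite V] {F : Finset (Sym2 V)}
    (hF : ∀ e ∈ F, ¬ e.IsDiag) (k : ℕ) :
    G(V, p).real {G | k ≤ #{e ∈ F | e ∈ G.edgeSet}} ≤ (#F).choose k * (p : ℝ) ^ k := by
  calc G(V, p).real {G | k ≤ #{e ∈ F | e ∈ G.edgeSet}}
      ≤ G(V, p).real (⋃ A ∈ powersetCard k F, {G | ∀ e ∈ A, e ∈ G.edgeSet}) := by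
        refine measureReal_mono (fun G hG ↦ ?_) (measure_ne_top _ _)
        obtain ⟨A, hA, hAk⟩ := exists_subset_card_eq hG
        simp only [Set.mem_iUnion, mem_powersetCard]
        exact ⟨A, ⟨hA.trans (filter_subset _ _), hAk⟩, fun e he ↦ (mem_filter.1 (hA he)).2⟩
    _ ≤ ∑ A ∈ powersetCard k F, G(V, p).real {G | ∀ e ∈ A, e ∈ G.edgeSet} :=
        measureReal_biUnion_finset_le _ _
    _ = ∑ _A ∈ powersetCard k F, (p : ℝ) ^ k := by
        refine sum_congr rfl fun A hA ↦ ?_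
        obtain ⟨hAF, hAk⟩ := mem_powersetCard.1 hA
        rw [binomialRandom_real_forall_mem_edgeSet fun e he ↦ hF e (hAF he), hAk]
    _ = _ := by rw [sum_const, card_powersetCard, nsmul_eq_mul]

theorem binomialRandom_real_forall_not_adj [Finite V] {A B : Finset V} (h : Disjoint A B) :
    G(V, p).real {G | ∀ u ∈ A, ∀ v ∈ B, ¬ G.Adj u v} = (1 - p : ℝ) ^ (#A * #B) := by
  have hne : ∀ u ∈ A, ∀ v ∈ B, u ≠ v := fun u hu v hv huv ↦ disjoint_left.1 h hu (huv ▸ hv)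
  have hinj : Set.InjOn (fun x : V × V ↦ s(x.1, x.2)) (A ×ˢ B : Finset (V × V)) := by
    rintro ⟨u, v⟩ huv ⟨u', v'⟩ huv' heq
    obtain ⟨hu, -⟩ := mem_product.1 (mem_coe.1 huv)
    obtain ⟨hu', hv'⟩ := mem_product.1 (mem_coe.1 huv')
    obtain ⟨rfl, rfl⟩ | ⟨h₁, -⟩ := Sym2.eq_iff.1 heq
    · rfl
    · exact absurd h₁ (hne u hu v' hv')
  rw [← card_product, ← card_image_of_injOn hinj, ← binomialRandom_real_forall_notMem_edgeSet]
  · congr 1 with G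
    simp only [Set.mem_ofPred_eq, forall_mem_image, mem_product, Prod.forall, and_imp,
      SimpleGraph.mem_edgeSet]
    exact ⟨fun H u v hu hv ↦ H u hu v hv, fun H u hu v hv ↦ H u v hu hv⟩
  · simp only [forall_mem_image, mem_product, Prod.forall, and_imp, Sym2.mk_isDiag_iff]
    exact fun u v hu hv ↦ hne u hu v hv

variable [Fintype V]

theorem binomialRandom_real_not_hasNoBipartiteHole_le (s : ℕ) :
    G(V, p).real {G | ¬ HasNoBipartiteHole s G} ≤ 4 ^ Fintype.card V * (1 - p : ℝ) ^ s ^ 2 := by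
  let P : Finset (Finset V × Finset V) := {x | Disjoint x.1 x.2 ∧ s ≤ #x.1 ∧ s ≤ #x.2}
  have hP : #P ≤ 4 ^ Fintype.card V := by
    refine (card_le_univ P).trans_eq ?_
    simp [← mul_pow]
  calc G(V, p).real {G | ¬ HasNoBipartiteHole s G}
      ≤ G(V, p).real (⋃ x ∈ P, {G | ∀ u ∈ x.1, ∀ v ∈ x.2, ¬ G.Adj u v}) := by
        refine measureReal_mono (fun G hG ↦ ?_) (measure_ne_top _ _)
        simp only [Set.mem_ofPred_eq, HasNoBipartiteHole, IsDensePair] at hG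
        push Not at hG
        obtain ⟨A, B, hAB, A', hA, B', hB, hA's, hB's, hadj⟩ := hG
        simp only [Set.mem_iUnion]
        exact ⟨(A', B'), by simpa [P] using ⟨hAB.mono hA hB, hA's, hB's⟩, hadj⟩
    _ ≤ ∑ x ∈ P, G(V, p).real {G | ∀ u ∈ x.1, ∀ v ∈ x.2, ¬ G.Adj u v} :=
        measureReal_biUnion_finset_le _ _
    _ ≤ ∑ x ∈ P, (1 - p : ℝ) ^ s ^ 2 := by
        refine sum_le_sum fun x hx ↦ ?_
        obtain ⟨hdisj, h₁, h₂⟩ := (mem_filter.1 hx).2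
        rw [binomialRandom_real_forall_not_adj hdisj, sq]
        exact pow_le_pow_of_le_one (sub_nonneg.2 p.2.2) (by linarith [p.2.1]) (Nat.mul_le_mul h₁ h₂)
    _ ≤ _ := by
        rw [sum_const, nsmul_eq_mul]
        have := pow_nonneg (sub_nonneg.2 p.2.2) (s ^ 2)
        gcongr
        exact_mod_cast hP

/-- The sets of at most `m` vertices of `G` that span at least as many edges as they have elements,
the obstructions to `IsLocallySparseOn m G`. The empty set is included. -/
noncomputable def smallDenseSets (m : ℕ) (G : SimpleGraph V) : Finset (Finset V) :=
  {S | #S ≤ m ∧ #S ≤ edgesIn G S}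

theorem exists_isLocallySparseOn_card_le (m : ℕ) (G : SimpleGraph V) :
    ∃ Z : Finset V, IsLocallySparseOn m G Z ∧
      Fintype.card V ≤ #Z + #(smallDenseSets m G) * m := by
  set D := (smallDenseSets m G).biUnion id
  have hD : #D ≤ #(smallDenseSets m G) * m :=
    card_biUnion_le_card_mul _ _ _ fun S hS ↦ (mem_filter.1 hS).2.1
  refine ⟨Dᶜ, fun S hSZ ⟨v, hv⟩ hSm ↦ ?_, by have := card_add_card_compl D; omega⟩
  by_contra! hdense
  refine mem_compl.1 (coe_subset.1 hSZ hv) (mem_biUnion.2 ⟨S, ?_, hv⟩)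
  exact mem_filter.2 ⟨mem_univ _, hSm, hdense⟩

theorem integral_card_smallDenseSets_le (m : ℕ) :
    ∫ G, (#(smallDenseSets m G) : ℝ) ∂G(V, p) ≤
      ∑ s ∈ range (m + 1), (s.choose 2).choose s * (Fintype.card V * p : ℝ) ^ s := by
  have expand (G : SimpleGraph V) : (#(smallDenseSets m G) : ℝ) = ∑ S : Finset V with #S ≤ m,
      {G : SimpleGraph V | #S ≤ edgesIn G S}.indicator 1 G := by
    simp [smallDenseSets, ← filter_filter, Set.indicator_apply]
  calc ∫ G, (#(smallDenseSets m G) : ℝ) ∂G(V, p)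
      = ∑ S : Finset V with #S ≤ m, G(V, p).real {G | #S ≤ edgesIn G S} := by
        simp_rw [expand]
        rw [integral_finsetSum _ fun _ _ ↦ .of_finite]
        simp_rw [integral_indicator_one MeasurableSet.of_discrete]
    _ ≤ ∑ S : Finset V with #S ≤ m, ((#S).choose 2).choose #S * (p : ℝ) ^ #S := by
        refine sum_le_sum fun S _ ↦ ?_
        rw [← card_filter_sym2_not_isDiag]
        exact binomialRandom_real_le_card_edges_le_choose_mul_pow (by simp) _
    _ = ∑ s ∈ range (m + 1), (Fintype.card V).choose s * ((s.choose 2).choose s * (p : ℝ) ^ s) := by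
        rw [← sum_fiberwise_of_maps_to (g := card) (t := range (m + 1)) (by simp)]
        refine sum_congr rfl fun s hs ↦ ?_
        have hsize : ({S ∈ {S | #S ≤ m} | #S = s} : Finset (Finset V)) = powersetCard s univ := by
          ext S
          simpa using fun h ↦ h.trans_le (mem_range_succ_iff.1 hs)
        rw [hsize, sum_congr rfl fun S hS ↦ by rw [(mem_powersetCard.1 hS).2], sum_const,
          card_powersetCard, nsmul_eq_mul, card_univ]
    _ ≤ _ := by
        refine sum_le_sum fun s _ ↦ ?_
        rw [mul_left_comm, mul_pow]
        have := p.2.1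
        gcongr
        exact_mod_cast Nat.choose_le_pow _ _

theorem card_mul_binomialRandom_real_forall_isLocallySparseOn_le (m : ℕ) :
    Fintype.card V * G(V, p).real
        {G | ∀ Z : Finset V, IsLocallySparseOn m G Z → 2 * #Z < Fintype.card V} ≤
      2 * m * ∑ s ∈ range (m + 1), (s.choose 2).choose s * (Fintype.card V * p : ℝ) ^ s := by
  calc _ ≤ Fintype.card V * G(V, p).real
            {G | (Fintype.card V : ℝ) ≤ 2 * m * #(smallDenseSets m G)} := by
        refine mul_le_mul_of_nonneg_left
          (measureReal_mono (fun G hG ↦ ?_) (measure_ne_top _ _)) (Nat.cast_nonneg _)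
        obtain ⟨Z, hZ, hcard⟩ := exists_isLocallySparseOn_card_le m G
        have : Fintype.card V ≤ 2 * m * #(smallDenseSets m G) := by nlinarith [hG Z hZ]
        exact_mod_cast this
    _ ≤ ∫ G, 2 * m * (#(smallDenseSets m G) : ℝ) ∂G(V, p) :=
        mul_meas_ge_le_integral_of_nonneg (.of_forall fun _ ↦ by positivity) .of_finite _
    _ ≤ _ := by
        rw [integral_const_mul]
        gcongr
        exact integral_card_smallDenseSets_le m

theorem four_pow_mul_one_sub_pow_le {n s : ℕ} (h : 2 * n ≤ s ^ 2 * (p : ℝ)) :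
    4 ^ n * (1 - p : ℝ) ^ s ^ 2 ≤ (4 * Real.exp (-2)) ^ n := by
  rw [mul_pow]
  gcongr
  calc (1 - p : ℝ) ^ s ^ 2 ≤ Real.exp (-p) ^ s ^ 2 :=
        pow_le_pow_left₀ (sub_nonneg.2 p.2.2) (Real.one_sub_le_exp_neg _) _
    _ ≤ Real.exp (-2) ^ n := by
        rw [← Real.exp_nat_mul, ← Real.exp_nat_mul]
        refine Real.exp_le_exp.2 ?_
        push_cast
        linarith

theorem four_mul_exp_neg_two_lt_one : 4 * Real.exp (-2) < 1 := by
  have hexp : 2 < Real.exp 1 := by linarith [Real.add_one_lt_exp one_ne_zero]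
  have hexp2 : Real.exp 2 = Real.exp 1 ^ 2 := by rw [← Real.exp_nat_mul]; norm_num
  rw [Real.exp_neg, ← div_eq_mul_inv, div_lt_one (Real.exp_pos _), hexp2]
  nlinarith

theorem binomialRandom_real_not_arrows_le {β : Type*} [Fintype β] {T : β → β → Prop} {a s : ℕ}
    (hT : ∀ x y, T x y → ¬ T y x) (htree : (SimpleGraph.fromRel T).IsTree) (ha : treeParam T ≤ a)
    (hs : 0 < s) (hcard : 2 * (arrowConst a * s) ≤ Fintype.card V) :
    G(V, p).real {G | ¬ Arrows G T} ≤
      G(V, p).real {G | ∀ Z : Finset V, IsLocallySparseOn (Nat.card β) G Z →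
        2 * #Z < Fintype.card V} + G(V, p).real {G | ¬ HasNoBipartiteHole s G} := by
  refine (measureReal_mono (fun G hG ↦ ?_) (measure_ne_top _ _)).trans (measureReal_union_le _ _)
  by_contra hgood
  simp only [Set.mem_union, Set.mem_ofPred_eq] at hgood
  push Not at hgood
  obtain ⟨⟨Z, hZ, hZcard⟩, hhole⟩ := hgood
  exact hG (hhole.arrows hs hZ (by omega) hT htree ha)

theorem one_sub_le_probGnp_arrows {β : Type*} [Fintype β] {T : β → β → Prop} {a n : ℕ}
    (hT : ∀ x y, T x y → ¬ T y x) (htree : (SimpleGraph.fromRel T).IsTree) (ha : treeParam T ≤ a)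
    {b : ℝ} (hb : 2 * (4 * arrowConst a : ℝ) ^ 2 ≤ b) (hn : 4 * arrowConst a ≤ n)
    (hp : b / n ∈ I) :
    1 - (2 * Nat.card β * (∑ s ∈ range (Nat.card β + 1), (s.choose 2).choose s * b ^ s) / n +
      (4 * Real.exp (-2)) ^ n) ≤ probGnp n (b / n) fun G ↦ Arrows G T := by
  set Q := 4 * arrowConst a with hQ
  have hQ0 : 0 < Q := by simp [hQ, arrowConst]
  have hn0 : (0 : ℝ) < n := by exact_mod_cast hQ0.trans_le hn
  have hnp : n * (b / n) = b := mul_div_cancel₀ b hn0.ne'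
  set s := n / Q + 1
  have hns : (n : ℝ) ≤ Q * s := by exact_mod_cast (Nat.lt_mul_div_succ n hQ0).le
  have hcard : 2 * (arrowConst a * s) ≤ Fintype.card (Fin n) := by
    have h4 : 4 * (arrowConst a * s) = Q * (n / Q) + Q := by rw [← mul_assoc, ← hQ, mul_add_one]
    have := Nat.mul_div_le n Q
    rw [Fintype.card_fin]
    omega
  have hsp : 2 * n ≤ s ^ 2 * (b / n) := by
    rw [mul_div_assoc', le_div_iff₀ hn0]
    calc 2 * (n : ℝ) * n ≤ 2 * (Q * s) * (Q * s) := by gcongr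
      _ = s ^ 2 * (2 * (4 * arrowConst a : ℝ) ^ 2) := by push_cast [hQ]; ring
      _ ≤ s ^ 2 * b := by gcongr
  rw [probGnp_eq_binomialRandom (p := ⟨b / n, hp⟩), sub_le_comm,
    ← probReal_compl_eq_one_sub .of_discrete]
  refine (binomialRandom_real_not_arrows_le hT htree ha (Nat.succ_pos _) hcard).trans
    (add_le_add ?_ ?_)
  · rw [le_div_iff₀' hn0]
    simpa [hnp] using card_mul_binomialRandom_real_forall_isLocallySparseOn_le
      (V := Fin n) (p := ⟨b / n, hp⟩) (Nat.card β)
  · refine (binomialRandom_real_not_hasNoBipartiteHole_le s).trans ?_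
    rw [Fintype.card_fin]
    exact four_pow_mul_one_sub_pow_le hsp

theorem tendsto_probGnp_arrows_one {β : Type*} [Fintype β] {T : β → β → Prop} {a : ℕ}
    (hT : ∀ x y, T x y → ¬ T y x) (htree : (SimpleGraph.fromRel T).IsTree) (ha : treeParam T ≤ a)
    {b : ℝ} (hb : 2 * (4 * arrowConst a : ℝ) ^ 2 ≤ b) :
    Tendsto (fun n : ℕ ↦ probGnp n (b / n) fun G ↦ Arrows G T) atTop (nhds 1) := by
  have hI := eventually_mem_unitInterval_div_natCast (hb.trans' (by positivity))
  refine tendsto_of_tendsto_of_tendsto_of_le_of_le' (h := fun _ ↦ 1) ?_ tendsto_const_nhds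
    (hI.mp <| (eventually_ge_atTop _).mono fun n hn hp ↦
      one_sub_le_probGnp_arrows hT htree ha hb hn hp) (hI.mono fun n hp ↦ ?_)
  · simpa using ((tendsto_const_div_atTop_nhds_zero_nat _).add
      (tendsto_pow_atTop_nhds_zero_of_lt_one (by positivity)
        four_mul_exp_neg_two_lt_one)).const_sub 1
  · rw [probGnp_eq_binomialRandom (p := ⟨b / n, hp⟩)]
    exact measureReal_le_one

end UpperThreshold

open Filter in
theorem stmt4_general : ∃ c : ℝ, 1 < c ∧ ∀ a : ℕ, ∃ C : ℝ, c ≤ C ∧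
    ∀ (b : ℝ) {β : Type*} [Fintype β] (T : β → β → Prop),
      (3 ≤ treeParam T → 0 ≤ b → b ≤ c →
        Tendsto (fun n : ℕ ↦ probGnp n (b / n) fun G ↦ Arrows G T) atTop (nhds 0)) ∧
      ((∀ x y, T x y → ¬ T y x) → (SimpleGraph.fromRel T).IsTree → treeParam T ≤ a → C ≤ b →
        Tendsto (fun n : ℕ ↦ probGnp n (b / n) fun G ↦ Arrows G T) atTop (nhds 1)) :=
  ⟨1.001, by norm_num, fun a ↦ ⟨max 1.001 (2 * (4 * arrowConst a : ℝ) ^ 2), le_max_left _ _,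
    fun _ _ _ _ ↦ ⟨fun hT hb hb' ↦ tendsto_probGnp_arrows_zero hT hb hb', fun hT htree ha hb ↦
      tendsto_probGnp_arrows_one hT htree ha ((le_max_right _ _).trans hb)⟩⟩⟩

open Filter in
/-- For every `a ≥ 3` there are constants `1 < c_a ≤ C_a` such that, with `p = b/n`:
for every oriented tree `T⃗` with `a(T⃗) = a`, if `b < c_a` then a.a.s.
`G(n,p) ↛ T⃗`, and if `b > C_a` then a.a.s. `G(n,p) → T⃗`. -/
theorem stmt4 (a : ℕ) (ha : 3 ≤ a) :
    ∃ c C : ℝ, 1 < c ∧ c ≤ C ∧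
      ∀ b : ℝ, 0 < b → ∀ (m : ℕ) (T : Fin m → Fin m → Prop),
        (∀ x y, T x y → ¬ T y x) → (SimpleGraph.fromRel T).IsTree →
        treeParam T = a →
        (b < c →
          Tendsto (fun n : ℕ => probGnp n (b / n) (fun G => Arrows G T)) atTop (nhds 0)) ∧
        (C < b →
          Tendsto (fun n : ℕ => probGnp n (b / n) (fun G => Arrows G T)) atTop (nhds 1)) := by
  obtain ⟨c, hc, h⟩ := stmt4_general
  obtain ⟨C, hC, h⟩ := h a
  exact ⟨c, C, hc, hC, fun b hb m T hT htree hpar ↦ ⟨fun hbc ↦ (h b T).1 (by omega) hb.le hbc.le,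
    fun hCb ↦ (h b T).2 hT htree hpar.le hCb.le⟩⟩
end

section
/- Let H⃗ be an oriented graph with h vertices, l arcs, and at least one arc. Let D ≥ 1 be a constant and set τ = D·n^{-1/m₂(H⃗)}. Then the co-degree function of the l-uniform hypergraph 𝒟(n,H⃗) satisfies δ(𝒟(n,H⃗), τ) ≤ 2^{C(l,2)}·h^{h−2}·D^{-1}. -/
/-- The 2-density associated to a (sub)graph with `v` vertices and `e` edges:
`(e-1)/(v-2)` if `v ≥ 3`, `1/2` for a single edge, and `0` otherwise. -/
noncomputable def d2 (v e : ℕ) : ℝ :=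
  if 3 ≤ v then (e - 1 : ℝ) / (v - 2 : ℝ) else if e = 1 then 1 / 2 else 0

/-- The maximum 2-density `m₂(H)` of a finite simple graph `H`. -/
noncomputable def m2 {α : Type*} [Fintype α] (H : SimpleGraph α) : ℝ :=
  sSup {x : ℝ | ∃ J : H.Subgraph, x = d2 J.verts.ncard J.edgeSet.ncard}

/-- The maximum 2-density of an oriented graph: that of its underlying graph. -/
noncomputable def m2Rel {β : Type*} [Fintype β] (H : β → β → Prop) : ℝ :=
  m2 (SimpleGraph.fromRel H)

/-- The vertex set of the hypergraph `𝒟(n,H⃗)`: the arcs of the complete digraph `D⃗_n`. -/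
abbrev ArcDn (n : ℕ) := {p : Fin n × Fin n // p.1 ≠ p.2}

/-- The hyperedges of `𝒟(n,H⃗)`: sets of arcs of `D⃗_n` forming a digraph isomorphic
to `H⃗`. -/
def hyperedgesD (n : ℕ) {β : Type*} (H : β → β → Prop) : Set (Finset (ArcDn n)) :=
  {B | ∃ f : β → Fin n, Function.Injective f ∧
    ∀ p : ArcDn n, p ∈ B ↔ ∃ a b, H a b ∧ p.val = (f a, f b)}

/-- The degree `d(J)` of a set `J` of vertices of `𝒟(n,H⃗)`: the number of hyperedges
containing `J`. -/
noncomputable def degD (n : ℕ) {β : Type*} (H : β → β → Prop) (J : Finset (ArcDn n)) : ℕ :=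
  {B ∈ hyperedgesD n H | J ⊆ B}.ncard

/-- The maximum `j`-degree `d^{(j)}(v)` of a vertex `v` of `𝒟(n,H⃗)`. -/
noncomputable def maxDegD (n : ℕ) {β : Type*} (H : β → β → Prop) (j : ℕ) (v : ArcDn n) : ℕ :=
  sSup {d : ℕ | ∃ J : Finset (ArcDn n), v ∈ J ∧ J.card = j ∧ d = degD n H J}

/-- The average `d_j` of the maximum `j`-degrees over all vertices of `𝒟(n,H⃗)`. -/
noncomputable def avgDegD (n : ℕ) {β : Type*} (H : β → β → Prop) (j : ℕ) : ℝ :=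
  (∑ v : ArcDn n, (maxDegD n H j v : ℝ)) / (Fintype.card (ArcDn n) : ℝ)

/-- The quantity `δ_j = d_j/(d₁·τ^{j-1})` for `𝒟(n,H⃗)`. -/
noncomputable def deltaJD (n : ℕ) {β : Type*} (H : β → β → Prop) (j : ℕ) (τ : ℝ) : ℝ :=
  avgDegD n H j / (avgDegD n H 1 * τ ^ (j - 1))

/-- The co-degree function `δ(𝒟(n,H⃗),τ) = 2^{C(l,2)-1}·Σ_{j=2}^{l} 2^{-C(j-1,2)}·δ_j`. -/
noncomputable def codegD (n : ℕ) {β : Type*} (H : β → β → Prop) (l : ℕ) (τ : ℝ) : ℝ :=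
  (2 : ℝ) ^ ((l.choose 2 : ℤ) - 1) *
    ∑ j ∈ Finset.Icc 2 l, (2 : ℝ) ^ (-((j - 1).choose 2 : ℤ)) * deltaJD n H j τ

/-!
Let `J` be a set of arcs spanning `v` vertices, and count the pairs of a labelled copy of `J` in
`D⃗_n` and a hyperedge containing it. All copies have the same degree by symmetry, and each of the
`e` hyperedges contains at most `l (h-2)(h-3)⋯(h-v+1)` labelled copies: a fixed arc of `J` goes to
one of `l` arcs, after which the other `v-2` vertices are placed injectively.
Comparing with `d₁ n(n-1) = e l`, which is the same count for a single arc, gives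
`d(J) n^{v-2} ≤ d₁ h^{v-2}`. Since `(|J|-1)/(v-2) ≤ m₂(H⃗)` when `J` lies in a hyperedge,
`τ^{|J|-1} ≥ D n^{-(v-2)}`, so that `δ_j ≤ h^{h-2} D⁻¹` for each `j ≥ 2`; the weights
`2^{-C(j-1,2)}` add up to at most `2`.
-/

open Finset

section Estimates

theorem descFactorial_sub_mul_pow_le {h n : ℕ} (hn : h ≤ n) (c k : ℕ) :
    (h - c).descFactorial k * n ^ k ≤ h ^ k * (n - c).descFactorial k := by
  induction k with
  | zero => simp
  | succ k ih =>
    have factor_le : (h - c - k) * n ≤ h * (n - c - k) := by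
      simp only [Nat.sub_sub, Nat.sub_mul, Nat.mul_sub, mul_comm h n]
      exact Nat.sub_le_sub_left (by rw [mul_comm]; exact Nat.mul_le_mul_left _ hn) _
    calc
      _ = (h - c - k) * n * ((h - c).descFactorial k * n ^ k) := by
        rw [Nat.descFactorial_succ, pow_succ]; ring
      _ ≤ h * (n - c - k) * (h ^ k * (n - c).descFactorial k) := Nat.mul_le_mul factor_le ih
      _ = _ := by rw [Nat.descFactorial_succ, pow_succ]; ring

theorem mul_inv_pow_le_mul_rpow_pow {x D m : ℝ} {i k : ℕ} (hx : 1 ≤ x) (hD : 1 ≤ D)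
    (hi : i ≠ 0) (hik : i ≤ m * k) :
    D * (x ^ k)⁻¹ ≤ (D * x ^ (-(1 / m))) ^ i := by
  have hx₀ : 0 ≤ x := zero_le_one.trans hx
  have hm : 0 < m :=
    pos_of_mul_pos_left (lt_of_lt_of_le (by positivity) hik) k.cast_nonneg
  have exponent_le : -(k : ℝ) ≤ -(1 / m) * i := by
    rw [neg_mul, neg_le_neg_iff, one_div, inv_mul_le_iff₀ hm]
    exact hik
  have inv_pow_le : (x ^ k)⁻¹ ≤ (x ^ (-(1 / m))) ^ i := by
    rw [← Real.rpow_natCast, ← Real.rpow_neg hx₀, ← Real.rpow_mul_natCast hx₀]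
    exact Real.rpow_le_rpow_of_exponent_le hx exponent_le
  rw [mul_pow]
  gcongr
  exact le_self_pow₀ hD hi

theorem sum_two_zpow_neg_choose_two_le (l : ℕ) :
    ∑ j ∈ Icc 2 l, (2 : ℝ) ^ (-((j - 1).choose 2 : ℤ)) ≤ 2 := by
  have choose_two_ge (i : ℕ) : i ≤ (i + 1).choose 2 := by
    simp [Nat.choose_succ_succ' i 1]
  calc
    _ = ∑ i ∈ range (l + 1 - 2), (2 : ℝ) ^ (-((i + 1).choose 2 : ℤ)) := by
      rw [← Ico_add_one_right_eq_Icc, sum_Ico_eq_sum_range]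
      exact sum_congr rfl fun i _ => by rw [show 2 + i - 1 = i + 1 by lia]
    _ ≤ ∑ i ∈ range (l + 1 - 2), (1 / 2 : ℝ) ^ i := by
      refine sum_le_sum fun i _ => ?_
      rw [one_div, inv_pow, ← zpow_natCast, ← zpow_neg]
      exact zpow_le_zpow_right₀ one_le_two (by simpa using choose_two_ge i)
    _ ≤ 2 := sum_geometric_two_le _

end Estimates

section InjectiveHomomorphisms

variable {β γ : Type*} [Fintype β] [Fintype γ] {F : γ → γ → Prop} {H : β → β → Prop}

theorem ncard_embedding_eqOn_le (s : Finset γ) (φ₀ : γ ↪ β) :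
    {φ : γ ↪ β | ∀ x ∈ s, φ x = φ₀ x}.ncard ≤
      (Fintype.card β - #s).descFactorial (Fintype.card γ - #s) := by
  classical
  have maps_compl (φ : {φ : γ ↪ β | ∀ x ∈ s, φ x = φ₀ x}) ⦃x : γ⦄ (hx : x ∈ sᶜ) :
      φ.1 x ∈ (s.map φ₀)ᶜ := by
    simp only [mem_compl, mem_map, not_exists, not_and] at hx ⊢
    intro y hy hyx
    rw [← φ.2 y hy] at hyx
    exact hx (φ.1.injective hyx ▸ hy)
  rw [← card_compl, ← card_map φ₀, ← card_compl, ← Fintype.card_coe, ← Fintype.card_coe,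
    ← Fintype.card_embedding_eq, ← Nat.card_coe_set_eq, ← Nat.card_eq_fintype_card]
  refine Nat.card_le_card_of_injective (fun φ => φ.1.subtypeMap (maps_compl φ)) fun φ φ' hφ => ?_
  ext x
  by_cases hx : x ∈ s
  · rw [φ.2 x hx, φ'.2 x hx]
  · exact congrArg Subtype.val (DFunLike.congr_fun hφ ⟨x, mem_compl.2 hx⟩)

open Classical in
/-- The injective homomorphisms from the digraph `F` to the digraph `H`, that is, the ways of
finding `F` as a labelled (not necessarily induced) subgraph of `H`. -/
noncomputable def injHoms (F : γ → γ → Prop) (H : β → β → Prop) : Finset (γ ↪ β) :=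
  {φ | ∀ x y, F x y → H (φ x) (φ y)}

theorem mem_injHoms {φ : γ ↪ β} : φ ∈ injHoms F H ↔ ∀ x y, F x y → H (φ x) (φ y) := by
  simp [injHoms]

theorem asymm_of_mem_injHoms [Std.Asymm H] {φ : γ ↪ β} (hφ : φ ∈ injHoms F H) : Std.Asymm F where
  asymm _ _ hxy hyx :=
    Std.Asymm.asymm _ _ (mem_injHoms.1 hφ _ _ hxy) (mem_injHoms.1 hφ _ _ hyx)

theorem card_injHoms_le [Std.Irrefl F] {c d : γ} (hcd : F c d) :
    #(injHoms F H) ≤ (Fintype.card β - 2).descFactorial (Fintype.card γ - 2) *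
      {p : β × β | H p.1 p.2}.ncard := by
  classical
  let arcImage (φ : γ ↪ β) : β × β := (φ c, φ d)
  have card_fiber_le : ∀ p ∈ (injHoms F H).image arcImage,
      #{φ ∈ injHoms F H | arcImage φ = p} ≤
        (Fintype.card β - 2).descFactorial (Fintype.card γ - 2) := by
    rw [forall_mem_image]
    intro φ₀ _
    rw [← card_pair (ne_of_irrefl hcd)]
    refine le_trans ?_ (ncard_embedding_eqOn_le {c, d} φ₀)
    rw [← Set.ncard_coe_finset]
    refine Set.ncard_le_ncard fun φ hφ => ?_
    simpa [arcImage] using (mem_filter.1 hφ).2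
  have image_subset : ↑((injHoms F H).image arcImage) ⊆ {p : β × β | H p.1 p.2} := by
    rw [coe_image, Set.image_subset_iff]
    exact fun φ hφ => mem_injHoms.1 hφ c d hcd
  refine (card_le_mul_card_image _ _ card_fiber_le).trans (Nat.mul_le_mul_left _ ?_)
  rw [← Set.ncard_coe_finset]
  exact Set.ncard_le_ncard image_subset

end InjectiveHomomorphisms

section Density

variable {β γ : Type*} [Fintype β]

theorem d2_le_m2 {G : SimpleGraph β} (J : G.Subgraph) :
    d2 J.verts.ncard J.edgeSet.ncard ≤ m2 G := by
  refine le_csSup (Set.Finite.bddAbove ?_) ⟨J, rfl⟩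
  refine (Set.finite_range fun J : G.Subgraph => d2 J.verts.ncard J.edgeSet.ncard).subset ?_
  rintro x ⟨J, rfl⟩
  exact ⟨J, rfl⟩

theorem d2_le_m2_of_copy [Fintype γ] {G : SimpleGraph γ} {G' : SimpleGraph β}
    (φ : SimpleGraph.Copy G G') : d2 (Fintype.card γ) G.edgeSet.ncard ≤ m2 G' := by
  have card_verts : φ.toSubgraph.verts.ncard = Fintype.card γ := by
    rw [SimpleGraph.Subgraph.map_verts, Set.ncard_image_of_injective _ φ.injective,
      SimpleGraph.Subgraph.verts_top, Set.ncard_univ, Nat.card_eq_fintype_card]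
  have card_edges : φ.toSubgraph.edgeSet.ncard = G.edgeSet.ncard := by
    rw [SimpleGraph.Subgraph.edgeSet_map,
      Set.ncard_image_of_injective _ (Sym2.map.injective φ.injective),
      SimpleGraph.Subgraph.edgeSet_top]
  rw [← card_verts, ← card_edges]
  exact d2_le_m2 φ.toSubgraph

theorem ncard_edgeSet_fromRel (F : γ → γ → Prop) [Std.Asymm F] :
    (SimpleGraph.fromRel F).edgeSet.ncard = {p : γ × γ | F p.1 p.2}.ncard := by
  have edgeSet_eq :
      (SimpleGraph.fromRel F).edgeSet = (fun p => s(p.1, p.2)) '' {p : γ × γ | F p.1 p.2} := by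
    ext e
    induction e with
    | h x y =>
      simp only [SimpleGraph.mem_edgeSet, SimpleGraph.fromRel_adj, Set.mem_image, Set.mem_ofPred_eq,
        Prod.exists, Sym2.eq_iff]
      constructor
      · rintro ⟨-, hxy | hyx⟩
        · exact ⟨x, y, hxy, .inl ⟨rfl, rfl⟩⟩
        · exact ⟨y, x, hyx, .inr ⟨rfl, rfl⟩⟩
      · rintro ⟨a, b, hab, ⟨rfl, rfl⟩ | ⟨rfl, rfl⟩⟩
        · exact ⟨ne_of_irrefl hab, .inl hab⟩
        · exact ⟨(ne_of_irrefl hab).symm, .inr hab⟩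
  rw [edgeSet_eq, Set.InjOn.ncard_image]
  rintro ⟨a, b⟩ hab ⟨a', b'⟩ hab' h
  obtain ⟨rfl, rfl⟩ | ⟨rfl, rfl⟩ := Sym2.eq_iff.1 h
  · rfl
  · exact absurd hab' (Std.Asymm.asymm _ _ hab)

theorem three_le_card_of_two_le_ncard [Fintype γ] (F : γ → γ → Prop) [Std.Asymm F]
    (hF : 2 ≤ {p : γ × γ | F p.1 p.2}.ncard) : 3 ≤ Fintype.card γ := by
  classical
  by_contra! hγ
  have := calc
    2 ≤ (SimpleGraph.fromRel F).edgeSet.ncard := (ncard_edgeSet_fromRel F).symm ▸ hF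
    _ = #(SimpleGraph.fromRel F).edgeFinset := by
      rw [← SimpleGraph.coe_edgeFinset, Set.ncard_coe_finset]
    _ ≤ (Fintype.card γ).choose 2 := SimpleGraph.card_edgeFinset_le_card_choose_two
    _ ≤ Nat.choose 2 2 := Nat.choose_le_choose 2 (by lia)
  simp at this

theorem ncard_sub_one_le_m2Rel_mul [Fintype γ] {F : γ → γ → Prop} {H : β → β → Prop} [Std.Asymm H]
    {φ : γ ↪ β} (hφ : φ ∈ injHoms F H) (hF : 2 ≤ {p : γ × γ | F p.1 p.2}.ncard) :
    (({p : γ × γ | F p.1 p.2}.ncard - 1 : ℕ) : ℝ) ≤ m2Rel H * (Fintype.card γ - 2 : ℕ) := by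
  have := asymm_of_mem_injHoms hφ
  have hγ := three_le_card_of_two_le_ncard F hF
  let copy : SimpleGraph.Copy (SimpleGraph.fromRel F) (SimpleGraph.fromRel H) :=
    ⟨⟨φ, fun ⟨hne, hadj⟩ =>
      ⟨φ.injective.ne hne, hadj.imp (mem_injHoms.1 hφ _ _) (mem_injHoms.1 hφ _ _)⟩⟩, φ.injective⟩
  have density_le := d2_le_m2_of_copy copy
  have hγ' : (3 : ℝ) ≤ Fintype.card γ := by exact_mod_cast hγ
  rw [ncard_edgeSet_fromRel, d2, if_pos hγ, div_le_iff₀ (by linarith)] at density_le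
  rw [Nat.cast_pred (by lia), Nat.cast_sub (by lia)]
  exact density_le

end Density

section Copies

variable {n : ℕ} {β γ : Type*} {F : γ → γ → Prop} {H : β → β → Prop}

open Classical in
/-- The copy of the digraph `H` in `D⃗_n` placed by `f`, as a set of arcs; a loop of `H` is
discarded. -/
noncomputable def copyD (H : β → β → Prop) (f : β ↪ Fin n) : Finset (ArcDn n) :=
  {p | ∃ a b, H a b ∧ p.val = (f a, f b)}

theorem mem_copyD {f : β ↪ Fin n} {p : ArcDn n} :
    p ∈ copyD H f ↔ ∃ a b, H a b ∧ p.val = (f a, f b) := by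
  simp [copyD]

theorem mem_hyperedgesD {B : Finset (ArcDn n)} :
    B ∈ hyperedgesD n H ↔ ∃ f : β ↪ Fin n, copyD H f = B := by
  constructor
  · rintro ⟨f, hf, hB⟩
    exact ⟨⟨f, hf⟩, by ext p; rw [hB, mem_copyD]; rfl⟩
  · rintro ⟨f, rfl⟩
    exact ⟨f, f.injective, fun p => mem_copyD⟩

theorem card_copyD [Std.Irrefl H] (f : β ↪ Fin n) :
    #(copyD H f) = {p : β × β | H p.1 p.2}.ncard := by
  have arcs_image : Subtype.val '' (copyD H f : Set (ArcDn n)) =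
      Prod.map f f '' {p : β × β | H p.1 p.2} := by
    ext ⟨x, y⟩
    constructor
    · rintro ⟨p, hp, hxy⟩
      obtain ⟨a, b, hab, he⟩ := mem_copyD.1 hp
      exact ⟨(a, b), hab, he.symm.trans hxy⟩
    · rintro ⟨⟨a, b⟩, hab, he⟩
      have hne : f a ≠ f b := f.injective.ne (ne_of_irrefl hab)
      exact ⟨⟨(f a, f b), hne⟩, mem_copyD.2 ⟨a, b, hab, rfl⟩, he⟩
  rw [← Set.ncard_coe_finset, ← Set.ncard_image_of_injective _ Subtype.val_injective, arcs_image,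
    Set.ncard_image_of_injective _ (f.injective.prodMap f.injective)]

theorem exists_eq_copyD (J : Finset (ArcDn n)) :
    ∃ (s : Finset (Fin n)) (F : s → s → Prop), Std.Irrefl F ∧ (∀ x, ∃ y, F x y ∨ F y x) ∧
      copyD F (.subtype _) = J := by
  classical
  let F (x y : Fin n) : Prop := ∃ p ∈ J, p.1 = (x, y)
  let s : Finset (Fin n) := {x | ∃ y, F x y ∨ F y x}
  have mem_left {x y : Fin n} (hxy : F x y) : x ∈ s := mem_filter_univ x |>.2 ⟨y, .inl hxy⟩
  have mem_right {x y : Fin n} (hxy : F x y) : y ∈ s := mem_filter_univ y |>.2 ⟨x, .inr hxy⟩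
  refine ⟨s, fun x y => F x y, ⟨fun x ⟨p, _, hp⟩ => p.2 (by rw [hp])⟩, fun ⟨x, hx⟩ => ?_, ?_⟩
  · obtain ⟨y, hxy | hyx⟩ := (mem_filter_univ x).1 hx
    · exact ⟨⟨y, mem_right hxy⟩, .inl hxy⟩
    · exact ⟨⟨y, mem_left hyx⟩, .inr hyx⟩
  · ext p
    rw [mem_copyD]
    constructor
    · rintro ⟨x, y, ⟨q, hq, hqxy⟩, hp⟩
      exact Subtype.ext (hqxy.trans hp.symm) ▸ hq
    · intro hp
      have hF : F p.1.1 p.1.2 := ⟨p, hp, rfl⟩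
      exact ⟨⟨_, mem_left hF⟩, ⟨_, mem_right hF⟩, hF, rfl⟩

theorem exists_injHom_of_copyD_subset [Fintype β] [Fintype γ] [Std.Irrefl F]
    (hF : ∀ x, ∃ y, F x y ∨ F y x) {ψ : γ ↪ Fin n} {f : β ↪ Fin n}
    (h : copyD F ψ ⊆ copyD H f) : ∃ φ ∈ injHoms F H, φ.trans f = ψ := by
  have exists_arc {x y : γ} (hxy : F x y) : ∃ a b, H a b ∧ f a = ψ x ∧ f b = ψ y := by
    have hne : ψ x ≠ ψ y := ψ.injective.ne (ne_of_irrefl hxy)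
    obtain ⟨a, b, hab, he⟩ := mem_copyD.1 (h (mem_copyD.2 ⟨x, y, hxy, rfl⟩ : ⟨_, hne⟩ ∈ _))
    obtain ⟨hx, hy⟩ := Prod.ext_iff.1 he
    exact ⟨a, b, hab, hx.symm, hy.symm⟩
  have exists_preimage (x : γ) : ∃ a, f a = ψ x := by
    obtain ⟨y, hxy | hyx⟩ := hF x
    · obtain ⟨a, -, -, ha, -⟩ := exists_arc hxy
      exact ⟨a, ha⟩
    · obtain ⟨-, b, -, -, hb⟩ := exists_arc hyx
      exact ⟨b, hb⟩
  choose g hg using exists_preimage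
  have g_injective : Function.Injective g := fun x y hxy =>
    ψ.injective (by rw [← hg x, ← hg y, hxy])
  refine ⟨⟨g, g_injective⟩, mem_injHoms.2 fun x y hxy => ?_, Function.Embedding.ext hg⟩
  obtain ⟨a, b, hab, ha, hb⟩ := exists_arc hxy
  rw [← hg, f.apply_eq_iff_eq] at ha hb
  subst ha hb
  exact hab

open Classical in
theorem card_copyD_subset_copyD_le [Fintype β] [Fintype γ] [Std.Irrefl F]
    (hF : ∀ x, ∃ y, F x y ∨ F y x) (f : β ↪ Fin n) :
    #{ψ : γ ↪ Fin n | copyD F ψ ⊆ copyD H f} ≤ #(injHoms F H) := by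
  refine card_le_card_of_surjOn (·.trans f) fun ψ hψ => ?_
  exact exists_injHom_of_copyD_subset hF (by simpa using hψ)

/-- The action of a permutation of the vertices of `D⃗_n` on its arcs, under which the hypergraph
`𝒟(n,H⃗)` is invariant. -/
def arcPerm (σ : Equiv.Perm (Fin n)) : Equiv.Perm (ArcDn n) :=
  (σ.prodCongr σ).subtypeEquiv fun _ => σ.injective.ne_iff.symm

theorem map_arcPerm_copyD (σ : Equiv.Perm (Fin n)) (f : β ↪ Fin n) :
    (copyD H f).map (arcPerm σ).toEmbedding = copyD H (f.trans σ.toEmbedding) := by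
  ext p
  obtain ⟨p, rfl⟩ := (arcPerm σ).surjective p
  have arcPerm_val : (arcPerm σ p).val = (σ p.1.1, σ p.1.2) := rfl
  simp [mem_copyD, arcPerm_val, Prod.ext_iff]

end Copies

section Degrees

variable {n : ℕ} {β γ : Type*} {F : γ → γ → Prop} {H : β → β → Prop}

theorem degD_le_degD_map_arcPerm (σ : Equiv.Perm (Fin n)) (J : Finset (ArcDn n)) :
    degD n H J ≤ degD n H (J.map (arcPerm σ).toEmbedding) := by
  refine Set.ncard_le_ncard_of_injOn (map (arcPerm σ).toEmbedding) ?_ (map_injective _).injOn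
  rintro B ⟨hB, hJB⟩
  obtain ⟨f, rfl⟩ := mem_hyperedgesD.1 hB
  exact ⟨mem_hyperedgesD.2 ⟨_, (map_arcPerm_copyD σ f).symm⟩, map_subset_map.2 hJB⟩

theorem degD_copyD_congr [Finite γ] (ψ ψ' : γ ↪ Fin n) :
    degD n H (copyD F ψ) = degD n H (copyD F ψ') := by
  suffices h : ∀ ψ ψ' : γ ↪ Fin n, degD n H (copyD F ψ) ≤ degD n H (copyD F ψ') from
    (h ψ ψ').antisymm (h ψ' ψ)
  intro ψ ψ'
  obtain ⟨σ, hσ⟩ := Equiv.Perm.exists_extending_pair ψ ψ' ψ.injective ψ'.injective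
  have hψ' : ψ' = ψ.trans σ.toEmbedding := by ext x; simp [hσ]
  rw [hψ', ← map_arcPerm_copyD]
  exact degD_le_degD_map_arcPerm σ _

open Classical in
theorem sum_degD {ι : Type*} [Fintype ι] (J : ι → Finset (ArcDn n)) :
    ∑ i, degD n H (J i) = ∑ B with B ∈ hyperedgesD n H, #{i | J i ⊆ B} := by
  have := sum_card_bipartiteAbove_eq_sum_card_bipartiteBelow (s := univ)
    (t := {B | B ∈ hyperedgesD n H}) fun i B => J i ⊆ B
  simpa [bipartiteAbove, bipartiteBelow, filter_filter, degD, ← Set.ncard_coe_finset] using this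

theorem degD_copyD_mul_descFactorial_le [Fintype β] [Fintype γ] [Std.Irrefl F]
    (hF : ∀ x, ∃ y, F x y ∨ F y x) (ψ : γ ↪ Fin n) :
    degD n H (copyD F ψ) * n.descFactorial (Fintype.card γ) ≤
      (hyperedgesD n H).ncard * #(injHoms F H) := by
  classical
  calc
    _ = ∑ ψ' : γ ↪ Fin n, degD n H (copyD F ψ') := by
      rw [sum_congr rfl fun ψ' _ => degD_copyD_congr ψ' ψ, sum_const, card_univ,
        Fintype.card_embedding_eq, Fintype.card_fin, smul_eq_mul, mul_comm]
    _ = ∑ B with B ∈ hyperedgesD n H, #{ψ' : γ ↪ Fin n | copyD F ψ' ⊆ B} := sum_degD _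
    _ ≤ #{B | B ∈ hyperedgesD n H} * #(injHoms F H) := by
      refine sum_le_card_nsmul _ _ _ fun B hB => ?_
      obtain ⟨f, rfl⟩ := mem_hyperedgesD.1 ((mem_filter_univ B).1 hB)
      exact card_copyD_subset_copyD_le hF f
    _ = _ := by simp [← Set.ncard_coe_finset]

theorem sum_degD_singleton [Std.Irrefl H] :
    ∑ v, degD n H {v} = (hyperedgesD n H).ncard * {p : β × β | H p.1 p.2}.ncard := by
  classical
  calc
    _ = ∑ B with B ∈ hyperedgesD n H, #{v | {v} ⊆ B} := sum_degD _
    _ = #{B | B ∈ hyperedgesD n H} * {p : β × β | H p.1 p.2}.ncard := by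
      refine sum_const_nat fun B hB => ?_
      obtain ⟨f, rfl⟩ := mem_hyperedgesD.1 ((mem_filter_univ B).1 hB)
      simp [card_copyD]
    _ = _ := by simp [← Set.ncard_coe_finset]

theorem maxDegD_one (v : ArcDn n) : maxDegD n H 1 v = degD n H {v} := by
  have degrees_eq : {d | ∃ J : Finset (ArcDn n), v ∈ J ∧ #J = 1 ∧ d = degD n H J} =
      {degD n H {v}} := by
    ext d
    constructor
    · rintro ⟨J, hv, hJ, rfl⟩
      obtain ⟨w, rfl⟩ := card_eq_one.1 hJ
      obtain rfl := mem_singleton.1 hv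
      rfl
    · rintro rfl
      exact ⟨{v}, mem_singleton_self v, card_singleton v, rfl⟩
  rw [maxDegD, degrees_eq, csSup_singleton]

theorem card_ArcDn (n : ℕ) : Fintype.card (ArcDn n) = n.descFactorial 2 := by
  calc
    _ = #(univ : Finset (Fin n)).offDiag := by
      rw [Fintype.card_subtype]
      congr 1
      ext p
      simp
    _ = _ := by
      rw [offDiag_card, card_univ, Fintype.card_fin, Nat.descFactorial_succ, Nat.descFactorial_one,
        Nat.sub_mul, one_mul]

theorem avgDegD_one_mul_descFactorial [Std.Irrefl H] :
    avgDegD n H 1 * n.descFactorial 2 =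
      ((hyperedgesD n H).ncard * {p : β × β | H p.1 p.2}.ncard : ℕ) := by
  rw [← sum_degD_singleton, ← card_ArcDn, avgDegD]
  simp only [maxDegD_one, Nat.cast_sum]
  refine div_mul_cancel_of_imp fun h => ?_
  have : IsEmpty (ArcDn n) := Fintype.card_eq_zero_iff.1 (by exact_mod_cast h)
  exact sum_of_isEmpty _

theorem avgDegD_nonneg (j : ℕ) : 0 ≤ avgDegD n H j := by
  unfold avgDegD
  positivity

theorem maxDegD_le {j : ℕ} {C : ℝ} (hC : 0 ≤ C)
    (h : ∀ J, #J = j → (degD n H J : ℝ) ≤ C) (v : ArcDn n) : (maxDegD n H j v : ℝ) ≤ C := by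
  refine (Nat.le_floor_iff hC).1 (csSup_le' ?_)
  rintro _ ⟨J, -, hJ, rfl⟩
  exact Nat.le_floor (h J hJ)

theorem avgDegD_le {j : ℕ} {C : ℝ} (hC : 0 ≤ C)
    (h : ∀ J, #J = j → (degD n H J : ℝ) ≤ C) : avgDegD n H j ≤ C := by
  refine div_le_of_le_mul₀ (by positivity) hC ?_
  rw [mul_comm, ← nsmul_eq_mul]
  exact sum_le_card_nsmul _ _ _ fun v _ => maxDegD_le hC h v

theorem codegD_le {l : ℕ} {τ C : ℝ} (hC : 0 ≤ C)
    (h : ∀ j ∈ Icc 2 l, deltaJD n H j τ ≤ C) : codegD n H l τ ≤ 2 ^ l.choose 2 * C := by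
  calc
    _ ≤ (2 : ℝ) ^ ((l.choose 2 : ℤ) - 1) *
        ∑ j ∈ Icc 2 l, (2 : ℝ) ^ (-((j - 1).choose 2 : ℤ)) * C := by
      unfold codegD
      gcongr with j hj
      exact h j hj
    _ ≤ (2 : ℝ) ^ ((l.choose 2 : ℤ) - 1) * (2 * C) := by
      rw [← sum_mul]
      gcongr
      exact sum_two_zpow_neg_choose_two_le l
    _ = _ := by
      rw [zpow_sub_one₀ two_ne_zero, zpow_natCast]
      ring

end Degrees

section Codegree

variable {n : ℕ} {β γ : Type*} [Fintype β] {F : γ → γ → Prop} {H : β → β → Prop}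

theorem degD_copyD_mul_descFactorial_sub_two_le [Fintype γ] [Std.Irrefl F] [Std.Irrefl H]
    (hF : ∀ x, ∃ y, F x y ∨ F y x) {c d : γ} (hcd : F c d) (ψ : γ ↪ Fin n) :
    degD n H (copyD F ψ) * (n - 2).descFactorial (Fintype.card γ - 2) ≤
      avgDegD n H 1 * (Fintype.card β - 2).descFactorial (Fintype.card γ - 2) := by
  set k := Fintype.card γ - 2
  set m := (Fintype.card β - 2).descFactorial k
  set l := {p : β × β | H p.1 p.2}.ncard
  have hγ : 2 ≤ Fintype.card γ := Fintype.one_lt_card_iff.2 ⟨c, d, ne_of_irrefl hcd⟩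
  have hn : 2 ≤ n := by simpa using hγ.trans (Fintype.card_le_of_embedding ψ)
  have pairs_pos : (0 : ℝ) < n.descFactorial 2 := by
    exact_mod_cast Nat.descFactorial_pos.2 hn
  have count_le : degD n H (copyD F ψ) * ((n - 2).descFactorial k * n.descFactorial 2) ≤
      (hyperedgesD n H).ncard * (m * l) := by
    rw [Nat.descFactorial_mul_descFactorial hγ]
    exact (degD_copyD_mul_descFactorial_le hF ψ).trans
      (Nat.mul_le_mul_left _ (card_injHoms_le hcd))
  refine le_of_mul_le_mul_right ?_ pairs_pos
  calc
    _ = ((degD n H (copyD F ψ) * ((n - 2).descFactorial k * n.descFactorial 2) : ℕ) : ℝ) := by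
      push_cast
      ring
    _ ≤ ((hyperedgesD n H).ncard * (m * l) : ℕ) := Nat.cast_le.2 count_le
    _ = ((hyperedgesD n H).ncard * l : ℕ) * (m : ℝ) := by
      push_cast
      ring
    _ = _ := by
      rw [← avgDegD_one_mul_descFactorial]
      ring

theorem degD_copyD_mul_pow_le [Fintype γ] [Std.Irrefl F] [Std.Irrefl H]
    (hβ : Fintype.card β ≤ n) (hF : ∀ x, ∃ y, F x y ∨ F y x) {c d : γ} (hcd : F c d)
    (ψ : γ ↪ Fin n) :
    degD n H (copyD F ψ) * (n : ℝ) ^ (Fintype.card γ - 2) ≤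
      avgDegD n H 1 * (Fintype.card β : ℝ) ^ (Fintype.card γ - 2) := by
  set k := Fintype.card γ - 2
  have hγn : Fintype.card γ ≤ n := by simpa using Fintype.card_le_of_embedding ψ
  have descFactorial_pos : (0 : ℝ) < (n - 2).descFactorial k := by
    exact_mod_cast Nat.descFactorial_pos.2 (Nat.sub_le_sub_right hγn 2)
  have ratio_le : ((Fintype.card β - 2).descFactorial k : ℝ) * (n : ℝ) ^ k ≤
      (Fintype.card β : ℝ) ^ k * (n - 2).descFactorial k := by
    exact_mod_cast descFactorial_sub_mul_pow_le hβ 2 k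
  refine le_of_mul_le_mul_right ?_ descFactorial_pos
  calc
    _ = degD n H (copyD F ψ) * (n - 2).descFactorial k * (n : ℝ) ^ k := by ring
    _ ≤ avgDegD n H 1 * (Fintype.card β - 2).descFactorial k * (n : ℝ) ^ k :=
      mul_le_mul_of_nonneg_right (degD_copyD_mul_descFactorial_sub_two_le hF hcd ψ) (by positivity)
    _ ≤ avgDegD n H 1 * ((Fintype.card β : ℝ) ^ k * (n - 2).descFactorial k) := by
      rw [mul_assoc]
      exact mul_le_mul_of_nonneg_left ratio_le (avgDegD_nonneg 1)
    _ = _ := by ring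

theorem degD_le [Std.Asymm H] {D : ℝ} (hD : 1 ≤ D) {J : Finset (ArcDn n)} (hJ : 2 ≤ #J) :
    (degD n H J : ℝ) ≤ (Fintype.card β : ℝ) ^ (Fintype.card β - 2) * D⁻¹ *
      (avgDegD n H 1 * (D * (n : ℝ) ^ (-(1 / m2Rel H))) ^ (#J - 1)) := by
  have avg_nonneg := avgDegD_nonneg (n := n) (H := H) 1
  obtain hdeg | hdeg := eq_or_ne (degD n H J) 0
  · rw [hdeg, Nat.cast_zero]
    positivity
  obtain ⟨s, F, _, hF, rfl⟩ := exists_eq_copyD J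
  obtain ⟨B, hB, hFB⟩ := Set.nonempty_of_ncard_ne_zero hdeg
  obtain ⟨f, rfl⟩ := mem_hyperedgesD.1 hB
  obtain ⟨φ, hφ, -⟩ := exists_injHom_of_copyD_subset hF hFB
  rw [card_copyD] at hJ ⊢
  obtain ⟨⟨c, d⟩, hcd⟩ := Set.nonempty_of_ncard_ne_zero (by lia : {p : s × s | F p.1 p.2}.ncard ≠ 0)
  have hβ : Fintype.card β ≤ n := by simpa using Fintype.card_le_of_embedding f
  have hsβ : Fintype.card s ≤ Fintype.card β := Fintype.card_le_of_embedding φ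
  have hn : 1 ≤ n := Fin.pos (f (φ c))
  set i := {p : s × s | F p.1 p.2}.ncard - 1
  set k := Fintype.card s - 2
  set h := Fintype.card β
  have hh : 1 ≤ h := Fintype.card_pos_iff.2 ⟨φ c⟩
  have tau_bound : D * ((n : ℝ) ^ k)⁻¹ ≤ (D * (n : ℝ) ^ (-(1 / m2Rel H))) ^ i :=
    mul_inv_pow_le_mul_rpow_pow (by exact_mod_cast hn) hD (by lia)
      (ncard_sub_one_le_m2Rel_mul hφ hJ)
  have pow_le : (h : ℝ) ^ k ≤ (h : ℝ) ^ (h - 2) :=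
    pow_le_pow_right₀ (by exact_mod_cast hh) (Nat.sub_le_sub_right hsβ 2)
  calc
    _ ≤ avgDegD n H 1 * (h : ℝ) ^ k * ((n : ℝ) ^ k)⁻¹ := by
      rw [← div_eq_mul_inv, le_div_iff₀ (by positivity)]
      exact degD_copyD_mul_pow_le hβ hF hcd _
    _ = (h : ℝ) ^ k * D⁻¹ * (avgDegD n H 1 * (D * ((n : ℝ) ^ k)⁻¹)) := by field_simp
    _ ≤ _ := by gcongr

theorem deltaJD_le [Std.Asymm H] {D : ℝ} (hD : 1 ≤ D) {j : ℕ} (hj : 2 ≤ j) :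
    deltaJD n H j (D * (n : ℝ) ^ (-(1 / m2Rel H))) ≤
      (Fintype.card β : ℝ) ^ (Fintype.card β - 2) * D⁻¹ := by
  have avg_nonneg := avgDegD_nonneg (n := n) (H := H) 1
  refine div_le_of_le_mul₀ (by positivity) (by positivity) ?_
  refine avgDegD_le (by positivity) ?_
  rintro J rfl
  exact degD_le hD hj

end Codegree

/-- For an oriented graph `H⃗` with `h` vertices and `l ≥ 1` arcs, `D ≥ 1` and
`τ = D·n^{-1/m₂(H⃗)}`, the co-degree function satisfies
`δ(𝒟(n,H⃗),τ) ≤ 2^{C(l,2)}·h^{h-2}·D⁻¹`. -/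
theorem stmt6 {β : Type*} [Fintype β] (H : β → β → Prop)
    (hor : ∀ a b, H a b → ¬ H b a)
    (h l : ℕ) (hh : h = Fintype.card β)
    (hl : l = {p : β × β | H p.1 p.2}.ncard) (hl1 : 1 ≤ l)
    (D : ℝ) (hD : 1 ≤ D) (n : ℕ) :
    codegD n H l (D * (n : ℝ) ^ (-(1 / m2Rel H))) ≤
      (2 : ℝ) ^ (l.choose 2) * (h : ℝ) ^ (h - 2) * D⁻¹ := by
  have : Std.Asymm H := ⟨hor⟩
  subst hh
  rw [mul_assoc]
  exact codegD_le (by positivity) fun j hj => deltaJD_le hD (mem_Icc.1 hj).1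
end
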